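/- arXiv:2002.07925 — 3 statements merged into one kernel-verified Lean document; each statement's English description precedes it below -/
import Mathlib

section
/- Let G be a planar triangulation on n vertices with no separating triangle, and let H be the planar triangulation obtained from G by adding, for each facial triangle t of G, a new vertex v_t adjacent to the three vertices of t. Then ν(H) ≤ 2n − 4. -/
open SimpleGraph

variable {V : Type*}

/-- A triangle transversal of `G`: a set of edges of `G` meeting every triangle of `G`
(so that its removal leaves a triangle-free graph). -/
def IsTriangleTransversal (G : SimpleGraph V) (X : Finset (Sym2 V)) : Prop :=
  ↑X ⊆ G.edgeSet ∧
    ∀ t : Finset V, G.IsNClique 3 t → ∃ e ∈ X, ∀ v ∈ e, v ∈ t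

/-- A triangle packing of `G`: a set of pairwise edge-disjoint triangles of `G`. -/
def IsTrianglePacking (G : SimpleGraph V) (Y : Finset (Finset V)) : Prop :=
  (∀ t ∈ Y, G.IsNClique 3 t) ∧
    ∀ s ∈ Y, ∀ t ∈ Y, s ≠ t →
      ∀ e ∈ G.edgeSet, ¬ ((∀ v ∈ e, v ∈ s) ∧ (∀ v ∈ e, v ∈ t))

/-- `tau G` is the minimum size of a triangle transversal of `G`. -/
noncomputable def tau (G : SimpleGraph V) : ℕ :=
  sInf {n | ∃ X : Finset (Sym2 V), IsTriangleTransversal G X ∧ X.card = n}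

/-- `nu G` is the maximum size of a triangle packing of `G`. -/
noncomputable def nu (G : SimpleGraph V) : ℕ :=
  sSup {n | ∃ Y : Finset (Finset V), IsTrianglePacking G Y ∧ Y.card = n}

/-- A drawing of the graph `G` in the plane (identified with `ℂ`): vertices are mapped to
distinct points, each edge is realized by a simple continuous arc joining the images of its
endpoints, arcs of distinct edges meet only in common endpoints, and no arc passes through
the image of any other vertex. -/
structure PlaneEmbedding (G : SimpleGraph V) where
  vtx : V → ℂ
  arc : V → V → Set ℂ
  vtx_inj : Function.Injective vtx
  arc_symm : ∀ u v : V, arc u v = arc v u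
  arc_curve : ∀ ⦃u v : V⦄, G.Adj u v → ∃ γ : ℝ → ℂ,
    ContinuousOn γ (Set.Icc 0 1) ∧ Set.InjOn γ (Set.Icc 0 1) ∧
    γ 0 = vtx u ∧ γ 1 = vtx v ∧ arc u v = γ '' Set.Icc 0 1
  arc_inter : ∀ ⦃u v x y : V⦄, G.Adj u v → G.Adj x y → s(u, v) ≠ s(x, y) →
    arc u v ∩ arc x y ⊆ ({vtx u, vtx v} : Set ℂ) ∩ ({vtx x, vtx y} : Set ℂ)
  arc_vtx : ∀ ⦃u v : V⦄, G.Adj u v → ∀ w : V, vtx w ∈ arc u v → w = u ∨ w = v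

/-- The set of points of the plane used by a plane embedding. -/
def PlaneEmbedding.drawing {G : SimpleGraph V} (E : PlaneEmbedding G) : Set ℂ :=
  Set.range E.vtx ∪ ⋃ (u : V) (v : V) (_ : G.Adj u v), E.arc u v

/-- A graph is planar if it admits a plane embedding. -/
def PlanarGraph (G : SimpleGraph V) : Prop := Nonempty (PlaneEmbedding G)

/-- A maximal planar graph (planar triangulation): a planar graph such that adding any
edge between nonadjacent vertices destroys planarity. -/
def MaximalPlanar (G : SimpleGraph V) : Prop :=
  PlanarGraph G ∧ ∀ u v : V, u ≠ v → ¬ G.Adj u v →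
    ¬ PlanarGraph (G ⊔ SimpleGraph.fromEdgeSet {s(u, v)})

/-- `G` has no separating triangle: removing the vertex set of any triangle leaves a
(pre)connected graph.  (In a planar triangulation, the separating triangles are exactly
the non-facial ones.) -/
def NoSeparatingTriangle (G : SimpleGraph V) : Prop :=
  ∀ t : Finset V, G.IsNClique 3 t → (G.induce ((↑t : Set V)ᶜ)).Preconnected

/-- The graph obtained from `G` by adding, for each (facial) triangle `t` of `G`,
a new vertex adjacent exactly to the three vertices of `t`. -/
def stackTriangles (G : SimpleGraph V) :
    SimpleGraph (V ⊕ {t : Finset V // G.IsNClique 3 t}) :=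
  SimpleGraph.fromRel fun a b =>
    (∃ u v : V, a = Sum.inl u ∧ b = Sum.inl v ∧ G.Adj u v) ∨
    (∃ (u : V) (t : {t : Finset V // G.IsNClique 3 t}),
      (a = Sum.inl u ∧ b = Sum.inr t ∨ a = Sum.inr t ∧ b = Sum.inl u) ∧ u ∈ t.1)


/-- `w` is the variation along `[0, 1]` of a continuous logarithm of `f`. -/
def IsLogVariation (f : ℝ → ℂ) (w : ℂ) : Prop :=
  ∃ L : C(ℝ, ℂ), (∀ s, Complex.exp (L s) = f s) ∧ L 1 - L 0 = w

theorem exists_continuous_log {A : Type*} [TopologicalSpace A] [SimplyConnectedSpace A]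
    [LocallyPathConnectedSpace A] {f : A → ℂ} (hf : Continuous f) (h0 : ∀ a, f a ≠ 0) :
    ∃ L : C(A, ℂ), ∀ a, Complex.exp (L a) = f a := by
  obtain ⟨a₀⟩ : Nonempty A := inferInstance
  obtain ⟨L, ⟨-, hL⟩, -⟩ := Complex.isCoveringMapOn_exp.existsUnique_continuousMap_lifts
    ⟨f, hf⟩ (Complex.exp_log (h0 a₀)) h0
  exact ⟨L, fun a => congrFun hL a⟩

theorem exists_isLogVariation {f : ℝ → ℂ} (hf : Continuous f) (h0 : ∀ s, f s ≠ 0) :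
    ∃ w, IsLogVariation f w := by
  obtain ⟨L, hL⟩ := exists_continuous_log hf h0
  exact ⟨_, L, hL, rfl⟩

theorem IsLogVariation.unique {f : ℝ → ℂ} {w w' : ℂ} (h : IsLogVariation f w)
    (h' : IsLogVariation f w') : w = w' := by
  obtain ⟨L, hL, rfl⟩ := h
  obtain ⟨M, hM, rfl⟩ := h'
  have hf : Continuous f := by
    rw [show f = fun s => Complex.exp (L s) from funext fun s => (hL s).symm]
    fun_prop
  have h0 : ∀ s, f s ∈ ({0}ᶜ : Set ℂ) := fun s => by
    simp [← hL s, Complex.exp_ne_zero]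
  obtain ⟨F, -, hF⟩ := Complex.isCoveringMapOn_exp.existsUnique_continuousMap_lifts
    ⟨f, hf⟩ (hL 0) h0
  have h1 := hF L ⟨rfl, funext hL⟩
  have h2 := hF (M + ContinuousMap.const ℝ (L 0 - M 0)) ⟨by simp, funext fun s => by
    have h3 : Complex.exp (L 0 - M 0) = 1 := by
      rw [Complex.exp_sub, hL, hM, div_self (h0 0)]
    simp [Complex.exp_add, h3, hM]⟩
  have h4 := DFunLike.congr_fun (h1.trans h2.symm) 1
  simp only [ContinuousMap.add_apply, ContinuousMap.const_apply] at h4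
  rw [h4]
  ring

theorem IsLogVariation.eq_log_sub_log {f : ℝ → ℂ} {w : ℂ} (h : IsLogVariation f w) :
    ∃ n : ℤ, w = Complex.log (f 1) - Complex.log (f 0) + 2 * n * (Real.pi * Complex.I) := by
  obtain ⟨L, hL, rfl⟩ := h
  have key (s : ℝ) : ∃ n : ℤ, L s = Complex.log (f s) + n * (2 * Real.pi * Complex.I) := by
    rw [← Complex.exp_eq_exp_iff_exists_int, hL, Complex.exp_log]
    rw [← hL]
    exact Complex.exp_ne_zero _
  obtain ⟨m, hm⟩ := key 1
  obtain ⟨n, hn⟩ := key 0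
  refine ⟨m - n, ?_⟩
  rw [hm, hn]
  push_cast
  ring

/-- For curves `α`, `β` with disjoint images, the logarithm of `α s - β t` is single-valued on the
unit square, which relates the log-variations along the four sides. -/
theorem IsLogVariation.square {α β : ℝ → ℂ} (hα : Continuous α) (hβ : Continuous β)
    (hd : ∀ s t, α s ≠ β t) {x y z w : ℂ}
    (hx : IsLogVariation (fun s => α s - β 0) x) (hy : IsLogVariation (fun s => α s - β 1) y)
    (hz : IsLogVariation (fun t => β t - α 0) z) (hw : IsLogVariation (fun t => β t - α 1) w) :
    y - x = w - z := by
  obtain ⟨F, hF⟩ := exists_continuous_log (A := ℝ × ℝ) (f := fun q => α q.1 - β q.2)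
    (by fun_prop) (fun q => sub_ne_zero.mpr (hd _ _))
  have row (t : ℝ) : IsLogVariation (fun s => α s - β t) (F (1, t) - F (0, t)) :=
    ⟨⟨fun s => F (s, t), by fun_prop⟩, fun s => hF (s, t), rfl⟩
  have col (s : ℝ) : IsLogVariation (fun t => β t - α s) (F (s, 1) - F (s, 0)) :=
    ⟨⟨fun t => F (s, t) + Real.pi * Complex.I, by fun_prop⟩, fun t => by
      simp [Complex.exp_add, hF (s, t)], by simp⟩
  rw [hx.unique (row 0), hy.unique (row 1), hz.unique (col 0), hw.unique (col 1)]
  ring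

theorem exists_odd_log_sub_log_neg {z : ℂ} (hz : z ≠ 0) :
    ∃ k : ℤ, Complex.log z - Complex.log (-z) = (2 * k + 1) * (Real.pi * Complex.I) := by
  have h : Complex.exp (Complex.log z) = Complex.exp (Complex.log (-z) + Real.pi * Complex.I) := by
    rw [Complex.exp_add, Complex.exp_log hz, Complex.exp_log (neg_ne_zero.mpr hz)]
    simp
  obtain ⟨n, hn⟩ := Complex.exp_eq_exp_iff_exists_int.mp h
  exact ⟨n, by rw [hn]; ring⟩

/-- The parity count behind the non-planarity of `K₅`. -/
theorem k5_parity (k : Fin 5 → Fin 5 → ℤ) (N : Fin 5 → Fin 5 → Fin 5 → ℤ) (h : Fin 5 → Fin 5 → ℤ)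
    (hk : ∀ i j, i < j → h i j = 2 * k i j + 1 ∧ h j i = -(2 * k i j + 1))
    (hN : ∀ a b c d, a < b → c < d → a ≠ c → a ≠ d → b ≠ c → b ≠ d →
      h d b - h d a - h c b + h c a + 2 * (N a b d - N a b c - N c d b + N c d a) = 0) : False := by
  have four (a b c d : Fin 5) (hab : a < b) (hbc : b < c) (hcd : c < d) :
      (2 * ((N a b c + N a b d + N c d a + N c d b) +
        (N a c b + N a c d + N b d a + N b d c) + (N a d b + N a d c + N b c a + N b c d)) +
        4 * (k a b + k a c + k a d + k b c + k b d + k c d)) % 4 = 2 := by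
    have hac := hab.trans hbc
    have hbd := hbc.trans hcd
    have had := hac.trans hcd
    have h1 := hN a b c d hab hcd hac.ne had.ne hbc.ne hbd.ne
    have h2 := hN a c b d hac hbd hab.ne had.ne hbc.ne' hcd.ne
    have h3 := hN a d b c had hbc hab.ne hac.ne hbd.ne' hcd.ne'
    have := hk a b hab
    have := hk a c hac
    have := hk a d had
    have := hk b c hbc
    have := hk b d hbd
    have := hk c d hcd
    omega
  have h₀ := four 1 2 3 4 (by decide) (by decide) (by decide)
  have h₁ := four 0 2 3 4 (by decide) (by decide) (by decide)
  have h₂ := four 0 1 3 4 (by decide) (by decide) (by decide)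
  have h₃ := four 0 1 2 4 (by decide) (by decide) (by decide)
  have h₄ := four 0 1 2 3 (by decide) (by decide) (by decide)
  omega

/-- `K₅` cannot be mapped to the plane so that disjoint edges have disjoint images. -/
theorem k5_not_almost_embeddable (p : Fin 5 → ℂ) (hp : Function.Injective p)
    (γ : Fin 5 → Fin 5 → ℝ → ℂ)
    (hγ : ∀ i j, i < j → Continuous (γ i j) ∧ γ i j 0 = p i ∧ γ i j 1 = p j)
    (hd : ∀ a b c d, a < b → c < d → a ≠ c → a ≠ d → b ≠ c → b ≠ d →
      ∀ s t, γ a b s ≠ γ c d t)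
    (hv : ∀ a b c, a < b → c ≠ a → c ≠ b → ∀ s, γ a b s ≠ p c) : False := by
  have hlog (i j : Fin 5) : ∃ k : ℤ, i ≠ j →
      Complex.log (p j - p i) - Complex.log (p i - p j) = (2 * k + 1) * (Real.pi * Complex.I) := by
    by_cases hij : i = j
    · exact ⟨0, fun h => absurd hij h⟩
    · obtain ⟨k, hk⟩ := exists_odd_log_sub_log_neg (sub_ne_zero.mpr (hp.ne (Ne.symm hij)))
      exact ⟨k, fun _ => by simpa using hk⟩
  choose k hk using hlog
  have hvar (a b c : Fin 5) : ∃ n : ℤ, a < b → c ≠ a → c ≠ b → IsLogVariation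
      (fun s => γ a b s - p c) (Complex.log (p b - p c) - Complex.log (p a - p c) +
        2 * n * (Real.pi * Complex.I)) := by
    by_cases h : a < b ∧ c ≠ a ∧ c ≠ b
    · obtain ⟨hab, hca, hcb⟩ := h
      obtain ⟨hc, h0, h1⟩ := hγ a b hab
      obtain ⟨w, hw⟩ := exists_isLogVariation (f := fun s => γ a b s - p c) (by fun_prop)
        (fun s => sub_ne_zero.mpr (hv a b c hab hca hcb s))
      obtain ⟨n, rfl⟩ := hw.eq_log_sub_log
      exact ⟨n, fun _ _ _ => by simpa [h0, h1] using hw⟩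
    · exact ⟨0, fun h₁ h₂ h₃ => absurd ⟨h₁, h₂, h₃⟩ h⟩
  choose N hN using hvar
  refine k5_parity k N (fun i j => if i < j then 2 * k i j + 1 else -(2 * k j i + 1))
    (fun i j hij => by simp [hij, hij.le]) fun a b c d hab hcd hac had hbc hbd => ?_
  have hh (i j : Fin 5) (hij : i ≠ j) : Complex.log (p j - p i) - Complex.log (p i - p j) =
      ((if i < j then 2 * k i j + 1 else -(2 * k j i + 1) : ℤ) : ℂ) * (Real.pi * Complex.I) := by
    split_ifs with h
    · rw [hk i j hij]
      push_cast
      ring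
    · have := hk j i hij.symm
      push_cast
      linear_combination -this
  obtain ⟨hα, hα0, hα1⟩ := hγ a b hab
  obtain ⟨hβ, hβ0, hβ1⟩ := hγ c d hcd
  have key := IsLogVariation.square hα hβ (hd a b c d hab hcd hac had hbc hbd)
    (hβ0 ▸ hN a b c hab hac.symm hbc.symm) (hβ1 ▸ hN a b d hab had.symm hbd.symm)
    (hα0 ▸ hN c d a hcd hac had) (hα1 ▸ hN c d b hcd hbc hbd)
  rw [hα0, hα1, hβ0, hβ1] at key
  have hpi : (Real.pi * Complex.I : ℂ) ≠ 0 := by simp [Real.pi_ne_zero]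
  apply Int.cast_injective (α := ℂ)
  apply mul_right_cancel₀ hpi
  have h1 := hh d b hbd.symm
  have h2 := hh d a had.symm
  have h3 := hh c b hbc.symm
  have h4 := hh c a hac.symm
  simp only [Int.cast_add, Int.cast_sub, Int.cast_mul, Int.cast_zero, Int.cast_ofNat]
  linear_combination key - h1 + h2 + h3 - h4

/-- A weak form of `K₅`-subdivision: five distinct branch vertices, any two of which are joined by
a walk, such that the walks belonging to disjoint pairs live in disjoint vertex sets. -/
def HasWeakK5 (G : SimpleGraph V) : Prop :=
  ∃ (x : Fin 5 → V) (S : Fin 5 → Fin 5 → Set V), Function.Injective x ∧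
    (∀ i j, i < j → ∃ w : G.Walk (x i) (x j), ∀ v ∈ w.support, v ∈ S i j) ∧
    ∀ a b c d, a < b → c < d → a ≠ c → a ≠ d → b ≠ c → b ≠ d → Disjoint (S a b) (S c d)

/-- The part of a drawing spanned by a set of vertices. -/
def PlaneEmbedding.region {G : SimpleGraph V} (E : PlaneEmbedding G) (S : Set V) : Set ℂ :=
  {z | (∃ v ∈ S, z = E.vtx v) ∨ ∃ u ∈ S, ∃ v ∈ S, G.Adj u v ∧ z ∈ E.arc u v}

theorem PlaneEmbedding.region_mono {G : SimpleGraph V} (E : PlaneEmbedding G) {S T : Set V}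
    (h : S ⊆ T) : E.region S ⊆ E.region T := by
  rintro z (⟨v, hv, hz⟩ | ⟨u, hu, v, hv, hz⟩)
  · exact Or.inl ⟨v, h hv, hz⟩
  · exact Or.inr ⟨u, h hu, v, h hv, hz⟩

theorem PlaneEmbedding.disjoint_region {G : SimpleGraph V} (E : PlaneEmbedding G) {S T : Set V}
    (h : Disjoint S T) : Disjoint (E.region S) (E.region T) := by
  have hne : ∀ a ∈ S, ∀ b ∈ T, a ≠ b := fun a ha b hb hab =>
    Set.disjoint_left.mp h ha (hab ▸ hb)
  rw [Set.disjoint_left]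
  rintro z (⟨v, hv, rfl⟩ | ⟨u, hu, v, hv, huv, hz⟩) (⟨x, hx, hzx⟩ | ⟨x, hx, y, hy, hxy, hzx⟩)
  · exact hne v hv x hx (E.vtx_inj hzx)
  · rcases E.arc_vtx hxy v hzx with rfl | rfl
    · exact hne v hv v hx rfl
    · exact hne v hv v hy rfl
  · rcases E.arc_vtx huv x (hzx ▸ hz) with rfl | rfl
    · exact hne x hu x hx rfl
    · exact hne x hv x hx rfl
  · have huvxy : s(u, v) ≠ s(x, y) := by
      intro he
      rcases Sym2.eq_iff.mp he with ⟨h1, -⟩ | ⟨h1, -⟩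
      · exact hne u hu x hx h1
      · exact hne u hu y hy h1
    obtain ⟨h1 | h1, h2 | h2⟩ := E.arc_inter huv hxy huvxy ⟨hz, hzx⟩
    · exact hne u hu x hx (E.vtx_inj (h1.symm.trans h2))
    · exact hne u hu y hy (E.vtx_inj (h1.symm.trans h2))
    · exact hne v hv x hx (E.vtx_inj (h1.symm.trans h2))
    · exact hne v hv y hy (E.vtx_inj (h1.symm.trans h2))

theorem PlaneEmbedding.exists_path {G : SimpleGraph V} (E : PlaneEmbedding G) {u v : V}
    (w : G.Walk u v) :
    ∃ γ : Path (E.vtx u) (E.vtx v), Set.range γ ⊆ E.region {z | z ∈ w.support} := by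
  induction w with
  | nil => exact ⟨Path.refl _, by rintro _ ⟨t, rfl⟩; exact Or.inl ⟨_, by simp, rfl⟩⟩
  | @cons a b c h p ih =>
    obtain ⟨γ, hγ⟩ := ih
    obtain ⟨δ, hδ, -, h0, h1, harc⟩ := E.arc_curve h
    let ε : Path (E.vtx a) (E.vtx b) :=
      ⟨⟨fun t => δ t, hδ.comp_continuous continuous_subtype_val fun t => t.2⟩,
        by simpa using h0, by simpa using h1⟩
    refine ⟨ε.trans γ, ?_⟩
    rw [Path.trans_range]
    refine Set.union_subset ?_ (hγ.trans (E.region_mono fun z hz => by simp_all))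
    rintro _ ⟨t, rfl⟩
    exact Or.inr ⟨a, by simp, b, by simp, h, harc ▸ ⟨t, t.2, rfl⟩⟩

theorem PlanarGraph.not_hasWeakK5 {G : SimpleGraph V} (hG : PlanarGraph G) : ¬ HasWeakK5 G := by
  obtain ⟨E⟩ := hG
  rintro ⟨x, S, hx, hw, hS⟩
  have hpath (i j : Fin 5) : ∃ γ : ℝ → ℂ, i < j → Continuous γ ∧ γ 0 = E.vtx (x i) ∧
      γ 1 = E.vtx (x j) ∧ ∀ s, γ s ∈ E.region (S i j) := by
    by_cases hij : i < j
    · obtain ⟨w, hwS⟩ := hw i j hij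
      obtain ⟨γ, hγ⟩ := E.exists_path w
      exact ⟨γ.extend, fun _ => ⟨γ.continuous_extend, γ.extend_zero, γ.extend_one, fun s =>
        E.region_mono hwS (hγ (γ.extend_range ▸ Set.mem_range_self s))⟩⟩
    · exact ⟨0, fun h => absurd h hij⟩
  choose γ hγ using hpath
  have hdisj : ∀ a b c d, a < b → c < d → a ≠ c → a ≠ d → b ≠ c → b ≠ d →
      ∀ s t, γ a b s ≠ γ c d t := fun a b c d hab hcd h1 h2 h3 h4 s t he =>
    Set.disjoint_left.mp (E.disjoint_region (hS a b c d hab hcd h1 h2 h3 h4))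
      ((hγ a b hab).2.2.2 s) (he ▸ (hγ c d hcd).2.2.2 t)
  refine k5_not_almost_embeddable (fun i => E.vtx (x i)) (E.vtx_inj.comp hx) γ
    (fun i j hij => ⟨(hγ i j hij).1, (hγ i j hij).2.1, (hγ i j hij).2.2.1⟩) hdisj ?_
  intro a b c hab hca hcb s
  obtain ⟨d, hda, hdb, hdc⟩ : ∃ d : Fin 5, d ≠ a ∧ d ≠ b ∧ d ≠ c := by
    clear * -
    decide +revert
  rcases lt_or_gt_of_ne hdc with h | h
  · rw [← (hγ d c h).2.2.1]
    exact hdisj a b d c hab h hda.symm hca.symm hdb.symm hcb.symm s 1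
  · rw [← (hγ c d h).2.1]
    exact hdisj a b c d hab h hca.symm hda.symm hcb.symm hdb.symm s 0

theorem HasWeakK5.map {W : Type*} {G : SimpleGraph V} {H : SimpleGraph W} (φ : G →g H)
    (hφ : Function.Injective φ) (h : HasWeakK5 G) : HasWeakK5 H := by
  obtain ⟨x, S, hx, hw, hS⟩ := h
  refine ⟨φ ∘ x, fun i j => φ '' S i j, hφ.comp hx, fun i j hij => ?_,
    fun a b c d h1 h2 h3 h4 h5 h6 =>
      Set.disjoint_image_of_injective hφ (hS a b c d h1 h2 h3 h4 h5 h6)⟩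
  obtain ⟨w, hwS⟩ := hw i j hij
  refine ⟨w.map φ, fun v hv => ?_⟩
  rw [Walk.support_map, List.mem_map] at hv
  obtain ⟨z, hz, rfl⟩ := hv
  exact ⟨z, hwS z hz, rfl⟩

theorem exists_walk_of_walk_map {W : Type*} {G : SimpleGraph V} {f : V → W}
    (hf : ∀ u v, f u = f v → ∃ w : G.Walk u v, ∀ z ∈ w.support, f z = f u)
    {a b : W} (p : (G.map f).Walk a b) (u v : V) (hu : f u = a) (hv : f v = b) :
    ∃ w : G.Walk u v, ∀ z ∈ w.support, f z ∈ p.support := by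
  induction p generalizing u with
  | nil =>
    obtain ⟨w, hw⟩ := hf u v (hu.trans hv.symm)
    exact ⟨w, fun z hz => by simp [hw z hz, hu]⟩
  | cons h p ih =>
    obtain ⟨-, u', v', huv, hu', hv'⟩ := id h
    obtain ⟨w₁, h₁⟩ := hf u u' (hu.trans hu'.symm)
    obtain ⟨w₂, h₂⟩ := ih v' hv' hv
    refine ⟨w₁.append (Walk.cons huv w₂), fun z hz => ?_⟩
    rw [Walk.mem_support_append_iff, Walk.support_cons, List.mem_cons] at hz
    rw [Walk.support_cons, List.mem_cons]
    rcases hz with hz | rfl | hz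
    · exact Or.inl ((h₁ z hz).trans hu)
    · exact Or.inl hu'
    · exact Or.inr (h₂ z hz)

/-- Weak `K₅`s lift along contractions. -/
theorem HasWeakK5.of_contraction {W : Type*} {G : SimpleGraph V} {f : V → W}
    (hsurj : Function.Surjective f)
    (hf : ∀ u v, f u = f v → ∃ w : G.Walk u v, ∀ z ∈ w.support, f z = f u)
    (h : HasWeakK5 (G.map f)) : HasWeakK5 G := by
  obtain ⟨x, S, hx, hw, hS⟩ := h
  obtain ⟨g, hg⟩ := hsurj.hasRightInverse
  refine ⟨g ∘ x, fun i j => f ⁻¹' S i j, hg.injective.comp hx, fun i j hij => ?_,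
    fun a b c d h1 h2 h3 h4 h5 h6 => (hS a b c d h1 h2 h3 h4 h5 h6).preimage f⟩
  obtain ⟨p, hp⟩ := hw i j hij
  obtain ⟨w, hwp⟩ := exists_walk_of_walk_map hf p (g (x i)) (g (x j)) (hg _) (hg _)
  exact ⟨w, fun z hz => hp _ (hwp z hz)⟩

/-- Five vertices, any two of which are joined by a walk avoiding the other three, form a weak `K₅`
as soon as among any two disjoint pairs at least one is an edge. -/
theorem hasWeakK5_of_adj_or {G : SimpleGraph V} (x : Fin 5 → V) (hx : Function.Injective x)
    (hw : ∀ i j, i < j → ¬ G.Adj (x i) (x j) →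
      ∃ w : G.Walk (x i) (x j), ∀ k, k ≠ i → k ≠ j → x k ∉ w.support)
    (hadj : ∀ a b c d, a < b → c < d → a ≠ c → a ≠ d → b ≠ c → b ≠ d →
      G.Adj (x a) (x b) ∨ G.Adj (x c) (x d)) : HasWeakK5 G := by
  classical
  refine ⟨x, fun i j => if G.Adj (x i) (x j) then {x i, x j} else
    {z | ∀ k, k ≠ i → k ≠ j → z ≠ x k}, hx, fun i j hij => ?_,
    fun a b c d hab hcd h1 h2 h3 h4 => ?_⟩
  · by_cases h : G.Adj (x i) (x j)
    · exact ⟨h.toWalk, by simp [h]⟩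
    · obtain ⟨w, hw⟩ := hw i j hij h
      refine ⟨w, fun v hv => ?_⟩
      simp only [if_neg h]
      rintro k hki hkj rfl
      exact hw k hki hkj hv
  · have := hadj a b c d hab hcd h1 h2 h3 h4
    rw [Set.disjoint_left]
    intro z
    have := hx.ne h1
    have := hx.ne h2
    have := hx.ne h3
    have := hx.ne h4
    dsimp only
    split_ifs <;> simp only [Set.mem_insert_iff, Set.mem_singleton_iff, Set.mem_ofPred_eq] <;> grind

theorem hasWeakK5_of_adj_of_walks {G : SimpleGraph V} {u v w₁ w₂ w₃ : V} (huv : G.Adj u v)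
    (hu₁ : G.Adj u w₁) (hu₂ : G.Adj u w₂) (hu₃ : G.Adj u w₃)
    (hv₁ : G.Adj v w₁) (hv₂ : G.Adj v w₂) (hv₃ : G.Adj v w₃)
    (h₁₂ : w₁ ≠ w₂) (h₁₃ : w₁ ≠ w₃) (h₂₃ : w₂ ≠ w₃)
    (p₁₂ : ∃ p : G.Walk w₁ w₂, u ∉ p.support ∧ v ∉ p.support ∧ w₃ ∉ p.support)
    (p₁₃ : ∃ p : G.Walk w₁ w₃, u ∉ p.support ∧ v ∉ p.support ∧ w₂ ∉ p.support)
    (p₂₃ : ∃ p : G.Walk w₂ w₃, u ∉ p.support ∧ v ∉ p.support ∧ w₁ ∉ p.support) :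
    HasWeakK5 G := by
  have hadj : ∀ a b : Fin 5, a < b → 3 ≤ b →
      G.Adj (![w₁, w₂, w₃, u, v] a) (![w₁, w₂, w₃, u, v] b) := by
    intro a b hab hb
    fin_cases b <;> fin_cases a <;> first
      | exact absurd hb (by decide)
      | exact absurd hab (by decide)
      | simp [huv, hu₁.symm, hu₂.symm, hu₃.symm, hv₁.symm, hv₂.symm, hv₃.symm]
  refine hasWeakK5_of_adj_or ![w₁, w₂, w₃, u, v] ?_ ?_ fun a b c d hab hcd h1 h2 h3 h4 => ?_
  · have := huv.ne
    have := hu₁.ne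
    have := hu₂.ne
    have := hu₃.ne
    have := hv₁.ne
    have := hv₂.ne
    have := hv₃.ne
    intro i j hij
    fin_cases i <;> fin_cases j <;> simp_all
  · intro i j hij hn
    have hj : ¬ 3 ≤ j := fun hj => hn (hadj i j hij hj)
    have hij' : (i = 0 ∧ j = 1) ∨ (i = 0 ∧ j = 2) ∨ (i = 1 ∧ j = 2) := by
      clear * - hij hj
      decide +revert
    rcases hij' with ⟨rfl, rfl⟩ | ⟨rfl, rfl⟩ | ⟨rfl, rfl⟩
    · obtain ⟨p, h⟩ := p₁₂
      exact ⟨p, fun k hk hk' => by fin_cases k <;> simp_all⟩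
    · obtain ⟨p, h⟩ := p₁₃
      exact ⟨p, fun k hk hk' => by fin_cases k <;> simp_all⟩
    · obtain ⟨p, h⟩ := p₂₃
      exact ⟨p, fun k hk hk' => by fin_cases k <;> simp_all⟩
  · have hbd : 3 ≤ b ∨ 3 ≤ d := by
      simp only [Fin.lt_def, Fin.le_def, ne_eq, Fin.ext_iff] at *
      change 3 ≤ (b : ℕ) ∨ 3 ≤ (d : ℕ)
      omega
    exact hbd.imp (hadj a b hab) (hadj c d hcd)

open Finset in
/-- A vertex of degree four or five, each of whose edges lies in at least three triangles, gives
rise to a weak `K₅`. -/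
theorem hasWeakK5_of_neighborhood [Fintype V] [DecidableEq V] {G : SimpleGraph V}
    [DecidableRel G.Adj] {v : V} (h4 : 4 ≤ G.degree v) (h5 : G.degree v ≤ 5)
    (hc : ∀ u, G.Adj v u → 3 ≤ #{z | G.Adj v z ∧ G.Adj u z}) : HasWeakK5 G := by
  have hedge {a b : V} (h : G.Adj a b) (x y z : V) (hx : x ≠ a ∧ x ≠ b) (hy : y ≠ a ∧ y ≠ b)
      (hz : z ≠ a ∧ z ≠ b) :
      ∃ p : G.Walk a b, x ∉ p.support ∧ y ∉ p.support ∧ z ∉ p.support :=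
    ⟨h.toWalk, by simp [hx], by simp [hy], by simp [hz]⟩
  by_cases hall : ∀ a b, G.Adj v a → G.Adj v b → a ≠ b → G.Adj a b
  · rw [← G.card_neighborFinset_eq_degree] at h4
    obtain ⟨a, ha⟩ : (G.neighborFinset v).Nonempty := card_pos.mp (by omega)
    obtain ⟨b, hb, c, hc, d, hd, hbc, hbd, hcd⟩ := two_lt_card.mp
      (show 2 < #((G.neighborFinset v).erase a) by rw [card_erase_of_mem ha]; omega)
    simp only [mem_erase, mem_neighborFinset] at ha hb hc hd
    have := ha.ne
    have := hb.2.ne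
    have := hc.2.ne
    have := hd.2.ne
    refine hasWeakK5_of_adj_of_walks ha hb.2 hc.2 hd.2 (hall _ _ ha hb.2 hb.1.symm)
      (hall _ _ ha hc.2 hc.1.symm) (hall _ _ ha hd.2 hd.1.symm) hbc hbd hcd
      (hedge (hall _ _ hb.2 hc.2 hbc) _ _ _ ?_ ?_ ?_)
      (hedge (hall _ _ hb.2 hd.2 hbd) _ _ _ ?_ ?_ ?_)
      (hedge (hall _ _ hc.2 hd.2 hcd) _ _ _ ?_ ?_ ?_) <;> grind
  · push Not at hall
    obtain ⟨c, d, hvc, hvd, hcd, hncd⟩ := hall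
    have miss {a b : V} (ha : G.Adj v a) (hb : G.Adj v b) (hab : a ≠ b) (hn : ¬ G.Adj a b)
        {z : V} (hz : G.Adj v z) (hza : z ≠ a) (hzb : z ≠ b) : G.Adj a z := by
      by_contra hnz
      have hsub : ({z | G.Adj v z ∧ G.Adj a z} : Finset V) ⊆
          (((G.neighborFinset v).erase a).erase b).erase z := by
        intro y hy
        simp only [mem_filter, mem_univ, true_and] at hy
        simp only [mem_erase, mem_neighborFinset]
        refine ⟨?_, ?_, hy.2.ne', hy.1⟩ <;> rintro rfl <;> simp_all
      have h1 := card_le_card hsub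
      rw [card_erase_of_mem (by simp [*]), card_erase_of_mem (by simp [*, hab.symm]),
        card_erase_of_mem (by simp [*]), G.card_neighborFinset_eq_degree] at h1
      have := hc a ha
      omega
    have hdeg : G.degree v = 5 := by
      by_contra hne
      have hsub : ({z | G.Adj v z ∧ G.Adj c z} : Finset V) ⊆
          ((G.neighborFinset v).erase c).erase d := by
        intro y hy
        simp only [mem_filter, mem_univ, true_and] at hy
        simp only [mem_erase, mem_neighborFinset]
        refine ⟨?_, hy.2.ne', hy.1⟩
        rintro rfl
        simp_all
      have h1 := card_le_card hsub
      rw [card_erase_of_mem (by simp [*, hcd.symm]),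
        card_erase_of_mem (by simp [*]), G.card_neighborFinset_eq_degree] at h1
      have := hc c hvc
      omega
    have main {a b f : V} (ha : G.Adj v a) (hb : G.Adj v b) (hf : G.Adj v f) (hac : a ≠ c)
        (had : a ≠ d) (hbc : b ≠ c) (hbd : b ≠ d) (hfc : f ≠ c) (hfd : f ≠ d) (hab : a ≠ b)
        (haf : a ≠ f) (hbf : G.Adj b f) : HasWeakK5 G := by
      have hncd' : ¬ G.Adj d c := fun h => hncd h.symm
      have hca := miss hvc hvd hcd hncd ha hac had
      have hcb := miss hvc hvd hcd hncd hb hbc hbd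
      have hcf := miss hvc hvd hcd hncd hf hfc hfd
      have hda := miss hvd hvc hcd.symm hncd' ha had hac
      have hdb := miss hvd hvc hcd.symm hncd' hb hbd hbc
      have hdf := miss hvd hvc hcd.symm hncd' hf hfd hfc
      have := ha.ne
      have := hb.ne
      have := hf.ne
      have := hvc.ne
      have := hvd.ne
      have := hbf.ne
      refine hasWeakK5_of_adj_of_walks hf hb hvc hvd hbf.symm hcf.symm hdf.symm hbc hbd hcd
        (hedge hcb.symm _ _ _ ?_ ?_ ?_) (hedge hdb.symm _ _ _ ?_ ?_ ?_)
        ⟨Walk.cons hca hda.symm.toWalk, ?_, ?_, ?_⟩ <;>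
        first
        | grind
        | (simp only [Walk.support_cons, Adj.toWalk, Walk.support_nil, List.mem_cons,
            List.not_mem_nil, or_false]
           grind)
    obtain ⟨a, ha, b, hb, f, hf, hab, haf, hbf⟩ := two_lt_card.mp
      (show 2 < #(((G.neighborFinset v).erase c).erase d) by
        rw [card_erase_of_mem (by simp [*, hcd.symm]),
          card_erase_of_mem (by simp [*]), G.card_neighborFinset_eq_degree]
        omega)
    simp only [mem_erase, mem_neighborFinset] at ha hb hf
    obtain ⟨had, hac, hva⟩ := ha
    obtain ⟨hbd, hbc, hvb⟩ := hb
    obtain ⟨hfd, hfc, hvf⟩ := hf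
    by_cases h : G.Adj b f
    · exact main hva hvb hvf hac had hbc hbd hfc hfd hab haf h
    · exact main hvf hva hvb hfc hfd hac had hbc hbd haf.symm hbf.symm
        (miss hvb hvf hbf h hva hab haf).symm

open Finset in
/-- Contracting an edge `xy` that lies in `t` triangles destroys at most `t + 1` edges. -/
theorem exists_contraction [Fintype V] [DecidableEq V] {G : SimpleGraph V} [DecidableRel G.Adj]
    {x y : V} (hxy : G.Adj x y) :
    ∃ f : V → {v : V // v ≠ y}, Function.Surjective f ∧
      (∀ u v, f u = f v → ∃ w : G.Walk u v, ∀ z ∈ w.support, f z = f u) ∧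
      #G.edgeFinset ≤ (G.map f).edgeSet.ncard + 1 + #{z | G.Adj x z ∧ G.Adj y z} := by
  let f : V → {v : V // v ≠ y} := fun v => if h : v = y then ⟨x, hxy.ne⟩ else ⟨v, h⟩
  have fy : f y = ⟨x, hxy.ne⟩ := dif_pos rfl
  have fv (v : V) (h : v ≠ y) : f v = ⟨v, h⟩ := dif_neg h
  have feq (u v : V) : f u = f v → u = v ∨ u = x ∧ v = y ∨ u = y ∧ v = x := by
    intro h
    by_cases hu : u = y <;> by_cases hv : v = y
    · exact Or.inl (hu.trans hv.symm)
    · rw [hu, fy, fv v hv] at h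
      exact Or.inr (Or.inr ⟨hu, (congrArg Subtype.val h).symm⟩)
    · rw [hv, fy, fv u hu] at h
      exact Or.inr (Or.inl ⟨congrArg Subtype.val h, hv⟩)
    · rw [fv u hu, fv v hv] at h
      exact Or.inl (congrArg Subtype.val h)
  have fx : f x = f y := (fv x hxy.ne).trans fy.symm
  refine ⟨f, fun v => ⟨v, fv v v.2⟩, fun u v huv => ?_, ?_⟩
  · rcases feq u v huv with rfl | ⟨rfl, rfl⟩ | ⟨rfl, rfl⟩
    · exact ⟨Walk.nil, by simp⟩
    · exact ⟨hxy.toWalk, by simp [fx]⟩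
    · exact ⟨hxy.symm.toWalk, by simp [fx]⟩
  · set C : Finset V := {z | G.Adj x z ∧ G.Adj y z} with hC
    set B : Finset (Sym2 V) := insert s(x, y) (C.image fun z => s(y, z)) with hB
    have hBcard : #B ≤ #C + 1 := (card_insert_le _ _).trans (by gcongr; exact card_image_le)
    have hle : #(G.edgeFinset \ B) ≤ (G.map f).edgeSet.ncard := by
      rw [← Set.ncard_coe_finset]
      refine Set.ncard_le_ncard_of_injOn (Sym2.map f) ?_ ?_ (Set.toFinite _)
      · intro e
        induction e using Sym2.ind with | _ a b =>
        intro he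
        simp only [coe_sdiff, Set.mem_sdiff, mem_coe, mem_edgeFinset, mem_edgeSet, hB,
          mem_insert] at he
        rw [Sym2.map_mk]
        refine ⟨fun h => ?_, a, b, he.1, rfl, rfl⟩
        rcases feq a b h with rfl | ⟨rfl, rfl⟩ | ⟨rfl, rfl⟩
        · exact he.1.ne rfl
        · exact he.2 (Or.inl rfl)
        · exact he.2 (Or.inl Sym2.eq_swap)
      · intro e he e' he' hee
        induction e using Sym2.ind with | _ a b =>
        induction e' using Sym2.ind with | _ c d =>
        simp only [coe_sdiff, Set.mem_sdiff, mem_coe, mem_edgeFinset, mem_edgeSet, hB, hC,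
          mem_insert, mem_image, mem_filter, mem_univ, true_and, not_or, not_exists,
          Sym2.eq_iff, not_and] at he he'
        rw [Sym2.map_mk, Sym2.map_mk, Sym2.eq_iff] at hee
        rw [Sym2.eq_iff]
        have := G.adj_comm a b
        have := G.adj_comm c d
        rcases hee with ⟨h1, h2⟩ | ⟨h1, h2⟩ <;>
          have h1 := feq _ _ h1 <;> have h2 := feq _ _ h2 <;> grind
    have := le_card_sdiff B G.edgeFinset
    omega

open Finset in
/-- A graph on `n ≥ 3` vertices without a weak `K₅` has at most `3n - 6` edges. -/
theorem card_edges_le_of_not_hasWeakK5 (n : ℕ) (hn : 3 ≤ n) : ∀ (V : Type*) [Fintype V]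
    (G : SimpleGraph V), Fintype.card V = n → ¬ HasWeakK5 G → G.edgeSet.ncard + 6 ≤ 3 * n := by
  classical
  induction n, hn using Nat.le_induction with
  | base =>
    intro V _ G hV _
    have := G.card_edgeFinset_le_card_choose_two
    rw [hV, show Nat.choose 3 2 = 3 from rfl] at this
    rw [← coe_edgeFinset, Set.ncard_coe_finset]
    omega
  | succ n hn ih =>
    intro V _ G₀ hV hG₀
    by_contra! hlt
    rw [← coe_edgeFinset, Set.ncard_coe_finset] at hlt
    obtain ⟨X, hX, hXcard⟩ := exists_subset_card_eq (s := G₀.edgeFinset) (n := 3 * n - 2) (by omega)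
    have hXG : (X : Set (Sym2 V)) ⊆ G₀.edgeSet := by
      rw [← coe_edgeFinset]
      exact_mod_cast hX
    obtain ⟨G, hGX⟩ : ∃ G : SimpleGraph V, G.edgeSet = X := by
      refine ⟨fromEdgeSet X, ?_⟩
      rw [edgeSet_fromEdgeSet, sdiff_eq_left, ← Set.subset_compl_iff_disjoint_right]
      exact hXG.trans G₀.edgeSet_subset_compl_diagSet
    have hle : G ≤ G₀ := edgeSet_subset_edgeSet.mp (hGX ▸ hXG)
    have hG : ¬ HasWeakK5 G := fun h =>
      hG₀ (h.map (Hom.ofLE hle) fun _ _ h => h)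
    have hcard : #G.edgeFinset = 3 * n - 2 := by
      rw [← hXcard, ← Set.ncard_coe_finset, coe_edgeFinset, hGX, Set.ncard_coe_finset]
    have hdeg (v : V) : 4 ≤ G.degree v := by
      have h1 := ih _ (G.induce {v}ᶜ) (by
        rw [Fintype.card_compl_set, hV, Fintype.card_unique, Nat.add_sub_cancel])
        fun h => hG (h.map (Embedding.induce _).toHom Subtype.val_injective)
      rw [← coe_edgeFinset, Set.ncard_coe_finset, card_edgeFinset_induce_compl_singleton] at h1
      have := G.card_edgeFinset_deleteIncidenceSet v
      omega
    have hcommon (x y : V) (hxy : G.Adj x y) : 3 ≤ #{z | G.Adj x z ∧ G.Adj y z} := by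
      obtain ⟨f, hf, hconn, hcontr⟩ := exists_contraction hxy
      have h1 := ih _ (G.map f) (by
        rw [Fintype.card_subtype_compl, hV, Fintype.card_subtype_eq, Nat.add_sub_cancel])
        fun h => hG (h.of_contraction hf hconn)
      omega
    obtain ⟨v, hv⟩ : ∃ v, G.degree v ≤ 5 := by
      by_contra! hbig
      have h1 : ∑ _v : V, 6 ≤ ∑ v, G.degree v := sum_le_sum fun v _ => hbig v
      rw [sum_degrees_eq_twice_card_edges, hcard, sum_const, card_univ, hV, smul_eq_mul] at h1
      omega
    exact hG (hasWeakK5_of_neighborhood (hdeg v) hv (hcommon v))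

theorem NoSeparatingTriangle.exists_walk {G : SimpleGraph V} (h : NoSeparatingTriangle G)
    {a b c u v : V} (hab : G.Adj a b) (hac : G.Adj a c) (hbc : G.Adj b c)
    (hu : u ≠ a ∧ u ≠ b ∧ u ≠ c) (hv : v ≠ a ∧ v ≠ b ∧ v ≠ c) :
    ∃ p : G.Walk u v, a ∉ p.support ∧ b ∉ p.support ∧ c ∉ p.support := by
  classical
  have ht : G.IsNClique 3 {a, b, c} := is3Clique_triple_iff.mpr ⟨hab, hac, hbc⟩
  obtain ⟨p⟩ := h _ ht ⟨u, by simp [hu]⟩ ⟨v, by simp [hv]⟩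
  have key (z : V) (hz : z ∈ (p.map (Embedding.induce _).toHom).support) :
      z ∉ ({a, b, c} : Finset V) := by
    rw [Walk.support_map, List.mem_map] at hz
    obtain ⟨y, -, rfl⟩ := hz
    exact y.2
  exact ⟨p.map (Embedding.induce _).toHom, fun hz => key a hz (by simp),
    fun hz => key b hz (by simp), fun hz => key c hz (by simp)⟩

/-- Without separating triangles and weak `K₅`s, no edge lies in three triangles. -/
theorem NoSeparatingTriangle.common_neighbors {G : SimpleGraph V} (h : NoSeparatingTriangle G)
    (hG : ¬ HasWeakK5 G) {u v w₁ w₂ w₃ : V} (huv : G.Adj u v)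
    (hu₁ : G.Adj u w₁) (hu₂ : G.Adj u w₂) (hu₃ : G.Adj u w₃)
    (hv₁ : G.Adj v w₁) (hv₂ : G.Adj v w₂) (hv₃ : G.Adj v w₃)
    (h₁₂ : w₁ ≠ w₂) (h₁₃ : w₁ ≠ w₃) (h₂₃ : w₂ ≠ w₃) : False :=
  hG <| hasWeakK5_of_adj_of_walks huv hu₁ hu₂ hu₃ hv₁ hv₂ hv₃ h₁₂ h₁₃ h₂₃
    (h.exists_walk huv hu₃ hv₃ ⟨hu₁.ne', hv₁.ne', h₁₃⟩ ⟨hu₂.ne', hv₂.ne', h₂₃⟩)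
    (h.exists_walk huv hu₂ hv₂ ⟨hu₁.ne', hv₁.ne', h₁₂⟩ ⟨hu₃.ne', hv₃.ne', h₂₃.symm⟩)
    (h.exists_walk huv hu₁ hv₁ ⟨hu₂.ne', hv₂.ne', h₁₂.symm⟩ ⟨hu₃.ne', hv₃.ne', h₁₃.symm⟩)

open Finset in
theorem NoSeparatingTriangle.three_mul_card_triangles_le [Fintype V] [DecidableEq V]
    {G : SimpleGraph V} [DecidableRel G.Adj] (h : NoSeparatingTriangle G) (hG : ¬ HasWeakK5 G) :
    #(G.cliqueFinset 3) * 3 ≤ #G.edgeFinset * 2 := by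
  refine card_mul_le_card_mul (fun t e => ∀ v ∈ e, v ∈ t) (fun t ht => ?_) fun e he => ?_
  · obtain ⟨a, b, c, hab, hac, hbc, rfl⟩ := is3Clique_iff.mp ((G.mem_cliqueFinset_iff).mp ht)
    have h3 : #({s(a, b), s(a, c), s(b, c)} : Finset (Sym2 V)) = 3 := by
      have := hab.ne
      have := hac.ne
      have := hbc.ne
      rw [card_eq_three]
      exact ⟨_, _, _, by grind [Sym2.eq_iff], by grind [Sym2.eq_iff], by grind [Sym2.eq_iff], rfl⟩
    rw [← h3]
    refine card_le_card fun e he => ?_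
    simp only [mem_insert, mem_singleton] at he
    rw [mem_bipartiteAbove, mem_edgeFinset]
    rcases he with rfl | rfl | rfl <;> simp [hab, hac, hbc]
  · induction e using Sym2.ind with | _ u v =>
    rw [mem_edgeFinset, mem_edgeSet] at he
    by_contra! hlt
    obtain ⟨t₁, h₁, t₂, h₂, t₃, h₃, h₁₂, h₁₃, h₂₃⟩ := two_lt_card.mp hlt
    have third (t : Finset V) (ht : t ∈ (G.cliqueFinset 3).bipartiteBelow
        (fun t e => ∀ v ∈ e, v ∈ t) s(u, v)) :
        ∃ w, t = {u, v, w} ∧ G.Adj u w ∧ G.Adj v w := by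
      rw [mem_bipartiteBelow, mem_cliqueFinset_iff] at ht
      obtain ⟨ht, hs⟩ := ht
      have hu : u ∈ t := hs u (by simp)
      have hv : v ∈ t := hs v (by simp)
      obtain ⟨w, hw⟩ := card_eq_one.mp (show #((t.erase u).erase v) = 1 by
        rw [card_erase_of_mem (mem_erase.mpr ⟨he.ne', hv⟩), card_erase_of_mem hu, ht.card_eq])
      have htw : t = {u, v, w} := by
        rw [← insert_erase hu, ← insert_erase (mem_erase.mpr ⟨he.ne', hv⟩), hw]
      rw [htw, is3Clique_triple_iff] at ht
      exact ⟨w, htw, ht.2⟩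
    obtain ⟨w₁, rfl, hu₁, hv₁⟩ := third t₁ h₁
    obtain ⟨w₂, rfl, hu₂, hv₂⟩ := third t₂ h₂
    obtain ⟨w₃, rfl, hu₃, hv₃⟩ := third t₃ h₃
    exact h.common_neighbors hG he hu₁ hu₂ hu₃ hv₁ hv₂ hv₃ (fun h => h₁₂ (h ▸ rfl))
      (fun h => h₁₃ (h ▸ rfl)) (fun h => h₂₃ (h ▸ rfl))

theorem stackTriangles_adj_inl_inl {G : SimpleGraph V} {u v : V} :
    (stackTriangles G).Adj (Sum.inl u) (Sum.inl v) ↔ G.Adj u v := by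
  simp only [stackTriangles, fromRel_adj]
  constructor
  · rintro ⟨-, h⟩
    simpa [G.adj_comm v u] using h
  · intro h
    exact ⟨by simpa using h.ne, Or.inl (Or.inl ⟨u, v, rfl, rfl, h⟩)⟩

theorem stackTriangles_adj_inl_inr {G : SimpleGraph V} {u : V}
    {t : {t : Finset V // G.IsNClique 3 t}} :
    (stackTriangles G).Adj (Sum.inl u) (Sum.inr t) ↔ u ∈ t.1 := by
  simp [stackTriangles, fromRel_adj]

theorem stackTriangles_not_adj_inr_inr {G : SimpleGraph V}
    {s t : {t : Finset V // G.IsNClique 3 t}} :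
    ¬ (stackTriangles G).Adj (Sum.inr s) (Sum.inr t) := by
  simp [stackTriangles, fromRel_adj]

/-- Every triangle of the stacked graph is a triangle `t` of `G`, or consists of an edge of some
triangle `t` of `G` and the vertex stacked on `t`. -/
theorem exists_triangle_of_stackTriangles [DecidableEq V] {G : SimpleGraph V}
    {y : Finset (V ⊕ {t : Finset V // G.IsNClique 3 t})}
    (hy : (stackTriangles G).IsNClique 3 y) :
    ∃ t : {t : Finset V // G.IsNClique 3 t},
      y = t.1.map Function.Embedding.inl ∨
      ∃ u ∈ t.1, ∃ v ∈ t.1, u ≠ v ∧ y = {Sum.inl u, Sum.inl v, Sum.inr t} := by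
  obtain ⟨a, b, c, hab, hac, hbc, rfl⟩ := is3Clique_iff.mp hy
  rcases a with a | s <;> rcases b with b | t <;> rcases c with c | r
  · rw [stackTriangles_adj_inl_inl] at hab hac hbc
    exact ⟨⟨{a, b, c}, is3Clique_triple_iff.mpr ⟨hab, hac, hbc⟩⟩, Or.inl (by simp)⟩
  · rw [stackTriangles_adj_inl_inl] at hab
    rw [stackTriangles_adj_inl_inr] at hac hbc
    exact ⟨r, Or.inr ⟨a, hac, b, hbc, hab.ne, rfl⟩⟩
  · rw [adj_comm] at hbc
    rw [stackTriangles_adj_inl_inl] at hac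
    rw [stackTriangles_adj_inl_inr] at hab hbc
    exact ⟨t, Or.inr ⟨a, hab, c, hbc, hac.ne, by grind⟩⟩
  · exact absurd hbc stackTriangles_not_adj_inr_inr
  · rw [adj_comm] at hab hac
    rw [stackTriangles_adj_inl_inl] at hbc
    rw [stackTriangles_adj_inl_inr] at hab hac
    exact ⟨s, Or.inr ⟨b, hab, c, hac, hbc.ne, by grind⟩⟩
  · exact absurd hac stackTriangles_not_adj_inr_inr
  · exact absurd hab stackTriangles_not_adj_inr_inr
  · exact absurd hab stackTriangles_not_adj_inr_inr

open Finset in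
theorem IsTrianglePacking.card_le_card_triangles [Fintype V] [DecidableEq V] {G : SimpleGraph V}
    [DecidableRel G.Adj] {Y : Finset (Finset (V ⊕ {t : Finset V // G.IsNClique 3 t}))}
    (hY : IsTrianglePacking (stackTriangles G) Y) : #Y ≤ #(G.cliqueFinset 3) := by
  obtain ⟨hcl, hdisj⟩ := hY
  refine card_le_card_of_forall_subsingleton (fun y t => ∃ ht : G.IsNClique 3 t,
      y = t.map Function.Embedding.inl ∨
      ∃ u ∈ t, ∃ v ∈ t, u ≠ v ∧ y = {Sum.inl u, Sum.inl v, Sum.inr ⟨t, ht⟩})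
    (fun y hy => ?_) fun t ht => ?_
  · obtain ⟨t, ht⟩ := exists_triangle_of_stackTriangles (hcl y hy)
    exact ⟨t.1, (G.mem_cliqueFinset_iff).mpr t.2, t.2, ht⟩
  · have shared {y z : Finset (V ⊕ {t : Finset V // G.IsNClique 3 t})} (hy : y ∈ Y) (hz : z ∈ Y)
        {a b : V ⊕ {t : Finset V // G.IsNClique 3 t}} (hab : (stackTriangles G).Adj a b)
        (hay : a ∈ y) (hby : b ∈ y) (haz : a ∈ z) (hbz : b ∈ z) : y = z := by
      by_contra hne
      exact hdisj y hy z hz hne s(a, b) hab (by simp [*])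
    have edge (ht : G.IsNClique 3 t) {u v : V} (hu : u ∈ t) (hv : v ∈ t) (huv : u ≠ v) :
        (stackTriangles G).Adj (Sum.inl u) (Sum.inl v) :=
      stackTriangles_adj_inl_inl.mpr (ht.isClique hu hv huv)
    rintro y ⟨hy, ht, hy'⟩ z ⟨hz, _, hz'⟩
    rcases hy' with rfl | ⟨u, hu, v, hv, huv, rfl⟩ <;>
      rcases hz' with rfl | ⟨u', hu', v', hv', huv', rfl⟩
    · rfl
    · exact shared hy hz (edge ht hu' hv' huv') (by simpa) (by simpa) (by simp) (by simp)
    · exact shared hy hz (edge ht hu hv huv) (by simp) (by simp) (by simpa) (by simpa)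
    · obtain ⟨w, hw, hwuv, hwuv'⟩ : ∃ w ∈ t, (w = u ∨ w = v) ∧ (w = u' ∨ w = v') := by
        by_contra! hno
        have h4 : #({u, v, u', v'} : Finset V) ≤ #t := card_le_card (by grind)
        rw [ht.card_eq, card_insert_of_notMem (by grind), card_insert_of_notMem (by grind),
          card_pair huv'] at h4
        omega
      refine shared hy hz (stackTriangles_adj_inl_inr (t := ⟨t, ht⟩) |>.mpr hw) ?_ (by simp) ?_
        (by simp) <;> simpa

/-- Let `G` be a planar triangulation on `n` vertices with no separating triangle
(so that every triangle of `G` is facial), and let `H` be the planar triangulation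
obtained from `G` by adding, for each facial triangle `t`, a new vertex adjacent to the
three vertices of `t`.  Then `ν(H) ≤ 2n - 4`. -/
theorem nu_stack_le (V : Type) [Fintype V] (G : SimpleGraph V)
    (hG : MaximalPlanar G) (hsep : NoSeparatingTriangle G) :
    nu (stackTriangles G) ≤ 2 * Fintype.card V - 4 := by
  classical
  have hK := hG.1.not_hasWeakK5
  refine csSup_le ⟨0, ∅, by simp [IsTrianglePacking], rfl⟩ ?_
  rintro _ ⟨Y, hY, rfl⟩
  refine hY.card_le_card_triangles.trans ?_
  rcases lt_or_ge (Fintype.card V) 3 with hV | hV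
  · rw [Finset.card_eq_zero.mpr]
    · exact Nat.zero_le _
    · rw [Finset.eq_empty_iff_forall_notMem]
      intro t ht
      have := ((G.mem_cliqueFinset_iff).mp ht).card_eq
      have := t.card_le_univ
      omega
  · have h1 := card_edges_le_of_not_hasWeakK5 _ hV V G rfl hK
    have h2 := hsep.three_mul_card_triangles_le hK
    rw [← coe_edgeFinset, Set.ncard_coe_finset] at h1
    omega
end

section
/- For an arbitrary planar embedding of a restricted planar 3-tree G with f facial triangles, there exists a set 𝒫 of pairwise edge-disjoint facial triangles of G that contains the external facial triangle and satisfies |𝒫| ≥ ⌈f/3⌉; moreover, if G is super restricted, then such a 𝒫 exists with |𝒫| = 5. -/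
open SimpleGraph

variable {V : Type*}

/-- A face of a plane embedding: a connected component of the complement of the drawing. -/
def PlaneEmbedding.IsFace {G : SimpleGraph V} (E : PlaneEmbedding G) (F : Set ℂ) : Prop :=
  ∃ z ∈ E.drawingᶜ, F = connectedComponentIn E.drawingᶜ z

/-- The union of the arcs of the edges of `G` joining vertices of `t`. -/
def PlaneEmbedding.triBoundary {G : SimpleGraph V} (E : PlaneEmbedding G)
    (t : Finset V) : Set ℂ :=
  ⋃ (u : V) (_ : u ∈ t) (v : V) (_ : v ∈ t) (_ : G.Adj u v), E.arc u v

/-- `t` is a facial triangle of the embedding `E`: it is a triangle of `G` and some face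
of `E` has the drawing of `t` as its boundary. -/
def PlaneEmbedding.IsFacialTriangle {G : SimpleGraph V} (E : PlaneEmbedding G)
    (t : Finset V) : Prop :=
  G.IsNClique 3 t ∧ ∃ F : Set ℂ, E.IsFace F ∧ frontier F = E.triBoundary t

/-- `t` is the external facial triangle of the embedding `E`: it is a triangle of `G`
bounding the unbounded face of `E`. -/
def PlaneEmbedding.IsExternalFacialTriangle {G : SimpleGraph V} (E : PlaneEmbedding G)
    (t : Finset V) : Prop :=
  G.IsNClique 3 t ∧ ∃ F : Set ℂ, E.IsFace F ∧ ¬ Bornology.IsBounded F ∧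
    frontier F = E.triBoundary t

/-- `F` is a face of the plane set `S`: a connected component of its complement. -/
def IsFaceOf (S F : Set ℂ) : Prop := ∃ z ∈ Sᶜ, F = connectedComponentIn Sᶜ z

/-- The sub-drawing of an embedding induced by the vertices in `K` (and the edges
of `G` joining them). -/
def PlaneEmbedding.subDrawing {G : SimpleGraph V} (E : PlaneEmbedding G)
    (K : Finset V) : Set ℂ :=
  (E.vtx '' ↑K) ∪
    ⋃ (u : V) (_ : u ∈ K) (v : V) (_ : v ∈ K) (_ : G.Adj u v), E.arc u v

/-- The number of vertices of `G` drawn inside the plane region `F`. -/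
noncomputable def PlaneEmbedding.insideCount {G : SimpleGraph V} (E : PlaneEmbedding G)
    (F : Set ℂ) : ℕ :=
  {v : V | E.vtx v ∈ F}.ncard

/-- `G` is a 3-tree: it can be built from `K₃` by repeatedly adding a new vertex adjacent
to the three vertices of an existing triangle.  This is expressed via a construction
ordering `e : Fin (n+3) ≃ V`: the first three vertices form a triangle, and every later
vertex is adjacent, among earlier vertices, to exactly the vertices of a triangle. -/
def Is3Tree (G : SimpleGraph V) : Prop :=
  ∃ (n : ℕ) (e : Fin (n + 3) ≃ V),
    (∀ i j : Fin (n + 3), (i : ℕ) < 3 → (j : ℕ) < 3 → i ≠ j → G.Adj (e i) (e j)) ∧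
    ∀ j : Fin (n + 3), 3 ≤ (j : ℕ) →
      ∃ s : Finset V, G.IsNClique 3 s ∧
        (∀ v ∈ s, ∃ i : Fin (n + 3), (i : ℕ) < (j : ℕ) ∧ e i = v) ∧
        ∀ i : Fin (n + 3), (i : ℕ) < (j : ℕ) → (G.Adj (e j) (e i) ↔ e i ∈ s)

/-- The function `f` admits a continuous logarithm on `S`. -/
def HasLogOn (f : ℂ → ℂ) (S : Set ℂ) : Prop :=
  ∃ g : ℂ → ℂ, ContinuousOn g S ∧ ∀ z ∈ S, Complex.exp (g z) = f z

lemma HasLogOn.mono {f : ℂ → ℂ} {S T : Set ℂ} (h : HasLogOn f T) (hST : S ⊆ T) :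
    HasLogOn f S := by
  obtain ⟨g, hg, he⟩ := h
  exact ⟨g, hg.mono hST, fun z hz => he z (hST hz)⟩

lemma sub_eq_sub_of_exp_eq {X : Type*} [TopologicalSpace X] {S : Set X} (hS : IsPreconnected S)
    {g h : X → ℂ} (hg : ContinuousOn g S) (hh : ContinuousOn h S)
    (he : ∀ x ∈ S, Complex.exp (g x) = Complex.exp (h x)) {x y : X} (hx : x ∈ S) (hy : y ∈ S) :
    g x - h x = g y - h y := by
  have hn : ∀ z ∈ S, ∃ n : ℤ, g z - h z = n * (2 * Real.pi * Complex.I) := by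
    intro z hz
    obtain ⟨n, hn⟩ := Complex.exp_eq_exp_iff_exists_int.1 (he z hz)
    exact ⟨n, by rw [hn]; ring⟩
  have hpi : (2 * Real.pi * Complex.I : ℂ) ≠ 0 := Complex.two_pi_I_ne_zero
  have hdisc : IsDiscrete (Set.range (fun n : ℤ => (n : ℝ))) := by
    rw [isDiscrete_iff_discreteTopology]
    exact (Int.isClosedEmbedding_coe_real.isEmbedding.toHomeomorph).symm.isEmbedding.discreteTopology
  have key := hS.constant_of_mapsTo hdisc
    (f := fun z => ((g z - h z) / (2 * Real.pi * Complex.I)).re)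
    (Complex.continuous_re.comp_continuousOn ((hg.sub hh).div_const _)) (by
      intro z hz
      obtain ⟨n, hn⟩ := hn z hz
      refine ⟨n, ?_⟩
      simp only [hn]
      rw [mul_div_cancel_right₀ _ hpi]
      simp) hx hy
  obtain ⟨n, hn1⟩ := hn x hx
  obtain ⟨m, hm1⟩ := hn y hy
  simp only [hn1, hm1, mul_div_cancel_right₀ _ hpi, Complex.intCast_re] at key
  rw [hn1, hm1]
  have : n = m := by exact_mod_cast key
  rw [this]

/-- Homotopy lifting for the exponential map. -/
lemma hasLogOn_of_homotopy {S : Set ℂ} (F : ℝ → ℂ → ℂ)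
    (hF : ContinuousOn (fun x : ℝ × ℂ => F x.1 x.2) (Set.Icc 0 1 ×ˢ S))
    (hne : ∀ t ∈ Set.Icc (0 : ℝ) 1, ∀ z ∈ S, F t z ≠ 0) (h0 : HasLogOn (F 0) S) :
    HasLogOn (F 1) S := by
  classical
  obtain ⟨g, hg, he⟩ := h0
  let H : C(unitInterval × S, {z : ℂ // z ≠ 0}) :=
    ⟨fun x => ⟨F x.1 x.2, hne _ x.1.2 _ x.2.2⟩, by
      refine Continuous.subtype_mk ?_ _
      exact hF.comp_continuous (f := fun x : unitInterval × S => ((x.1 : ℝ), (x.2 : ℂ)))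
        (by fun_prop) (fun x => ⟨x.1.2, x.2.2⟩)⟩
  let f : C(S, ℂ) := ⟨fun z => g z, continuousOn_iff_continuous_domRestrict.1 hg⟩
  have H0 : ∀ a, H (0, a) = (⟨_, (f a).exp_ne_zero⟩ : {z : ℂ // z ≠ 0}) := by
    intro a
    apply Subtype.ext
    exact (he a a.2).symm
  let L := Complex.isCoveringMap_exp.liftHomotopy H f H0
  have hL := Complex.isCoveringMap_exp.liftHomotopy_lifts H f H0
  refine ⟨fun z => if hz : z ∈ S then L (1, ⟨z, hz⟩) else 0, ?_, ?_⟩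
  · rw [continuousOn_iff_continuous_domRestrict]
    have : Continuous (fun z : S => L (1, z)) := by fun_prop
    convert this using 2 with z
    simp [Set.domRestrict]
  · intro z hz
    have := congrFun hL (1, ⟨z, hz⟩)
    simp only [dif_pos hz]
    exact congrArg Subtype.val this

lemma hasLogOn_univ {f : ℂ → ℂ} (hf : Continuous f) (hne : ∀ z, f z ≠ 0) :
    HasLogOn f Set.univ := by
  refine (hasLogOn_of_homotopy (fun t z => f (t * z)) (by fun_prop) (fun t _ z _ => hne _)
    ⟨fun _ => Complex.log (f 0), continuousOn_const,
      fun z _ => by simp [Complex.exp_log (hne 0)]⟩).elim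
    fun g hg => ⟨g, hg.1, fun z hz => by simpa using hg.2 z hz⟩

/-- Moving a point along a path that avoids `S` does not change the class of `z ↦ z - p`. -/
lemma hasLogOn_div_of_path {S : Set ℂ} {γ : ℝ → ℂ} (hγ : ContinuousOn γ (Set.Icc 0 1))
    (hS : ∀ t ∈ Set.Icc (0 : ℝ) 1, γ t ∉ S) :
    HasLogOn (fun z => (z - γ 1) / (z - γ 0)) S := by
  have hne : ∀ t ∈ Set.Icc (0 : ℝ) 1, ∀ z ∈ S, z - γ t ≠ 0 := by
    intro t ht z hz h
    exact hS t ht (by rw [← sub_eq_zero.1 h]; exact hz)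
  have h0 : (0 : ℝ) ∈ Set.Icc (0 : ℝ) 1 := by simp
  refine hasLogOn_of_homotopy (fun t z => (z - γ t) / (z - γ 0)) ?_
    (fun t ht z hz => div_ne_zero (hne t ht z hz) (hne 0 h0 z hz)) ?_
  · refine ContinuousOn.div ?_ (by fun_prop) (fun x hx => hne 0 h0 _ hx.2)
    exact continuousOn_snd.sub (hγ.comp continuousOn_fst fun x hx => hx.1)
  · exact ⟨fun _ => 0, continuousOn_const, fun z hz => by simp [div_self (hne 0 h0 z hz)]⟩

lemma HasLogOn.congr {f f' : ℂ → ℂ} {S : Set ℂ} (h : HasLogOn f S) (hf : ∀ z ∈ S, f z = f' z) :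
    HasLogOn f' S := by
  obtain ⟨g, hg, he⟩ := h
  exact ⟨g, hg, fun z hz => (he z hz).trans (hf z hz)⟩

lemma continuousOn_piecewise_union {S T : Set ℂ} {g h : ℂ → ℂ} [∀ z, Decidable (z ∈ S)]
    (hST : (IsClosed S ∧ IsClosed T) ∨ (IsOpen S ∧ IsOpen T))
    (hg : ContinuousOn g S) (hh : ContinuousOn h T) (hgh : ∀ z ∈ S ∩ T, g z = h z) :
    ContinuousOn (S.piecewise g h) (S ∪ T) := by
  have h1 : ContinuousOn (S.piecewise g h) S := hg.congr fun z hz => by simp [hz]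
  have h2 : ContinuousOn (S.piecewise g h) T := hh.congr fun z hz => by
    by_cases hzS : z ∈ S
    · simp [hzS, hgh z ⟨hzS, hz⟩]
    · simp [hzS]
  rcases hST with ⟨hS, hT⟩ | ⟨hS, hT⟩
  · exact h1.union_of_isClosed h2 hS hT
  · exact h1.union_of_isOpen h2 hS hT

lemma hasLogOn_union_of_eqOn {S T : Set ℂ} {f g h : ℂ → ℂ}
    (hST : (IsClosed S ∧ IsClosed T) ∨ (IsOpen S ∧ IsOpen T))
    (hg : ContinuousOn g S) (hh : ContinuousOn h T) (hgh : ∀ z ∈ S ∩ T, g z = h z)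
    (hgf : ∀ z ∈ S, Complex.exp (g z) = f z) (hhf : ∀ z ∈ T, Complex.exp (h z) = f z) :
    HasLogOn f (S ∪ T) := by
  classical
  refine ⟨S.piecewise g h, continuousOn_piecewise_union hST hg hh hgh, fun z hz => ?_⟩
  by_cases hzS : z ∈ S
  · simp [hzS, hgf z hzS]
  · simp [hzS, hhf z (hz.resolve_left hzS)]

lemma HasLogOn.union {S T : Set ℂ} {f : ℂ → ℂ}
    (hST : (IsClosed S ∧ IsClosed T) ∨ (IsOpen S ∧ IsOpen T)) (hc : IsPreconnected (S ∩ T))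
    (hS : HasLogOn f S) (hT : HasLogOn f T) : HasLogOn f (S ∪ T) := by
  obtain ⟨g, hg, hgf⟩ := hS
  obtain ⟨h, hh, hhf⟩ := hT
  rcases (S ∩ T).eq_empty_or_nonempty with h0 | ⟨w, hw⟩
  · exact hasLogOn_union_of_eqOn hST hg hh (by simp [h0]) hgf hhf
  · refine hasLogOn_union_of_eqOn (h := fun z => h z + (g w - h w)) hST hg
      (hh.add continuousOn_const)
      (fun z hz => ?_) hgf (fun z hz => ?_)
    · have := sub_eq_sub_of_exp_eq hc (hg.mono Set.inter_subset_left)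
        (hh.mono Set.inter_subset_right)
        (fun x hx => (hgf x hx.1).trans (hhf x hx.2).symm) hz hw
      rw [← this]; ring
    · rw [Complex.exp_add, Complex.exp_sub, hgf w hw.1, hhf w hw.2, div_self, mul_one, hhf z hz]
      rw [← hhf w hw.2]
      exact Complex.exp_ne_zero _

/-- `z ↦ (z - p) ^ k` has no continuous logarithm on a circle around `p` unless `k = 0`. -/
lemma eq_zero_of_hasLogOn_sphere {p : ℂ} {k : ℤ} {R : ℝ} (hR : 0 < R)
    (h : HasLogOn (fun z => (z - p) ^ k) (Metric.sphere p R)) : k = 0 := by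
  obtain ⟨g, hg, he⟩ := h
  have hmem : ∀ θ : ℝ, p + R * Complex.exp (θ * Complex.I) ∈ Metric.sphere p R := by
    intro θ
    simp [abs_of_pos hR]
  have hcont : Continuous fun θ : ℝ => g (p + R * Complex.exp (θ * Complex.I)) :=
    hg.comp_continuous (by fun_prop) hmem
  have key := sub_eq_sub_of_exp_eq (S := (Set.univ : Set ℝ)) isPreconnected_univ
    (g := fun θ : ℝ => g (p + R * Complex.exp (θ * Complex.I)))
    (h := fun θ : ℝ => k * (Real.log R + θ * Complex.I))
    hcont.continuousOn (by fun_prop) (fun θ _ => by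
      rw [he _ (hmem θ), Complex.exp_int_mul, Complex.exp_add, ← Complex.ofReal_exp,
        Real.exp_log hR]
      simp only [add_sub_cancel_left]) (Set.mem_univ 0) (Set.mem_univ (2 * Real.pi))
  have e1 : Complex.exp (((2 * Real.pi : ℝ) : ℂ) * Complex.I) = 1 := by
    push_cast; exact Complex.exp_two_pi_mul_I
  simp only [e1] at key
  simp only [Complex.ofReal_zero, zero_mul, Complex.exp_zero, mul_one, add_zero] at key
  have : (k : ℂ) * (2 * Real.pi * Complex.I) = 0 := by
    push_cast at key
    linear_combination key
  rcases mul_eq_zero.1 this with h | h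
  · exact_mod_cast h
  · exact absurd h Complex.two_pi_I_ne_zero

/-- If `(z - p) ^ k * h z` has a continuous logarithm on a closed set containing the frontier of a
bounded open neighbourhood `U` of `p`, and `h` does not vanish on the closure of `U`,
then `k = 0`. -/
lemma eq_zero_of_hasLogOn_frontier {U K : Set ℂ} (hb : Bornology.IsBounded U)
    (hUo : IsOpen U) (hK : IsClosed K)
    (hUK : frontier U ⊆ K) {p : ℂ} (hp : p ∈ U) {k : ℤ} {h : ℂ → ℂ}
    (hh : ContinuousOn h (closure U)) (hh0 : ∀ z ∈ closure U, h z ≠ 0)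
    (hlog : HasLogOn (fun z => (z - p) ^ k * h z) K) : k = 0 := by
  classical
  obtain ⟨g, hg, he⟩ := hlog
  obtain ⟨G, hG⟩ := ContinuousMap.exists_restrict_eq hK
    ⟨fun z : K => g z, continuousOn_iff_continuous_domRestrict.1 hg⟩
  have hGg : ∀ z ∈ K, G z = g z := fun z hz => by
    have := congrArg (fun f => f ⟨z, hz⟩) hG
    exact this
  have hpne : ∀ z ∈ Uᶜ, z - p ≠ 0 := by
    intro z hz h0
    rw [sub_eq_zero.1 h0] at hz
    exact hz hp
  have hcont : ContinuousOn ((closure U).piecewise (fun z => Complex.exp (G z) / h z)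
      (fun z => (z - p) ^ k)) (closure U ∪ Uᶜ) := by
    refine continuousOn_piecewise_union (Or.inl ⟨isClosed_closure, hUo.isClosed_compl⟩) ?_ ?_ ?_
    · exact ContinuousOn.div (by fun_prop) hh hh0
    · exact ContinuousOn.zpow₀ (by fun_prop) k fun z hz => Or.inl (hpne z hz)
    · rintro z ⟨hz, hzU⟩
      have hzK : z ∈ K := hUK (by rw [hUo.frontier_eq]; exact ⟨hz, hzU⟩)
      rw [hGg z hzK, he z hzK, mul_div_cancel_right₀ _ (hh0 z hz)]
  have hun : closure U ∪ Uᶜ = Set.univ := by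
    rw [Set.eq_univ_iff_forall]
    intro z
    by_cases hz : z ∈ U
    · exact Or.inl (subset_closure hz)
    · exact Or.inr hz
  rw [hun, continuousOn_univ] at hcont
  obtain ⟨L, hL, hLe⟩ := hasLogOn_univ hcont (by
    intro z
    by_cases hz : z ∈ closure U
    · simp [hz, hh0 z hz, Complex.exp_ne_zero]
    · simp only [hz, not_false_eq_true, Set.piecewise_eq_of_notMem]
      exact zpow_ne_zero _ (hpne z fun h => hz (subset_closure h)))
  obtain ⟨R, hR, hUR⟩ := hb.closure.subset_ball_lt 0 p
  refine eq_zero_of_hasLogOn_sphere (p := p) (R := R) hR ⟨L, hL.mono (Set.subset_univ _), ?_⟩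
  intro z hz
  rw [hLe z (Set.mem_univ _)]
  have : z ∉ closure U := fun h => by
    have h1 := hUR h
    simp only [Metric.mem_sphere, Metric.mem_ball] at hz h1
    exact h1.ne hz
  simp [this]

lemma frontier_connectedComponentIn_compl_subset {D : Set ℂ} (hD : IsClosed D) (p : ℂ) :
    frontier (connectedComponentIn Dᶜ p) ⊆ D := by
  intro z hz
  by_contra hzD
  have ho : IsOpen (connectedComponentIn Dᶜ p) := hD.isOpen_compl.connectedComponentIn
  rw [ho.frontier_eq] at hz
  obtain ⟨w, hw1, hw2⟩ := mem_closure_iff.1 hz.1 _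
    (hD.isOpen_compl.connectedComponentIn (x := z)) (mem_connectedComponentIn hzD)
  have := (connectedComponentIn_eq hw1).trans (connectedComponentIn_eq hw2).symm
  exact hz.2 (this ▸ mem_connectedComponentIn hzD)

lemma IsPreconnected.subset_of_disjoint_frontier {R C : Set ℂ} (hC : IsPreconnected C)
    (hR : IsOpen R) (hd : Disjoint C (frontier R)) (hne : (C ∩ R).Nonempty) : C ⊆ R := by
  refine hC.subset_of_closure_inter_subset hR hne ?_
  rintro z ⟨hz, hzC⟩
  by_contra hzR
  exact Set.disjoint_left.1 hd hzC (by rw [hR.frontier_eq]; exact ⟨hz, hzR⟩)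

/-- A connected open set disjoint from `D` with frontier in `D` is a component of `Dᶜ`. -/
lemma connectedComponentIn_compl_eq {D R : Set ℂ} (hR : IsOpen R) (hc : IsPreconnected R)
    (hd : Disjoint R D) (hf : frontier R ⊆ D) {z : ℂ} (hz : z ∈ R) :
    connectedComponentIn Dᶜ z = R := by
  have hRD : R ⊆ Dᶜ := fun w hw h => Set.disjoint_left.1 hd hw h
  refine Set.Subset.antisymm ?_ (hc.subset_connectedComponentIn hz hRD)
  refine isPreconnected_connectedComponentIn.subset_of_disjoint_frontier hR ?_
    ⟨z, mem_connectedComponentIn (hRD hz), hz⟩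
  rw [Set.disjoint_left]
  intro w hw hwf
  exact connectedComponentIn_subset _ _ hw (hf hwf)

lemma isPreconnected_setOf_lt_norm {r : ℝ} (hr : 0 < r) : IsPreconnected {z : ℂ | r < ‖z‖} := by
  have h1 : {z : ℂ | r < ‖z‖} = Complex.exp '' {z : ℂ | Real.log r < z.re} := by
    ext z
    constructor
    · intro hz
      have hz' : r < ‖z‖ := hz
      have h0 : z ≠ 0 := fun h => by simp [h] at hz'; linarith
      refine ⟨Complex.log z, ?_, Complex.exp_log h0⟩
      simp only [Set.mem_ofPred_eq, Complex.log_re]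
      exact Real.log_lt_log hr hz'
    · rintro ⟨w, hw, rfl⟩
      simp only [Set.mem_ofPred_eq, Complex.norm_exp] at hw ⊢
      exact (Real.log_lt_iff_lt_exp hr).1 hw
  rw [h1]
  exact ((convex_halfSpace_re_gt _).isPreconnected).image _ Complex.continuous_exp.continuousOn

/-- A bounded set has only one unbounded complementary component. -/
lemma connectedComponentIn_eq_of_not_isBounded {D : Set ℂ} (hD : Bornology.IsBounded D) {p q : ℂ}
    (hp : ¬ Bornology.IsBounded (connectedComponentIn Dᶜ p))
    (hq : ¬ Bornology.IsBounded (connectedComponentIn Dᶜ q)) :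
    connectedComponentIn Dᶜ p = connectedComponentIn Dᶜ q := by
  obtain ⟨r, hr, hDr⟩ := hD.subset_closedBall_lt 0 0
  have hsub : {z : ℂ | r < ‖z‖} ⊆ Dᶜ := by
    intro z hz hzD
    have := hDr hzD
    simp only [mem_closedBall_zero_iff] at this
    exact absurd hz (not_lt.2 this)
  have key : ∀ x : ℂ, ¬ Bornology.IsBounded (connectedComponentIn Dᶜ x) →
      ∃ z ∈ connectedComponentIn Dᶜ x, z ∈ {z : ℂ | r < ‖z‖} := by
    intro x hx
    by_contra hcon
    push Not at hcon
    refine hx ((Metric.isBounded_closedBall (x := (0 : ℂ)) (r := r)).subset fun z hz => ?_)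
    simpa using hcon z hz
  obtain ⟨z, hz, hzr⟩ := key p hp
  obtain ⟨w, hw, hwr⟩ := key q hq
  rw [connectedComponentIn_eq hz, connectedComponentIn_eq hw]
  exact connectedComponentIn_eq
    ((isPreconnected_setOf_lt_norm hr).subset_connectedComponentIn hzr hsub hwr)

lemma notMem_closure_connectedComponentIn {D : Set ℂ} (hD : IsClosed D) {p q : ℂ} (hq : q ∉ D)
    (hpq : connectedComponentIn Dᶜ p ≠ connectedComponentIn Dᶜ q) :
    q ∉ closure (connectedComponentIn Dᶜ p) := by
  intro h
  rw [closure_eq_self_union_frontier] at h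
  rcases h with h | h
  · exact hpq (connectedComponentIn_eq h)
  · exact hq (frontier_connectedComponentIn_compl_subset hD p h)

lemma connectedComponentIn_eq_of_hasLogOn {D : Set ℂ} (hD : IsCompact D) {p q : ℂ} (hp : p ∉ D)
    (hq : q ∉ D) (h : HasLogOn (fun z => (z - p) / (z - q)) D) :
    connectedComponentIn Dᶜ p = connectedComponentIn Dᶜ q := by
  by_contra hne
  have hp' := notMem_closure_connectedComponentIn hD.isClosed hp (Ne.symm hne)
  have hq' := notMem_closure_connectedComponentIn hD.isClosed hq hne
  have ne_of : ∀ {x : ℂ} {S : Set ℂ}, x ∉ S → ∀ z ∈ S, z - x ≠ 0 := by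
    intro x S hx z hz h0
    exact hx (sub_eq_zero.1 h0 ▸ hz)
  by_cases hbp : Bornology.IsBounded (connectedComponentIn Dᶜ p)
  · have := eq_zero_of_hasLogOn_frontier (k := 1) (h := fun z => (z - q)⁻¹) hbp
      hD.isClosed.isOpen_compl.connectedComponentIn hD.isClosed
      (frontier_connectedComponentIn_compl_subset hD.isClosed p) (mem_connectedComponentIn hp)
      (ContinuousOn.inv₀ (by fun_prop) (ne_of hq')) (fun z hz => inv_ne_zero (ne_of hq' z hz))
      (h.congr fun z _ => by rw [zpow_one, div_eq_mul_inv])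
    exact one_ne_zero this
  · have hbq : Bornology.IsBounded (connectedComponentIn Dᶜ q) := by
      by_contra hbq
      exact hne (connectedComponentIn_eq_of_not_isBounded hD.isBounded hbp hbq)
    have := eq_zero_of_hasLogOn_frontier (k := -1) (h := fun z => (z - p)) hbq
      hD.isClosed.isOpen_compl.connectedComponentIn hD.isClosed
      (frontier_connectedComponentIn_compl_subset hD.isClosed q) (mem_connectedComponentIn hq)
      (by fun_prop) (ne_of hp')
      (h.congr fun z _ => by rw [zpow_neg_one, div_eq_inv_mul])
    omega

/-- Two points separated neither by `S` nor by `T` are not separated by `S ∪ T`, provided that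
`S ∩ T` is connected. -/
lemma connectedComponentIn_union_eq {S T U W : Set ℂ} (hS : IsCompact S) (hT : IsCompact T)
    (hST : IsPreconnected (S ∩ T)) (hU : IsOpen U) (hUc : IsPreconnected U) (hUS : Disjoint U S)
    (hW : IsOpen W) (hWc : IsPreconnected W) (hWT : Disjoint W T) {p q : ℂ} (hpU : p ∈ U)
    (hqU : q ∈ U) (hpW : p ∈ W) (hqW : q ∈ W) :
    connectedComponentIn (S ∪ T)ᶜ p = connectedComponentIn (S ∪ T)ᶜ q := by
  have key : ∀ {S U : Set ℂ}, IsOpen U → IsPreconnected U → Disjoint U S → p ∈ U → q ∈ U →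
      HasLogOn (fun z => (z - p) / (z - q)) S := by
    intro S U hU hUc hUS hp hq
    have hpc : IsPathConnected U := (hU.isConnected_iff_isPathConnected).1 ⟨⟨p, hp⟩, hUc⟩
    obtain ⟨γ, hγ⟩ := hpc.joinedIn q hq p hp
    have := hasLogOn_div_of_path (S := S) (γ := γ.extend) γ.continuous_extend.continuousOn
      (fun t ht h => Set.disjoint_left.1 hUS (by
        rw [Path.extend_apply _ ht]; exact hγ _) h)
    simpa using this
  refine connectedComponentIn_eq_of_hasLogOn (hS.union hT) ?_ ?_
    (HasLogOn.union (Or.inl ⟨hS.isClosed, hT.isClosed⟩) hST (key hU hUc hUS hpU hqU)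
      (key hW hWc hWT hpW hqW))
  · rintro (h | h)
    exacts [Set.disjoint_left.1 hUS hpU h, Set.disjoint_left.1 hWT hpW h]
  · rintro (h | h)
    exacts [Set.disjoint_left.1 hUS hqU h, Set.disjoint_left.1 hWT hqW h]

/-- Every nowhere vanishing continuous function on `S` has a continuous logarithm. -/
def LogSimple (S : Set ℂ) : Prop :=
  ∀ f : ℂ → ℂ, ContinuousOn f S → (∀ z ∈ S, f z ≠ 0) → HasLogOn f S

lemma LogSimple.union {S T : Set ℂ} (hS : LogSimple S) (hT : LogSimple T) (hSc : IsClosed S)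
    (hTc : IsClosed T) (h : IsPreconnected (S ∩ T)) : LogSimple (S ∪ T) := fun f hf h0 =>
  HasLogOn.union (Or.inl ⟨hSc, hTc⟩) h
    (hS f (hf.mono Set.subset_union_left) fun z hz => h0 z (Or.inl hz))
    (hT f (hf.mono Set.subset_union_right) fun z hz => h0 z (Or.inr hz))

lemma LogSimple.connectedComponentIn_eq {S : Set ℂ} (hS : LogSimple S) (hc : IsCompact S) {p q : ℂ}
    (hp : p ∉ S) (hq : q ∉ S) : connectedComponentIn Sᶜ p = connectedComponentIn Sᶜ q := by
  have ne_of : ∀ {x : ℂ}, x ∉ S → ∀ z ∈ S, z - x ≠ 0 := by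
    intro x hx z hz h0
    exact hx (sub_eq_zero.1 h0 ▸ hz)
  exact connectedComponentIn_eq_of_hasLogOn hc hp hq
    (hS _ (ContinuousOn.div (by fun_prop) (by fun_prop) (ne_of hq))
      fun z hz => div_ne_zero (ne_of hp z hz) (ne_of hq z hz))

lemma logSimple_image_Icc {γ : ℝ → ℂ} {u v : ℝ} (huv : u ≤ v) (hγ : ContinuousOn γ (Set.Icc u v))
    (hi : Set.InjOn γ (Set.Icc u v)) : LogSimple (γ '' Set.Icc u v) := by
  intro f hf h0
  have hmem : ∀ t : ℝ, (Set.projIcc u v huv t : ℝ) ∈ Set.Icc u v := fun t =>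
    (Set.projIcc u v huv t).2
  obtain ⟨g, hg, hge⟩ := hasLogOn_univ (f := fun z => f (γ (Set.projIcc u v huv z.re)))
    (hf.comp_continuous (hγ.comp_continuous (continuous_subtype_val.comp
      (continuous_projIcc.comp Complex.continuous_re)) fun z => hmem z.re)
      fun z => Set.mem_image_of_mem _ (hmem z.re))
    fun z => h0 _ (Set.mem_image_of_mem _ (hmem z.re))
  have hemb : Topology.IsClosedEmbedding (fun t : Set.Icc u v => γ t) :=
    Continuous.isClosedEmbedding (continuousOn_iff_continuous_domRestrict.1 hγ)
      fun x y hxy => Subtype.ext (hi x.2 y.2 hxy)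
  refine ⟨fun z => g (Function.invFunOn γ (Set.Icc u v) z : ℝ), ?_, ?_⟩
  · rw [continuousOn_iff_continuous_domRestrict]
    have hr : Set.range (fun t : Set.Icc u v => γ t) = γ '' Set.Icc u v := by
      ext z; simp
    have h2 : Continuous (fun z : γ '' Set.Icc u v =>
        g ((hemb.isEmbedding.toHomeomorph.symm (Homeomorph.setCongr hr.symm z) : Set.Icc u v) : ℝ)) := by
      rw [continuousOn_univ] at hg
      fun_prop
    convert h2 using 2 with z
    simp only [Set.domRestrict]
    congr 2
    obtain ⟨z, t, ht, rfl⟩ := z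
    rw [hi.leftInvOn_invFunOn ht]
    have : (Homeomorph.setCongr hr.symm ⟨γ t, t, ht, rfl⟩) =
        hemb.isEmbedding.toHomeomorph ⟨t, ht⟩ := Subtype.ext rfl
    rw [this, Homeomorph.symm_apply_apply]
  · rintro z ⟨t, ht, rfl⟩
    beta_reduce
    rw [hi.leftInvOn_invFunOn ht]
    have := hge (t : ℂ) (Set.mem_univ _)
    simpa [Set.projIcc_of_mem huv ht] using this

/-- `S` is a simple arc from `a` to `b`. -/
def IsArc (a b : ℂ) (S : Set ℂ) : Prop :=
  ∃ γ : ℝ → ℂ, ContinuousOn γ (Set.Icc 0 1) ∧ Set.InjOn γ (Set.Icc 0 1) ∧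
    γ 0 = a ∧ γ 1 = b ∧ S = γ '' Set.Icc 0 1

namespace IsArc

variable {a b c : ℂ} {S T : Set ℂ}

lemma left_mem (h : IsArc a b S) : a ∈ S := by
  obtain ⟨γ, -, -, h0, h1, rfl⟩ := h
  exact ⟨0, by simp, h0⟩

lemma right_mem (h : IsArc a b S) : b ∈ S := by
  obtain ⟨γ, -, -, h0, h1, rfl⟩ := h
  exact ⟨1, by simp, h1⟩

lemma ne (h : IsArc a b S) : a ≠ b := by
  obtain ⟨γ, -, hi, h0, h1, rfl⟩ := h
  intro hab
  have := hi (by simp : (0 : ℝ) ∈ Set.Icc (0 : ℝ) 1) (by simp : (1 : ℝ) ∈ Set.Icc (0 : ℝ) 1)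
    (h0.trans (hab.trans h1.symm))
  norm_num at this

lemma isCompact (h : IsArc a b S) : IsCompact S := by
  obtain ⟨γ, hc, -, -, -, rfl⟩ := h
  exact isCompact_Icc.image_of_continuousOn hc

lemma isPreconnected (h : IsArc a b S) : IsPreconnected S := by
  obtain ⟨γ, hc, -, -, -, rfl⟩ := h
  exact isPreconnected_Icc.image _ hc

lemma logSimple (h : IsArc a b S) : LogSimple S := by
  obtain ⟨γ, hc, hi, -, -, rfl⟩ := h
  exact logSimple_image_Icc zero_le_one hc hi

lemma trans (h : IsArc a b S) (h' : IsArc b c T) (hST : S ∩ T ⊆ {b}) : IsArc a c (S ∪ T) := by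
  obtain ⟨γ, hc, hi, h0, h1, rfl⟩ := h
  obtain ⟨δ, hc', hi', h0', h1', rfl⟩ := h'
  have m1 : ∀ t ∈ Set.Icc (0 : ℝ) (1 / 2), 2 * t ∈ Set.Icc (0 : ℝ) 1 := by
    rintro t ⟨ht0, ht1⟩
    constructor <;> linarith
  have m2 : ∀ t ∈ Set.Icc (1 / 2 : ℝ) 1, 2 * t - 1 ∈ Set.Icc (0 : ℝ) 1 := by
    rintro t ⟨ht0, ht1⟩
    constructor <;> linarith
  let η : ℝ → ℂ := fun t => if t ≤ 1 / 2 then γ (2 * t) else δ (2 * t - 1)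
  have e1 : ∀ t ∈ Set.Icc (0 : ℝ) (1 / 2), η t = γ (2 * t) := fun t ht => if_pos ht.2
  have e2 : ∀ t ∈ Set.Icc (1 / 2 : ℝ) 1, η t = δ (2 * t - 1) := by
    intro t ht
    rcases eq_or_lt_of_le ht.1 with h | h
    · subst h
      rw [e1 _ (by norm_num)]
      norm_num [h1, h0']
    · exact if_neg (not_le.2 h)
  have hun : Set.Icc (0 : ℝ) 1 = Set.Icc 0 (1 / 2) ∪ Set.Icc (1 / 2) 1 :=
    (Set.Icc_union_Icc_eq_Icc (by norm_num) (by norm_num)).symm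
  have cross : ∀ x ∈ Set.Icc (0 : ℝ) (1 / 2), ∀ y ∈ Set.Icc (1 / 2 : ℝ) 1, η x = η y → x = y := by
    intro x hx y hy hxy
    rw [e1 x hx, e2 y hy] at hxy
    have hb : γ (2 * x) = b := hST ⟨⟨_, m1 x hx, rfl⟩, ⟨_, m2 y hy, hxy.symm⟩⟩
    have hx1 := hi (m1 x hx) (by simp : (1 : ℝ) ∈ Set.Icc (0 : ℝ) 1) (hb.trans h1.symm)
    have hy1 := hi' (m2 y hy) (by simp : (0 : ℝ) ∈ Set.Icc (0 : ℝ) 1)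
      ((hxy.symm.trans hb).trans h0'.symm)
    linarith
  refine ⟨η, ?_, ?_, ?_, ?_, ?_⟩
  · rw [hun]
    refine ContinuousOn.union_of_isClosed ?_ ?_ isClosed_Icc isClosed_Icc
    · exact (hc.comp (by fun_prop) m1).congr e1
    · exact (hc'.comp (by fun_prop) m2).congr e2
  · intro x hx y hy hxy
    rw [hun] at hx hy
    rcases hx with hx | hx <;> rcases hy with hy | hy
    · rw [e1 x hx, e1 y hy] at hxy
      have := hi (m1 x hx) (m1 y hy) hxy
      linarith
    · exact cross x hx y hy hxy
    · exact (cross y hy x hx hxy.symm).symm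
    · rw [e2 x hx, e2 y hy] at hxy
      have := hi' (m2 x hx) (m2 y hy) hxy
      linarith
  · rw [e1 0 (by norm_num)]
    simpa using h0
  · rw [e2 1 (by norm_num)]
    norm_num [h1']
  · have him : η '' Set.Icc 0 1 = η '' Set.Icc 0 (1 / 2) ∪ η '' Set.Icc (1 / 2) 1 := by
      rw [hun, Set.image_union]
    rw [him]
    congr 1
    · ext z
      constructor
      · rintro ⟨t, ht, rfl⟩
        have : t / 2 ∈ Set.Icc (0 : ℝ) (1 / 2) := ⟨by linarith [ht.1], by linarith [ht.2]⟩
        exact ⟨t / 2, this, by rw [e1 _ this]; congr 1; ring⟩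
      · rintro ⟨t, ht, rfl⟩
        exact ⟨2 * t, m1 t ht, (e1 t ht).symm⟩
    · ext z
      constructor
      · rintro ⟨t, ht, rfl⟩
        have : (t + 1) / 2 ∈ Set.Icc (1 / 2 : ℝ) 1 := ⟨by linarith [ht.1], by linarith [ht.2]⟩
        exact ⟨(t + 1) / 2, this, by rw [e2 _ this]; congr 1; ring⟩
      · rintro ⟨t, ht, rfl⟩
        exact ⟨2 * t - 1, m2 t ht, (e2 t ht).symm⟩

lemma diff_eq_image {γ : ℝ → ℂ} (hi : Set.InjOn γ (Set.Icc 0 1)) :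
    γ '' Set.Icc 0 1 \ {γ 0, γ 1} = γ '' Set.Ioo 0 1 := by
  have h0 : (0 : ℝ) ∈ Set.Icc (0 : ℝ) 1 := by simp
  have h1 : (1 : ℝ) ∈ Set.Icc (0 : ℝ) 1 := by simp
  ext z
  constructor
  · rintro ⟨⟨t, ht, rfl⟩, hn⟩
    simp only [Set.mem_insert_iff, Set.mem_singleton_iff, not_or] at hn
    refine ⟨t, ⟨lt_of_le_of_ne ht.1 ?_, lt_of_le_of_ne ht.2 ?_⟩, rfl⟩
    · rintro rfl; exact hn.1 rfl
    · rintro rfl; exact hn.2 rfl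
  · rintro ⟨t, ht, rfl⟩
    refine ⟨⟨t, Set.Ioo_subset_Icc_self ht, rfl⟩, ?_⟩
    rintro (h | h)
    · exact ht.1.ne' (hi (Set.Ioo_subset_Icc_self ht) h0 h)
    · exact ht.2.ne (hi (Set.Ioo_subset_Icc_self ht) h1 h)

lemma isPreconnected_diff (h : IsArc a b S) : IsPreconnected (S \ {a, b}) := by
  obtain ⟨γ, hc, hi, rfl, rfl, rfl⟩ := h
  rw [diff_eq_image hi]
  exact isPreconnected_Ioo.image _ (hc.mono Set.Ioo_subset_Icc_self)

lemma subset_closure_diff (h : IsArc a b S) : S ⊆ closure (S \ {a, b}) := by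
  obtain ⟨γ, hc, hi, rfl, rfl, rfl⟩ := h
  rw [diff_eq_image hi]
  rintro z ⟨t, ht, rfl⟩
  have h1 : t ∈ closure (Set.Ioo (0 : ℝ) 1) := by rw [closure_Ioo (by norm_num)]; exact ht
  exact ((hc t ht).mono Set.Ioo_subset_Icc_self).mem_closure_image h1

lemma nonempty_diff (h : IsArc a b S) : (S \ {a, b}).Nonempty := by
  have := h.subset_closure_diff h.left_mem
  exact closure_nonempty_iff.1 ⟨_, this⟩

/-- Every nonempty relatively open part of an arc contains a nondegenerate subarc; outside of a
smaller one the arc splits into two pieces. -/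
lemma exists_split (h : IsArc a b S) {O : Set ℂ} (hO : IsOpen O) (hne : (S ∩ O).Nonempty) :
    ∃ S₁ S₂ : Set ℂ, LogSimple S₁ ∧ LogSimple S₂ ∧ IsCompact S₁ ∧ IsCompact S₂ ∧ Disjoint S₁ S₂ ∧
      a ∈ S₁ ∧ b ∈ S₂ ∧ S₁ ⊆ S ∧ S₂ ⊆ S ∧ S ⊆ S₁ ∪ S₂ ∪ O ∧
      ((S ∩ O) \ (S₁ ∪ S₂)).Nonempty := by
  obtain ⟨w, hwS, hwO⟩ := hne
  obtain ⟨z, hzO, hz⟩ := mem_closure_iff.1 (h.subset_closure_diff hwS) O hO hwO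
  obtain ⟨γ, hc, hi, rfl, rfl, rfl⟩ := h
  rw [diff_eq_image hi] at hz
  obtain ⟨t, ht, rfl⟩ := hz
  have hev : ∀ᶠ x in nhds t, γ x ∈ O ∧ x ∈ Set.Ioo (0 : ℝ) 1 := by
    have hca : ContinuousAt γ t := hc.continuousAt (Icc_mem_nhds ht.1 ht.2)
    exact (hca.eventually_mem (hO.mem_nhds hzO)).and (Ioo_mem_nhds ht.1 ht.2)
  obtain ⟨ε, hε, hball⟩ := Metric.eventually_nhds_iff.1 hev
  have hin : ∀ x, |x - t| < ε → γ x ∈ O ∧ x ∈ Set.Ioo (0 : ℝ) 1 := fun x hx =>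
    hball (by rwa [Real.dist_eq])
  obtain ⟨hu, hu'⟩ := hin (t - ε / 2) (by rw [abs_lt]; constructor <;> linarith)
  obtain ⟨hv, hv'⟩ := hin (t + ε / 2) (by rw [abs_lt]; constructor <;> linarith)
  have s1 : Set.Icc 0 (t - ε / 2) ⊆ Set.Icc (0 : ℝ) 1 := Set.Icc_subset_Icc_right hu'.2.le
  have s2 : Set.Icc (t + ε / 2) 1 ⊆ Set.Icc (0 : ℝ) 1 := Set.Icc_subset_Icc_left hv'.1.le
  refine ⟨γ '' Set.Icc 0 (t - ε / 2), γ '' Set.Icc (t + ε / 2) 1,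
    logSimple_image_Icc hu'.1.le (hc.mono s1) (hi.mono s1),
    logSimple_image_Icc hv'.2.le (hc.mono s2) (hi.mono s2),
    isCompact_Icc.image_of_continuousOn (hc.mono s1),
    isCompact_Icc.image_of_continuousOn (hc.mono s2), ?_, ⟨0, ⟨le_rfl, hu'.1.le⟩, rfl⟩,
    ⟨1, ⟨hv'.2.le, le_rfl⟩, rfl⟩, Set.image_mono s1, Set.image_mono s2, ?_, ?_⟩
  · rw [Set.disjoint_left]
    rintro _ ⟨x, hx, rfl⟩ ⟨y, hy, hxy⟩
    have := hi (s2 hy) (s1 hx) hxy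
    linarith [hx.2, hy.1]
  · rintro _ ⟨x, hx, rfl⟩
    by_cases h1 : x ≤ t - ε / 2
    · exact Or.inl (Or.inl ⟨x, ⟨hx.1, h1⟩, rfl⟩)
    by_cases h2 : t + ε / 2 ≤ x
    · exact Or.inl (Or.inr ⟨x, ⟨h2, hx.2⟩, rfl⟩)
    · exact Or.inr (hin x (by rw [abs_lt]; constructor <;> linarith)).1
  · refine ⟨γ t, ⟨⟨t, Set.Ioo_subset_Icc_self ht, rfl⟩, hzO⟩, ?_⟩
    rintro (⟨x, hx, hxt⟩ | ⟨x, hx, hxt⟩)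
    · have := hi (s1 hx) (Set.Ioo_subset_Icc_self ht) hxt
      linarith [hx.2]
    · have := hi (s2 hx) (Set.Ioo_subset_Icc_self ht) hxt
      linarith [hx.1]

end IsArc

section Jordan

variable {a b : ℂ} {A B : Set ℂ}

/-- A simple closed curve separates the plane. -/
lemma not_isPreconnected_compl_arcs (hA : IsArc a b A) (hB : IsArc a b B)
    (hAB : A ∩ B ⊆ {a, b}) : ¬ IsPreconnected (A ∪ B)ᶜ := by
  intro hc
  have key : ∀ {S : Set ℂ}, IsArc a b S → HasLogOn (fun z => (z - b) / (z - a)) Sᶜ := by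
    rintro S ⟨γ, hγ, -, rfl, rfl, rfl⟩
    exact hasLogOn_div_of_path hγ fun t ht h => h ⟨t, ht, rfl⟩
  have hlog := HasLogOn.union (Or.inr ⟨hA.isCompact.isClosed.isOpen_compl,
    hB.isCompact.isClosed.isOpen_compl⟩) (by rwa [← Set.compl_union]) (key hA) (key hB)
  have hr : 0 < dist a b / 2 := half_pos (dist_pos.2 hA.ne)
  have hcl : closure (Metric.ball a (dist a b / 2)) ⊆ Metric.closedBall a (dist a b / 2) :=
    Metric.closure_ball_subset_closedBall
  have hb : ∀ z ∈ Metric.closedBall a (dist a b / 2), z ≠ b := by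
    rintro z hz rfl
    rw [Metric.mem_closedBall, _root_.dist_comm] at hz
    linarith
  have := eq_zero_of_hasLogOn_frontier (K := Metric.sphere a (dist a b / 2)) (k := -1)
    (h := fun z => z - b) Metric.isBounded_ball Metric.isOpen_ball Metric.isClosed_sphere
    Metric.frontier_ball_subset_sphere (Metric.mem_ball_self hr) (by fun_prop)
    (fun z hz => sub_ne_zero.2 (hb z (hcl hz))) ?_
  · norm_num at this
  · refine (hlog.mono fun z hz => ?_).congr fun z hz => ?_
    · rw [← Set.compl_inter]
      intro hz'
      rcases hAB hz' with h | h
      · rw [h, Metric.mem_sphere, _root_.dist_self] at hz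
        exact hr.ne hz
      · exact hb z (Metric.sphere_subset_closedBall hz) h
    · rw [zpow_neg_one, div_eq_inv_mul]

/-- Logarithms of `z - p` on the two arcs of a closed curve, compared at the endpoints. -/
lemma exists_logs_arcs (hA : IsArc a b A) (hB : IsArc a b B) {p : ℂ} (hp : p ∉ A ∪ B) :
    ∃ (n : ℤ) (g h : ℂ → ℂ), ContinuousOn g A ∧ ContinuousOn h B ∧
      (∀ z ∈ A, Complex.exp (g z) = z - p) ∧ (∀ z ∈ B, Complex.exp (h z) = z - p) ∧
      g b = h b ∧ g a = h a + n * (2 * Real.pi * Complex.I) := by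
  have hpA : ∀ z ∈ A, z - p ≠ 0 := fun z hz => sub_ne_zero.2 fun h => hp (Or.inl (h ▸ hz))
  have hpB : ∀ z ∈ B, z - p ≠ 0 := fun z hz => sub_ne_zero.2 fun h => hp (Or.inr (h ▸ hz))
  obtain ⟨g, hg, hge⟩ := hA.logSimple (fun z => z - p) (by fun_prop) hpA
  obtain ⟨h, hh, hhe⟩ := hB.logSimple (fun z => z - p) (by fun_prop) hpB
  have hexp : Complex.exp (g b - h b) = 1 := by
    rw [Complex.exp_sub, hge b hA.right_mem, hhe b hB.right_mem, div_self (hpA b hA.right_mem)]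
  have hhe' : ∀ z ∈ B, Complex.exp (h z + (g b - h b)) = z - p := fun z hz => by
    rw [Complex.exp_add, hexp, mul_one, hhe z hz]
  obtain ⟨n, hn⟩ := Complex.exp_eq_exp_iff_exists_int.1
    ((hge a hA.left_mem).trans (hhe' a hB.left_mem).symm)
  exact ⟨n, g, fun z => h z + (g b - h b), hg, by fun_prop, hge, hhe', by ring, hn⟩

/-- The complement of a simple closed curve has at most one bounded component. -/
lemma connectedComponentIn_eq_of_isBounded (hA : IsArc a b A) (hB : IsArc a b B)
    (hAB : A ∩ B ⊆ {a, b}) {p q : ℂ} (hp : p ∉ A ∪ B) (hq : q ∉ A ∪ B)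
    (hpb : Bornology.IsBounded (connectedComponentIn (A ∪ B)ᶜ p))
    (hqb : Bornology.IsBounded (connectedComponentIn (A ∪ B)ᶜ q)) :
    connectedComponentIn (A ∪ B)ᶜ p = connectedComponentIn (A ∪ B)ᶜ q := by
  by_contra hne
  have hcl : IsClosed (A ∪ B) := hA.isCompact.isClosed.union hB.isCompact.isClosed
  have hst : (IsClosed A ∧ IsClosed B) ∨ (IsOpen A ∧ IsOpen B) :=
    Or.inl ⟨hA.isCompact.isClosed, hB.isCompact.isClosed⟩
  obtain ⟨n, g, h, hg, hh, hge, hhe, hb, ha⟩ := exists_logs_arcs hA hB hp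
  obtain ⟨m, g', h', hg', hh', hge', hhe', hb', ha'⟩ := exists_logs_arcs hA hB hq
  have hqcl := notMem_closure_connectedComponentIn hcl hq hne
  have hlog : HasLogOn (fun z => (z - p) ^ m * (z - q) ^ (-n)) (A ∪ B) := by
    refine hasLogOn_union_of_eqOn hst (g := fun z => m * g z + (-n : ℤ) * g' z)
      (h := fun z => m * h z + (-n : ℤ) * h' z) (by fun_prop) (by fun_prop) ?_ ?_ ?_
    · intro z hz
      rcases hAB hz with rfl | rfl
      · simp only [ha, ha']
        push_cast
        ring
      · simp only [hb, hb']
    · intro z hz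
      rw [Complex.exp_add, Complex.exp_int_mul, Complex.exp_int_mul, hge z hz, hge' z hz]
    · intro z hz
      rw [Complex.exp_add, Complex.exp_int_mul, Complex.exp_int_mul, hhe z hz, hhe' z hz]
  have hq0 : ∀ z ∈ closure (connectedComponentIn (A ∪ B)ᶜ p), z - q ≠ 0 := fun z hz =>
    sub_ne_zero.2 fun h => hqcl (h ▸ hz)
  have hm : m = 0 := eq_zero_of_hasLogOn_frontier hpb hcl.isOpen_compl.connectedComponentIn hcl
    (frontier_connectedComponentIn_compl_subset hcl p) (mem_connectedComponentIn hp)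
    (h := fun z => (z - q) ^ (-n))
    (ContinuousOn.zpow₀ (by fun_prop) _ fun z hz => Or.inl (hq0 z hz))
    (fun z hz => zpow_ne_zero _ (hq0 z hz)) hlog
  have hlog' : HasLogOn (fun z => (z - q) ^ (1 : ℤ) * 1) (A ∪ B) := by
    refine hasLogOn_union_of_eqOn hst hg' hh' ?_ ?_ ?_
    · intro z hz
      rcases hAB hz with rfl | rfl
      · rw [ha', hm]
        simp
      · exact hb'
    · intro z hz
      simp [hge' z hz]
    · intro z hz
      simp [hhe' z hz]
  have := eq_zero_of_hasLogOn_frontier hqb hcl.isOpen_compl.connectedComponentIn hcl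
    (frontier_connectedComponentIn_compl_subset hcl q) (mem_connectedComponentIn hq)
    (h := fun _ => 1) continuousOn_const (fun _ _ => one_ne_zero) hlog'
  norm_num at this

lemma IsOpen.disjoint_frontier {X : Type*} [TopologicalSpace X] {U : Set X} (hU : IsOpen U) :
    Disjoint U (frontier U) := by
  rw [hU.frontier_eq]
  exact Set.disjoint_sdiff_right

lemma left_subset_frontier_of_arcs (hA : IsArc a b A) (hB : IsArc a b B)
    (hAB : A ∩ B ⊆ {a, b}) {U : Set ℂ} (hU : IsOpen U) (hUc : IsConnected U)
    (hd : Disjoint U (A ∪ B)) (hf : frontier U ⊆ A ∪ B) : A ⊆ frontier U := by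
  by_contra hn
  obtain ⟨w, hwA, hw⟩ := Set.not_subset.1 hn
  obtain ⟨S, T, hS, hT, hSc, hTc, hST, haS, hbT, hSA, hTA, hcov, v, ⟨hvA, hvf⟩, hv⟩ :=
    hA.exists_split isClosed_frontier.isOpen_compl ⟨w, hwA, hw⟩
  have hSB : B ∩ S = {a} := by
    ext z
    simp only [Set.mem_inter_iff, Set.mem_singleton_iff]
    constructor
    · rintro ⟨h1, h2⟩
      rcases hAB ⟨hSA h2, h1⟩ with h | h
      · exact h
      · rw [Set.mem_singleton_iff] at h
        exact (Set.disjoint_left.1 hST h2 (h ▸ hbT)).elim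
    · rintro rfl
      exact ⟨hB.left_mem, haS⟩
  have hTB : (B ∪ S) ∩ T = {b} := by
    ext z
    simp only [Set.mem_inter_iff, Set.mem_singleton_iff]
    constructor
    · rintro ⟨h1 | h1, h2⟩
      · rcases hAB ⟨hTA h2, h1⟩ with h | h
        · exact (Set.disjoint_left.1 hST haS (h ▸ h2)).elim
        · exact h
      · exact (Set.disjoint_left.1 hST h1 h2).elim
    · rintro rfl
      exact ⟨Or.inl hB.right_mem, hbT⟩
  have hBS := hB.logSimple.union hS hB.isCompact.isClosed hSc.isClosed
    (hSB ▸ isPreconnected_singleton)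
  have hBSc := hB.isCompact.union hSc
  have hD := hBS.union hT hBSc.isClosed hTc.isClosed (hTB ▸ isPreconnected_singleton)
  have hDc := hBSc.union hTc
  have hDs : B ∪ S ∪ T ⊆ A ∪ B := by
    rintro z ((h | h) | h)
    exacts [Or.inr h, Or.inl (hSA h), Or.inl (hTA h)]
  have hfD : frontier U ⊆ B ∪ S ∪ T := by
    intro z hz
    rcases hf hz with h | h
    · rcases hcov h with (h | h) | h
      exacts [Or.inl (Or.inr h), Or.inr h, (h hz).elim]
    · exact Or.inl (Or.inl h)
  obtain ⟨p, hp⟩ := hUc.nonempty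
  have hUeq := connectedComponentIn_compl_eq hU hUc.isPreconnected (hd.mono_right hDs) hfD hp
  have hvD : v ∉ B ∪ S ∪ T := by
    rintro ((h | h) | h)
    · rcases hAB ⟨hvA, h⟩ with rfl | rfl
      exacts [hv (Or.inl haS), hv (Or.inr hbT)]
    exacts [hv (Or.inl h), hv (Or.inr h)]
  have hpD : p ∉ B ∪ S ∪ T := Set.disjoint_left.1 (hd.mono_right hDs) hp
  have : v ∈ U := by
    rw [← hUeq, hD.connectedComponentIn_eq hDc hpD hvD]
    exact mem_connectedComponentIn hvD
  exact Set.disjoint_left.1 hd this (Or.inl hvA)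

/-- Every component of the complement of a simple closed curve has the curve as its frontier. -/
lemma frontier_eq_of_arcs (hA : IsArc a b A) (hB : IsArc a b B)
    (hAB : A ∩ B ⊆ {a, b}) {U : Set ℂ} (hU : IsOpen U) (hUc : IsConnected U)
    (hd : Disjoint U (A ∪ B)) (hf : frontier U ⊆ A ∪ B) : frontier U = A ∪ B := by
  refine hf.antisymm (Set.union_subset (left_subset_frontier_of_arcs hA hB hAB hU hUc hd hf) ?_)
  rw [Set.union_comm] at hd hf
  rw [Set.inter_comm] at hAB
  exact left_subset_frontier_of_arcs hB hA hAB hU hUc hd hf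

/-- A plane region: open, connected, with frontier `D`. -/
structure IsRegion (R D : Set ℂ) : Prop where
  isOpen : IsOpen R
  isConnected : IsConnected R
  frontier_eq : frontier R = D

lemma IsRegion.disjoint {R D : Set ℂ} (h : IsRegion R D) : Disjoint R D :=
  h.frontier_eq ▸ h.isOpen.disjoint_frontier

lemma IsRegion.connectedComponentIn_eq {R D D' : Set ℂ} (h : IsRegion R D) (hd : Disjoint R D')
    (hD : D ⊆ D') {z : ℂ} (hz : z ∈ R) : connectedComponentIn D'ᶜ z = R :=
  connectedComponentIn_compl_eq h.isOpen h.isConnected.isPreconnected hd (h.frontier_eq ▸ hD) hz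

lemma IsRegion.subset_of_isPreconnected {R D C : Set ℂ} (h : IsRegion R D) (hC : IsPreconnected C)
    (hd : Disjoint C D) (hne : (C ∩ R).Nonempty) : C ⊆ R :=
  hC.subset_of_disjoint_frontier h.isOpen (h.frontier_eq ▸ hd) hne

lemma isRegion_connectedComponentIn_arcs (hA : IsArc a b A) (hB : IsArc a b B)
    (hAB : A ∩ B ⊆ {a, b}) {p : ℂ} (hp : p ∉ A ∪ B) :
    IsRegion (connectedComponentIn (A ∪ B)ᶜ p) (A ∪ B) := by
  have hcl : IsClosed (A ∪ B) := hA.isCompact.isClosed.union hB.isCompact.isClosed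
  have ho := hcl.isOpen_compl.connectedComponentIn (x := p)
  have hc : IsConnected (connectedComponentIn (A ∪ B)ᶜ p) :=
    isConnected_connectedComponentIn_iff.2 hp
  exact ⟨ho, hc, frontier_eq_of_arcs hA hB hAB ho hc
    (Set.disjoint_left.2 fun z hz => connectedComponentIn_subset _ _ hz)
    (frontier_connectedComponentIn_compl_subset hcl p)⟩

/-- The Jordan curve theorem: a region bounded by a simple closed curve has a complementary
region. -/
lemma IsRegion.exists_compl (hA : IsArc a b A) (hB : IsArc a b B) (hAB : A ∩ B ⊆ {a, b})
    {R : Set ℂ} (hR : IsRegion R (A ∪ B)) :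
    ∃ R' : Set ℂ, IsRegion R' (A ∪ B) ∧ Disjoint R R' ∧ R ∪ R' = (A ∪ B)ᶜ := by
  have hbd : Bornology.IsBounded (A ∪ B) := (hA.isCompact.union hB.isCompact).isBounded
  obtain ⟨p, hp⟩ := hR.isConnected.nonempty
  have hpD : p ∉ A ∪ B := Set.disjoint_left.1 hR.disjoint hp
  have hRp := hR.connectedComponentIn_eq hR.disjoint subset_rfl hp
  have hex : ∃ q, q ∉ A ∪ B ∧ q ∉ R := by
    by_contra! h
    refine not_isPreconnected_compl_arcs hA hB hAB ?_
    rw [show (A ∪ B)ᶜ = R from Set.Subset.antisymm (fun q hq => h q hq)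
      (Set.disjoint_left.1 hR.disjoint)]
    exact hR.isConnected.isPreconnected
  obtain ⟨q, hqD, hqR⟩ := hex
  have hne : ∀ {x y : ℂ}, x ∈ connectedComponentIn (A ∪ B)ᶜ y →
      connectedComponentIn (A ∪ B)ᶜ x = connectedComponentIn (A ∪ B)ᶜ y :=
    fun h => (_root_.connectedComponentIn_eq h).symm
  have hpq : connectedComponentIn (A ∪ B)ᶜ p ≠ connectedComponentIn (A ∪ B)ᶜ q := fun h =>
    hqR (by rw [← hRp, h]; exact mem_connectedComponentIn hqD)
  refine ⟨_, isRegion_connectedComponentIn_arcs hA hB hAB hqD, ?_, ?_⟩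
  · rw [Set.disjoint_left]
    intro z hz hz'
    rw [← hRp] at hz
    exact hpq ((hne hz).symm.trans (hne hz'))
  · refine Set.Subset.antisymm (Set.union_subset (Set.disjoint_left.1 hR.disjoint)
      (connectedComponentIn_subset _ _)) fun z hz => ?_
    by_contra hn
    simp only [Set.mem_union, not_or] at hn
    have hzm := mem_connectedComponentIn (F := (A ∪ B)ᶜ) hz
    have h1 : connectedComponentIn (A ∪ B)ᶜ z ≠ connectedComponentIn (A ∪ B)ᶜ p := fun h =>
      hn.1 (by rw [← hRp, ← h]; exact hzm)
    have h2 : connectedComponentIn (A ∪ B)ᶜ z ≠ connectedComponentIn (A ∪ B)ᶜ q := fun h =>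
      hn.2 (by rw [← h]; exact hzm)
    have hub := fun x y => connectedComponentIn_eq_of_not_isBounded hbd (p := x) (q := y)
    have hb := fun x hx y hy =>
      connectedComponentIn_eq_of_isBounded hA hB hAB (p := x) (q := y) hx hy
    have := hub z p
    have := hub z q
    have := hub p q
    have := hb z hz p hpD
    have := hb z hz q hqD
    have := hb p hpD q hqD
    tauto

end Jordan

section Crosscut

variable {a b : ℂ} {A B P R : Set ℂ}

lemma exists_isRegion_disjoint_arc (hA : IsArc a b A) (hB : IsArc a b B) (hP : IsArc a b P)
    (hAP : A ∩ P ⊆ {a, b}) (hB' : B ∩ (A ∪ P) ⊆ {a, b}) :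
    ∃ G : Set ℂ, IsRegion G (A ∪ P) ∧ Disjoint G B := by
  obtain ⟨z, hz⟩ := hB.nonempty_diff
  have hd : Disjoint (B \ {a, b}) (A ∪ P) :=
    Set.disjoint_left.2 fun w hw hw' => hw.2 (hB' ⟨hw.1, hw'⟩)
  have hzm : z ∉ A ∪ P := Set.disjoint_left.1 hd hz
  have hC := isRegion_connectedComponentIn_arcs hA hP hAP hzm
  obtain ⟨G, hG, hdG, -⟩ := hC.exists_compl hA hP hAP
  refine ⟨G, hG, Set.disjoint_left.2 fun w hw hwB => ?_⟩
  by_cases hw' : w ∈ ({a, b} : Set ℂ)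
  · refine Set.disjoint_left.1 hG.disjoint hw (Or.inl ?_)
    rcases hw' with rfl | rfl
    exacts [hA.left_mem, hA.right_mem]
  · exact Set.disjoint_left.1 hdG
      (hC.subset_of_isPreconnected hB.isPreconnected_diff hd
        ⟨z, hz, mem_connectedComponentIn hzm⟩ ⟨hwB, hw'⟩) hw

lemma IsRegion.subset_of_crosscut {G : Set ℂ} (hR : IsRegion R (A ∪ B)) (hG : IsRegion G (A ∪ P))
    (hGB : Disjoint G B) (hP : IsArc a b P) (hPR : P \ {a, b} ⊆ R) : G ⊆ R := by
  refine hR.subset_of_isPreconnected hG.isConnected.isPreconnected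
    (Set.disjoint_union_right.2 ⟨hG.disjoint.mono_right Set.subset_union_left, hGB⟩) ?_
  obtain ⟨z, hz⟩ := hP.nonempty_diff
  have hzG : z ∈ closure G := frontier_subset_closure (by rw [hG.frontier_eq]; exact Or.inr hz.1)
  rw [Set.inter_comm]
  exact mem_closure_iff.1 hzG R hR.isOpen (hPR hz)

/-- A crosscut of a Jordan region divides it into two Jordan regions. -/
lemma IsRegion.exists_crosscut (hA : IsArc a b A) (hB : IsArc a b B) (hP : IsArc a b P)
    (hAB : A ∩ B ⊆ {a, b}) (hR : IsRegion R (A ∪ B)) (hPR : P \ {a, b} ⊆ R) :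
    ∃ G H : Set ℂ, IsRegion G (A ∪ P) ∧ IsRegion H (B ∪ P) ∧ Disjoint G H ∧ R \ P = G ∪ H := by
  have hdR := Set.disjoint_left.1 hR.disjoint
  have hAP : A ∩ P ⊆ {a, b} := fun z hz => by
    by_contra h
    exact hdR (hPR ⟨hz.2, h⟩) (Or.inl hz.1)
  have hBP : B ∩ P ⊆ {a, b} := fun z hz => by
    by_contra h
    exact hdR (hPR ⟨hz.2, h⟩) (Or.inr hz.1)
  have hBAP : B ∩ (A ∪ P) ⊆ {a, b} := by
    rintro z ⟨hz, hz' | hz'⟩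
    exacts [hAB ⟨hz', hz⟩, hBP ⟨hz, hz'⟩]
  have hABP : A ∩ (B ∪ P) ⊆ {a, b} := by
    rintro z ⟨hz, hz' | hz'⟩
    exacts [hAB ⟨hz, hz'⟩, hAP ⟨hz, hz'⟩]
  obtain ⟨G, hG, hGB⟩ := exists_isRegion_disjoint_arc hA hB hP hAP hBAP
  obtain ⟨H, hH, hHA⟩ := exists_isRegion_disjoint_arc hB hA hP hBP hABP
  have hGR : G ⊆ R := hR.subset_of_crosscut hG hGB hP hPR
  have hHR : H ⊆ R := IsRegion.subset_of_crosscut (by rwa [Set.union_comm]) hH hHA hP hPR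
  have hST : A ∪ B ∪ (B ∪ P) = A ∪ B ∪ P := by
    rw [← Set.union_assoc, Set.union_assoc A B B, Set.union_self]
  have hGd : Disjoint G (A ∪ B ∪ P) := by
    rw [Set.disjoint_left]
    rintro z hz ((h | h) | h)
    exacts [Set.disjoint_left.1 hG.disjoint hz (Or.inl h), Set.disjoint_left.1 hGB hz h,
      Set.disjoint_left.1 hG.disjoint hz (Or.inr h)]
  have hHd : Disjoint H (A ∪ B ∪ P) := by
    rw [Set.disjoint_left]
    rintro z hz ((h | h) | h)
    exacts [Set.disjoint_left.1 hHA hz h, Set.disjoint_left.1 hH.disjoint hz (Or.inl h),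
      Set.disjoint_left.1 hH.disjoint hz (Or.inr h)]
  have hGc : ∀ {z}, z ∈ G → connectedComponentIn (A ∪ B ∪ P)ᶜ z = G :=
    hG.connectedComponentIn_eq hGd (by grind)
  have hHc : ∀ {z}, z ∈ H → connectedComponentIn (A ∪ B ∪ P)ᶜ z = H :=
    hH.connectedComponentIn_eq hHd (by grind)
  have hGH : Disjoint G H := by
    rw [Set.disjoint_left]
    intro z hz hz'
    have hGH : G = H := (hGc hz).symm.trans (hHc hz')
    obtain ⟨w, hw⟩ := hA.nonempty_diff
    have : w ∈ B ∪ P := by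
      rw [← hH.frontier_eq, ← hGH, hG.frontier_eq]
      exact Or.inl hw.1
    exact hw.2 (hABP ⟨hw.1, this⟩)
  refine ⟨G, H, hG, hH, hGH, Set.Subset.antisymm (fun z hz => ?_) (Set.union_subset
    (fun z hz => ⟨hGR hz, fun h => Set.disjoint_left.1 hG.disjoint hz (Or.inr h)⟩)
    fun z hz => ⟨hHR hz, fun h => Set.disjoint_left.1 hH.disjoint hz (Or.inr h)⟩)⟩
  by_cases hzH : z ∈ H
  · exact Or.inr hzH
  left
  obtain ⟨W, hW, -, hHW⟩ := hH.exists_compl hB hP hBP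
  obtain ⟨q, hq⟩ := hG.isConnected.nonempty
  have hmem : ∀ {w}, w ∉ H → w ∉ B ∪ P → w ∈ W := fun h h' =>
    ((hHW.symm ▸ h' : _ ∈ H ∪ W)).resolve_left h
  have hzD : z ∉ A ∪ B ∪ P := fun h => h.elim (hdR hz.1) hz.2
  have hqW : q ∈ W := hmem (Set.disjoint_left.1 hGH hq)
    fun h => Set.disjoint_left.1 hGd hq (by grind)
  have hzW : z ∈ W := hmem hzH fun h => hzD (by grind)
  have hABP : (A ∪ B) ∩ (B ∪ P) = B := by
    ext w
    constructor
    · rintro ⟨h1 | h1, h2⟩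
      · rcases hABP ⟨h1, h2⟩ with rfl | rfl
        exacts [hB.left_mem, hB.right_mem]
      · exact h1
    · exact fun h => ⟨Or.inr h, Or.inl h⟩
  have := connectedComponentIn_union_eq (hA.isCompact.union hB.isCompact)
    (hB.isCompact.union hP.isCompact) (by rw [hABP]; exact hB.isPreconnected) hR.isOpen
    hR.isConnected.isPreconnected hR.disjoint hW.isOpen hW.isConnected.isPreconnected hW.disjoint
    hz.1 (hGR hq) hzW hqW
  rw [hST, hGc hq] at this
  rw [← this]
  exact mem_connectedComponentIn hzD

end Crosscut

lemma IsArc.isPreconnected_diff_right {a b : ℂ} {S : Set ℂ} (h : IsArc a b S) :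
    IsPreconnected (S \ {b}) :=
  h.isPreconnected_diff.subset_closure (Set.sdiff_subset_sdiff_right (by simp))
    (Set.sdiff_subset.trans h.subset_closure_diff)

namespace PlaneEmbedding

variable {G : SimpleGraph V} (E : PlaneEmbedding G)

lemma isArc {u v : V} (h : G.Adj u v) : IsArc (E.vtx u) (E.vtx v) (E.arc u v) := E.arc_curve h

lemma mem_triBoundary {t : Finset V} {z : ℂ} :
    z ∈ E.triBoundary t ↔ ∃ u ∈ t, ∃ v ∈ t, G.Adj u v ∧ z ∈ E.arc u v := by
  simp only [triBoundary, Set.mem_iUnion, exists_prop]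

lemma arc_subset_triBoundary {t : Finset V} {u v : V} (hu : u ∈ t) (hv : v ∈ t)
    (h : G.Adj u v) : E.arc u v ⊆ E.triBoundary t :=
  fun _ hz => E.mem_triBoundary.2 ⟨u, hu, v, hv, h, hz⟩

lemma vtx_mem_triBoundary {t : Finset V} (ht : G.IsNClique 3 t) {v : V} :
    E.vtx v ∈ E.triBoundary t ↔ v ∈ t := by
  constructor
  · intro h
    obtain ⟨u, hu, w, hw, huw, hz⟩ := E.mem_triBoundary.1 h
    rcases E.arc_vtx huw v hz with rfl | rfl
    exacts [hu, hw]
  · intro hv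
    obtain ⟨w, hw, hne⟩ := Finset.exists_mem_ne (by rw [ht.card_eq]; norm_num) v
    have hadj : G.Adj v w := ht.isClique hv hw hne.symm
    exact E.arc_subset_triBoundary hv hw hadj (E.isArc hadj).left_mem

lemma arc_inter_triBoundary_subset {t : Finset V} {u v : V} (h : G.Adj u v)
    (hn : ¬ (u ∈ t ∧ v ∈ t)) : E.arc u v ∩ E.triBoundary t ⊆ {E.vtx u, E.vtx v} := by
  rintro z ⟨hz, hz'⟩
  obtain ⟨x, hx, y, hy, hxy, hz'⟩ := E.mem_triBoundary.1 hz'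
  refine (E.arc_inter h hxy (fun he => hn ?_) ⟨hz, hz'⟩).1
  rcases Sym2.eq_iff.1 he with ⟨rfl, rfl⟩ | ⟨rfl, rfl⟩
  exacts [⟨hx, hy⟩, ⟨hy, hx⟩]

/-- `R` is a plane region bounded by the drawing of the triangle `t`. -/
structure IsTriRegion (R : Set ℂ) (t : Finset V) : Prop where
  isNClique : G.IsNClique 3 t
  isRegion : IsRegion R (E.triBoundary t)

variable {E} {R : Set ℂ} {t : Finset V}

lemma IsTriRegion.notMem (h : E.IsTriRegion R t) {v : V} (hv : E.vtx v ∈ R) : v ∉ t := fun hvt =>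
  Set.disjoint_left.1 h.isRegion.disjoint hv ((E.vtx_mem_triBoundary h.isNClique).2 hvt)

lemma IsTriRegion.arc_diff_subset (h : E.IsTriRegion R t) {x v : V} (hx : E.vtx x ∈ R)
    (hxv : G.Adj x v) : E.arc x v \ {E.vtx v} ⊆ R := by
  refine h.isRegion.subset_of_isPreconnected (E.isArc hxv).isPreconnected_diff_right
    (Set.disjoint_left.2 fun z hz hz' => ?_)
    ⟨E.vtx x, ⟨(E.isArc hxv).left_mem, (E.isArc hxv).ne⟩, hx⟩
  rcases E.arc_inter_triBoundary_subset hxv (fun h' => h.notMem hx h'.1) ⟨hz.1, hz'⟩ with rfl | h'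
  · exact Set.disjoint_left.1 h.isRegion.disjoint hx hz'
  · exact hz.2 h'

/-- Edges leave a triangular region only through the vertices of its triangle. -/
lemma IsTriRegion.mem_or_mem_of_adj (h : E.IsTriRegion R t) {x v : V} (hx : E.vtx x ∈ R)
    (hxv : G.Adj x v) : E.vtx v ∈ R ∨ v ∈ t := by
  by_contra! hn
  have hcl : E.vtx v ∈ closure R := closure_mono (h.arc_diff_subset hx hxv) <|
    closure_mono (Set.sdiff_subset_sdiff_right (by simp))
      ((E.isArc hxv).subset_closure_diff (E.isArc hxv).right_mem)
  have hf : E.vtx v ∈ frontier R := by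
    rw [h.isRegion.isOpen.frontier_eq]
    exact ⟨hcl, hn.1⟩
  rw [h.isRegion.frontier_eq, E.vtx_mem_triBoundary h.isNClique] at hf
  exact hn.2 hf

/-- A triangular region without vertices avoids the drawing. -/
lemma IsTriRegion.disjoint_drawing (h : E.IsTriRegion R t) (hv : ∀ v, E.vtx v ∉ R) :
    Disjoint R E.drawing := by
  rw [Set.disjoint_left]
  rintro z hz (⟨v, rfl⟩ | hz')
  · exact hv v hz
  simp only [Set.mem_iUnion] at hz'
  obtain ⟨u, v, huv, hz'⟩ := hz'
  by_cases hn : u ∈ t ∧ v ∈ t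
  · exact Set.disjoint_left.1 h.isRegion.disjoint hz (E.arc_subset_triBoundary hn.1 hn.2 huv hz')
  have ha := E.isArc huv
  have hsub : E.arc u v \ {E.vtx u, E.vtx v} ⊆ R := by
    refine h.isRegion.subset_of_isPreconnected ha.isPreconnected_diff
      (Set.disjoint_left.2 fun w hw hw' => hw.2 (E.arc_inter_triBoundary_subset huv hn ⟨hw.1, hw'⟩))
      ⟨z, ⟨hz', ?_⟩, hz⟩
    rintro (rfl | rfl)
    exacts [hv u hz, hv v hz]
  have hmem : ∀ w, E.vtx w ∈ E.arc u v → w ∈ t := fun w hw => by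
    rw [← E.vtx_mem_triBoundary h.isNClique, ← h.isRegion.frontier_eq,
      h.isRegion.isOpen.frontier_eq]
    exact ⟨closure_mono hsub (ha.subset_closure_diff hw), hv w⟩
  exact hn ⟨hmem u ha.left_mem, hmem v ha.right_mem⟩

lemma triBoundary_subset_drawing : E.triBoundary t ⊆ E.drawing := by
  intro z hz
  obtain ⟨u, -, v, -, huv, hz⟩ := E.mem_triBoundary.1 hz
  exact Or.inr (Set.mem_iUnion.2 ⟨u, Set.mem_iUnion.2 ⟨v, Set.mem_iUnion.2 ⟨huv, hz⟩⟩⟩)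

lemma triBoundary_injOn {s : Finset V} (hs : G.IsNClique 3 s) (ht : G.IsNClique 3 t)
    (h : E.triBoundary s = E.triBoundary t) : s = t := by
  ext v
  rw [← E.vtx_mem_triBoundary hs, h, E.vtx_mem_triBoundary ht]

lemma IsTriRegion.isFace (h : E.IsTriRegion R t) (hv : ∀ v, E.vtx v ∉ R) : E.IsFace R := by
  obtain ⟨z, hz⟩ := h.isRegion.isConnected.nonempty
  have hd := h.disjoint_drawing hv
  exact ⟨z, Set.disjoint_left.1 hd hz,
    (h.isRegion.connectedComponentIn_eq hd triBoundary_subset_drawing hz).symm⟩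

lemma IsTriRegion.isFacialTriangle (h : E.IsTriRegion R t) (hv : ∀ v, E.vtx v ∉ R) :
    E.IsFacialTriangle t :=
  ⟨h.isNClique, R, h.isFace hv, h.isRegion.frontier_eq⟩

lemma triBoundary_triple [DecidableEq V] {p q r : V} (hpq : G.Adj p q) (hqr : G.Adj q r)
    (hpr : G.Adj p r) :
    E.triBoundary {p, q, r} = E.arc p q ∪ E.arc q r ∪ E.arc p r := by
  refine Set.Subset.antisymm (fun z hz => ?_) (Set.union_subset (Set.union_subset ?_ ?_) ?_)
  · obtain ⟨u, hu, v, hv, huv, hz⟩ := E.mem_triBoundary.1 hz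
    simp only [Finset.mem_insert, Finset.mem_singleton] at hu hv
    have := E.arc_symm u v
    rcases hu with rfl | rfl | rfl <;> rcases hv with rfl | rfl | rfl <;>
      first | exact (huv.ne rfl).elim | grind
  · exact E.arc_subset_triBoundary (by simp) (by simp) hpq
  · exact E.arc_subset_triBoundary (by simp) (by simp) hqr
  · exact E.arc_subset_triBoundary (by simp) (by simp) hpr

lemma arc_inter_arc_subset {u v w : V} (huv : G.Adj u v) (hvw : G.Adj v w) (hne : u ≠ w) :
    E.arc u v ∩ E.arc v w ⊆ {E.vtx v} := by
  intro z hz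
  have h := E.arc_inter huv hvw (by
    rw [Ne, Sym2.eq_iff]
    rintro (⟨h, -⟩ | ⟨h, -⟩)
    exacts [huv.ne h, hne h]) hz
  have h1 := E.vtx_inj.ne huv.ne
  have h2 := E.vtx_inj.ne hvw.ne
  have h3 := E.vtx_inj.ne hne
  grind

lemma arc_inter_arc_eq_empty {u v w x : V} (huv : G.Adj u v) (hwx : G.Adj w x)
    (h1 : u ≠ w) (h2 : u ≠ x) (h3 : v ≠ w) (h4 : v ≠ x) : E.arc u v ∩ E.arc w x = ∅ := by
  rw [Set.eq_empty_iff_forall_notMem]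
  intro z hz
  have h := E.arc_inter huv hwx (by
    rw [Ne, Sym2.eq_iff]
    rintro (⟨h, -⟩ | ⟨h, -⟩)
    exacts [h1 h, h2 h]) hz
  have := E.vtx_inj.ne h1
  have := E.vtx_inj.ne h2
  have := E.vtx_inj.ne h3
  have := E.vtx_inj.ne h4
  grind

lemma isArc_two_sides [DecidableEq V] {p q r : V} (hpq : G.Adj p q) (hpr : G.Adj p r)
    (hqr : G.Adj q r) : IsArc (E.vtx p) (E.vtx q) (E.arc p r ∪ E.arc r q) ∧
      E.arc p q ∩ (E.arc p r ∪ E.arc r q) ⊆ {E.vtx p, E.vtx q} ∧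
      E.triBoundary {p, q, r} = E.arc p q ∪ (E.arc p r ∪ E.arc r q) := by
  have hB : IsArc (E.vtx p) (E.vtx q) (E.arc p r ∪ E.arc r q) :=
    (E.isArc hpr).trans (E.isArc hqr.symm) (arc_inter_arc_subset hpr hqr.symm hpq.ne)
  have hAB : E.arc p q ∩ (E.arc p r ∪ E.arc r q) ⊆ {E.vtx p, E.vtx q} := by
    have h1 := arc_inter_arc_subset (E := E) hpq.symm hpr hqr.ne
    have h2 := arc_inter_arc_subset (E := E) hpq hqr hpr.ne
    rw [E.arc_symm q p] at h1
    rw [E.arc_symm q r] at h2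
    rintro z ⟨hz, hz' | hz'⟩
    exacts [Or.inl (h1 ⟨hz, hz'⟩), Or.inr (h2 ⟨hz, hz'⟩)]
  have hb : E.triBoundary {p, q, r} = E.arc p q ∪ (E.arc p r ∪ E.arc r q) := by
    rw [triBoundary_triple hpq hqr hpr, E.arc_symm q r, Set.union_assoc,
      Set.union_comm (E.arc r q)]
  exact ⟨hB, hAB, hb⟩

/-- A vertex inside a triangular region, adjacent to all corners, divides it into three triangular
regions. -/
lemma IsTriRegion.exists_split [DecidableEq V] {p q r x : V} (h : E.IsTriRegion R {p, q, r})
    (hx : E.vtx x ∈ R) (hp : G.Adj x p) (hq : G.Adj x q) (hr : G.Adj x r) :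
    ∃ R₁ R₂ R₃ : Set ℂ, E.IsTriRegion R₁ {x, p, q} ∧ E.IsTriRegion R₂ {x, q, r} ∧
      E.IsTriRegion R₃ {x, r, p} ∧ Disjoint R₁ R₂ ∧ Disjoint R₂ R₃ ∧ Disjoint R₁ R₃ ∧
      R \ (E.arc x p ∪ E.arc x q ∪ E.arc x r) = R₁ ∪ R₂ ∪ R₃ := by
  obtain ⟨hpq, hpr, hqr⟩ := is3Clique_triple_iff.1 h.isNClique
  have hRd := Set.disjoint_left.1 h.isRegion.disjoint
  have hA := E.isArc hpq
  obtain ⟨hB, hAB, hb⟩ := isArc_two_sides (E := E) hpq hpr hqr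
  have hP : IsArc (E.vtx p) (E.vtx q) (E.arc p x ∪ E.arc x q) :=
    (E.isArc hp.symm).trans (E.isArc hq) (arc_inter_arc_subset hp.symm hq hpq.ne)
  have hpxr := arc_inter_arc_subset (E := E) hp.symm hr hpr.ne
  have hqxr := arc_inter_arc_subset (E := E) hq.symm hr hqr.ne
  have sp := h.arc_diff_subset hx hp
  have sq := h.arc_diff_subset hx hq
  have sr := h.arc_diff_subset hx hr
  have hPR : (E.arc p x ∪ E.arc x q) \ {E.vtx p, E.vtx q} ⊆ R := by
    rw [E.arc_symm p x]
    rintro z ⟨hz | hz, hz'⟩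
    exacts [sp ⟨hz, fun h => hz' (Or.inl h)⟩, sq ⟨hz, fun h => hz' (Or.inr h)⟩]
  obtain ⟨G₁, H, hG₁, hH, hGH, hun⟩ := IsRegion.exists_crosscut hA hB hP hAB (hb ▸ h.isRegion) hPR
  have hA' : IsArc (E.vtx x) (E.vtx r) (E.arc x p ∪ E.arc p r) :=
    (E.isArc hp).trans (E.isArc hpr) (arc_inter_arc_subset hp hpr hr.ne)
  have hB' : IsArc (E.vtx x) (E.vtx r) (E.arc x q ∪ E.arc q r) :=
    (E.isArc hq).trans (E.isArc hqr) (arc_inter_arc_subset hq hqr hr.ne)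
  have hrR : E.vtx r ∉ R := fun h' => h.notMem h' (by simp)
  have hP' : E.arc x r \ {E.vtx x, E.vtx r} ⊆ G₁ ∪ H := by
    rw [← hun, E.arc_symm p x]
    rw [E.arc_symm p x] at hpxr
    rw [E.arc_symm q x] at hqxr
    rintro z ⟨hz, hz'⟩
    refine ⟨sr ⟨hz, fun h => hz' (Or.inr h)⟩, ?_⟩
    rintro (h | h)
    exacts [hz' (Or.inl (hpxr ⟨h, hz⟩)), hz' (Or.inl (hqxr ⟨h, hz⟩))]
  have hrG : E.vtx r ∉ closure G₁ := by
    intro hcl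
    have : E.vtx r ∈ E.arc p q ∪ (E.arc p x ∪ E.arc x q) := by
      rw [← hG₁.frontier_eq, hG₁.isOpen.frontier_eq]
      refine ⟨hcl, fun h' => hrR ?_⟩
      have : E.vtx r ∈ R \ (E.arc p x ∪ E.arc x q) := hun ▸ Or.inl h'
      exact this.1
    rcases this with h' | h' | h'
    · rcases E.arc_vtx hpq r h' with h' | h'
      exacts [hpr.ne h'.symm, hqr.ne h'.symm]
    · rcases E.arc_vtx hp.symm r h' with h' | h'
      exacts [hpr.ne h'.symm, hr.ne h'.symm]
    · rcases E.arc_vtx hq r h' with h' | h'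
      exacts [hr.ne h'.symm, hqr.ne h'.symm]
  have hPH : E.arc x r \ {E.vtx x, E.vtx r} ⊆ H := by
    have ha := E.isArc hr
    by_contra hn
    obtain ⟨z, hz, hzH⟩ := Set.not_subset.1 hn
    have hzG : z ∈ G₁ := (hP' hz).resolve_right hzH
    have hsub : E.arc x r \ {E.vtx x, E.vtx r} ⊆ G₁ :=
      ha.isPreconnected_diff.subset_left_of_subset_union hG₁.isOpen hH.isOpen hGH hP' ⟨z, hz, hzG⟩
    exact hrG (closure_mono hsub (ha.subset_closure_diff ha.right_mem))
  have hAB' : (E.arc x p ∪ E.arc p r) ∩ (E.arc x q ∪ E.arc q r) ⊆ {E.vtx x, E.vtx r} := by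
    have h1 := arc_inter_arc_subset (E := E) hp.symm hq hpq.ne
    have h2 := arc_inter_arc_eq_empty (E := E) hp hqr hq.ne hr.ne hpq.ne hpr.ne
    have h3 := arc_inter_arc_eq_empty (E := E) hpr hq hp.ne' hpq.ne hr.ne' hqr.ne'
    have h4 := arc_inter_arc_subset (E := E) hpr hqr.symm hpq.ne
    rw [E.arc_symm p x] at h1
    rw [E.arc_symm r q] at h4
    rintro z ⟨hz | hz, hz' | hz'⟩
    · exact Or.inl (h1 ⟨hz, hz'⟩)
    · exact (h2.subset ⟨hz, hz'⟩).elim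
    · exact (h3.subset ⟨hz, hz'⟩).elim
    · exact Or.inr (h4 ⟨hz, hz'⟩)
  have hbH : E.arc p r ∪ E.arc r q ∪ (E.arc p x ∪ E.arc x q) =
      E.arc x p ∪ E.arc p r ∪ (E.arc x q ∪ E.arc q r) := by
    rw [E.arc_symm p x, E.arc_symm r q]
    ext z
    simp only [Set.mem_union]
    tauto
  obtain ⟨G₃, G₂, hG₃, hG₂, hG₃₂, hun'⟩ :=
    IsRegion.exists_crosscut hA' hB' (E.isArc hr) hAB' (hbH ▸ hH) hPH
  have hG₂H : G₂ ⊆ H := fun z hz => (hun'.symm ▸ Or.inr hz : z ∈ H \ E.arc x r).1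
  have hG₃H : G₃ ⊆ H := fun z hz => (hun'.symm ▸ Or.inl hz : z ∈ H \ E.arc x r).1
  refine ⟨G₁, G₂, G₃, ⟨?_, ?_⟩, ⟨?_, ?_⟩, ⟨?_, ?_⟩, hGH.mono_right hG₂H, hG₃₂.symm,
    hGH.mono_right hG₃H, ?_⟩
  · exact is3Clique_triple_iff.2 ⟨hp, hq, hpq⟩
  · rw [triBoundary_triple hp hpq hq]
    convert hG₁ using 1
    rw [E.arc_symm p x]
    ext z
    simp only [Set.mem_union]
    tauto
  · exact is3Clique_triple_iff.2 ⟨hq, hr, hqr⟩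
  · rwa [triBoundary_triple hq hqr hr]
  · exact is3Clique_triple_iff.2 ⟨hr, hp, hpr.symm⟩
  · rw [triBoundary_triple hr hpr.symm hp]
    convert hG₃ using 1
    rw [E.arc_symm r p]
    ext z
    simp only [Set.mem_union]
    tauto
  · have hGx : ∀ z ∈ G₁, z ∉ E.arc x r := by
      intro z hz hz'
      have hz1 : z ∉ ({E.vtx x, E.vtx r} : Set ℂ) := by
        rintro (rfl | rfl)
        · exact Set.disjoint_left.1 hG₁.disjoint hz (Or.inr (Or.inr (E.isArc hq).left_mem))
        · exact hrG (subset_closure hz)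
      exact Set.disjoint_left.1 hGH hz (hPH ⟨hz', hz1⟩)
    rw [E.arc_symm p x] at hun
    have e1 := Set.ext_iff.1 hun
    have e2 := Set.ext_iff.1 hun'
    ext z
    have := e1 z
    have := e2 z
    have := hGx z
    simp only [Set.mem_union, Set.mem_sdiff] at *
    tauto

end PlaneEmbedding

/-- In a 3-tree, a nonempty vertex set whose neighbours outside it lie in a triangle `t` contains a
vertex adjacent to all of `t`. The vertices are ranked by the construction order `f`. -/
lemma exists_apex_of_rank {G : SimpleGraph V} {f : V → ℕ} (hf : Function.Injective f)
    (hstep : ∀ v, 3 ≤ f v → ∃ s : Finset V, G.IsNClique 3 s ∧ (∀ u ∈ s, f u < f v) ∧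
      ∀ u, f u < f v → (G.Adj v u ↔ u ∈ s)) {k : ℕ} (hk : 3 ≤ k) :
    ∀ (t : Finset V) (X : Set V), G.IsNClique 3 t → (∀ v ∈ t, f v < k) → X.Nonempty →
      (∀ v ∈ X, f v < k) → (∀ v ∈ X, v ∉ t) →
      (∀ x ∈ X, ∀ v, f v < k → G.Adj x v → v ∈ X ∨ v ∈ t) → ∃ x ∈ X, ∀ v ∈ t, G.Adj x v := by
  classical
  induction k, hk using Nat.le_induction with
  | base =>
    rintro t X ht htk ⟨x, hx⟩ hXk hXt -
    have hsub : t.image f ⊆ Finset.range 3 := by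
      intro i hi
      obtain ⟨v, hv, rfl⟩ := Finset.mem_image.1 hi
      exact Finset.mem_range.2 (htk v hv)
    have heq : t.image f = Finset.range 3 := Finset.eq_of_subset_of_card_le hsub (by
      rw [Finset.card_image_of_injective _ hf, ht.card_eq, Finset.card_range])
    have : f x ∈ t.image f := by
      rw [heq]
      exact Finset.mem_range.2 (hXk x hx)
    obtain ⟨v, hv, hvx⟩ := Finset.mem_image.1 this
    exact (hXt x hx (hf hvx ▸ hv)).elim
  | succ k hk ih =>
    intro t X ht htk hX hXk hXt hcl
    by_cases hlast : ∃ v ∈ X ∪ ↑t, f v = k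
    swap
    · push Not at hlast
      have hlt : ∀ v ∈ X ∪ ↑t, f v < k + 1 → f v < k := fun v hv h =>
        lt_of_le_of_ne (Nat.lt_succ_iff.1 h) (hlast v hv)
      exact ih t X ht (fun v hv => hlt v (Or.inr hv) (htk v hv)) hX
        (fun v hv => hlt v (Or.inl hv) (hXk v hv)) hXt
        fun x hx v hv => hcl x hx v (hv.trans (Nat.lt_succ_self k))
    obtain ⟨v, hv, hvk⟩ := hlast
    obtain ⟨s, hs, hsk, hadj⟩ := hstep v (hvk ▸ hk)
    rw [hvk] at hsk hadj
    have hlt : ∀ u, u ≠ v → f u < k + 1 → f u < k := fun u hu h =>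
      lt_of_le_of_ne (Nat.lt_succ_iff.1 h) fun h' => hu (hf (h'.trans hvk.symm))
    have hvs : v ∉ s := fun h => (hsk v h).ne hvk
    by_cases hvt : v ∈ t
    · have hvX : v ∉ X := fun h => hXt v h hvt
      have hts : t.erase v ⊆ s := fun u hu => by
        rw [Finset.mem_erase] at hu
        exact (hadj u (hlt u hu.1 (htk u hu.2))).1 (ht.isClique hvt hu.2 hu.1.symm)
      have hcard : (s \ t.erase v).card = 1 := by
        rw [Finset.card_sdiff_of_subset hts, hs.card_eq, Finset.card_erase_of_mem hvt, ht.card_eq]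
      obtain ⟨w, hw⟩ := Finset.card_eq_one.1 hcard
      have hws : w ∈ s ∧ w ∉ t.erase v := Finset.mem_sdiff.1 (hw ▸ Finset.mem_singleton_self w)
      have hwt : w ∉ t := fun h =>
        hws.2 (Finset.mem_erase.2 ⟨fun h' => hvs (h' ▸ hws.1), h⟩)
      have hs' : ∀ u ∈ s, u ∈ t ∨ u = w := by
        intro u hu
        by_cases h : u ∈ t.erase v
        · exact Or.inl (Finset.mem_of_mem_erase h)
        · exact Or.inr (Finset.mem_singleton.1 (hw ▸ Finset.mem_sdiff.2 ⟨hu, h⟩))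
      by_cases hwX : w ∈ X
      · refine ⟨w, hwX, fun u hu => ?_⟩
        by_cases huv : u = v
        · subst huv
          exact ((hadj w (hsk w hws.1)).2 hws.1).symm
        · exact hs.isClique hws.1 (hts (Finset.mem_erase.2 ⟨huv, hu⟩)) fun h => hwt (h ▸ hu)
      · have hlX : ∀ u ∈ X, f u < k := fun u hu => hlt u (fun h => hvX (h ▸ hu)) (hXk u hu)
        obtain ⟨x, hx, hxs⟩ := ih s X hs hsk hX hlX
          (fun u hu hus => (hs' u hus).elim (hXt u hu) fun h => hwX (h ▸ hu))
          (fun x hx u hu hxu => (hcl x hx u (hu.trans (Nat.lt_succ_self k)) hxu).imp_right fun h =>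
            hts (Finset.mem_erase.2 ⟨fun h' => hu.ne (h' ▸ hvk), h⟩))
        rcases hcl x hx w ((hsk w hws.1).trans (Nat.lt_succ_self k)) (hxs w hws.1) with h | h
        exacts [(hwX h).elim, (hwt h).elim]
    · have hvX : v ∈ X := hv.resolve_right hvt
      have htk' : ∀ u ∈ t, f u < k := fun u hu => hlt u (fun h => hvt (h ▸ hu)) (htk u hu)
      by_cases hX' : (X \ {v}).Nonempty
      · obtain ⟨x, hx, hxt⟩ := ih t (X \ {v}) ht htk' hX' (fun u hu => hlt u hu.2 (hXk u hu.1))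
          (fun u hu => hXt u hu.1)
          (fun x hx u hu hxu => (hcl x hx.1 u (hu.trans (Nat.lt_succ_self k)) hxu).imp_left fun h =>
            ⟨h, fun h' => hu.ne (h' ▸ hvk)⟩)
        exact ⟨x, hx.1, hxt⟩
      · have hX1 : ∀ u ∈ X, u = v := fun u hu => by
          by_contra h
          exact hX' ⟨u, hu, h⟩
        have hst : s ⊆ t := fun u hu =>
          (hcl v hvX u ((hsk u hu).trans (Nat.lt_succ_self k)) ((hadj u (hsk u hu)).2 hu)).resolve_left
            fun h => hvs (hX1 u h ▸ hu)
        have hst' : s = t := Finset.eq_of_subset_of_card_le hst (by rw [hs.card_eq, ht.card_eq])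
        exact ⟨v, hvX, fun u hu => (hadj u (htk' u hu)).2 (hst' ▸ hu)⟩

lemma Is3Tree.exists_apex {G : SimpleGraph V} (h : Is3Tree G) {t : Finset V} {X : Set V}
    (ht : G.IsNClique 3 t) (hX : X.Nonempty) (hXt : ∀ v ∈ X, v ∉ t)
    (hcl : ∀ x ∈ X, ∀ v, G.Adj x v → v ∈ X ∨ v ∈ t) : ∃ x ∈ X, ∀ v ∈ t, G.Adj x v := by
  obtain ⟨n, e, -, hstep⟩ := h
  refine exists_apex_of_rank (f := fun v => (e.symm v : ℕ)) (k := n + 3)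
    (Fin.val_injective.comp e.symm.injective) (fun v hv => ?_) (by omega) t X ht
    (fun v _ => (e.symm v).isLt) hX (fun v _ => (e.symm v).isLt) hXt fun x hx v _ => hcl x hx v
  obtain ⟨s, hs, hlt, hadj⟩ := hstep (e.symm v) hv
  refine ⟨s, hs, fun u hu => ?_, fun u hu => ?_⟩
  · obtain ⟨i, hi, rfl⟩ := hlt u hu
    simpa using hi
  · simpa using hadj (e.symm u) hu

namespace PlaneEmbedding

variable {G : SimpleGraph V} {E : PlaneEmbedding G} {R : Set ℂ} {t : Finset V}

lemma IsTriRegion.exists_apex (h3 : Is3Tree G) (h : E.IsTriRegion R t)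
    (hne : ∃ v, E.vtx v ∈ R) : ∃ x, E.vtx x ∈ R ∧ ∀ v ∈ t, G.Adj x v :=
  h3.exists_apex (X := {v | E.vtx v ∈ R}) h.isNClique hne (fun _ hv => h.notMem hv)
    fun _ hx _ hxv => h.mem_or_mem_of_adj hx hxv

lemma insideCount_eq_zero_iff [Finite V] : E.insideCount R = 0 ↔ ∀ v, E.vtx v ∉ R := by
  rw [insideCount, Set.ncard_eq_zero (Set.toFinite _), Set.eq_empty_iff_forall_notMem]
  rfl

variable (E) in
/-- The facial triangles of `E` bounding a face inside `R`. -/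
def facialIn (R : Set ℂ) : Set (Finset V) :=
  {s | G.IsNClique 3 s ∧ ∃ F, E.IsFace F ∧ F ⊆ R ∧ frontier F = E.triBoundary s}

lemma IsTriRegion.facialIn_subset (h : E.IsTriRegion R t) (hv : ∀ v, E.vtx v ∉ R) :
    E.facialIn R ⊆ {t} := by
  rintro s ⟨hs, F, ⟨z, hz, rfl⟩, hFR, hfr⟩
  have hzR := hFR (mem_connectedComponentIn hz)
  rw [h.isRegion.connectedComponentIn_eq (h.disjoint_drawing hv) triBoundary_subset_drawing hzR,
    h.isRegion.frontier_eq] at hfr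
  exact triBoundary_injOn hs h.isNClique hfr.symm

lemma arc_subset_drawing {u v : V} (h : G.Adj u v) : E.arc u v ⊆ E.drawing := fun _ hz =>
  Or.inr (Set.mem_iUnion.2 ⟨u, Set.mem_iUnion.2 ⟨v, Set.mem_iUnion.2 ⟨h, hz⟩⟩⟩)

variable [DecidableEq V] {p q r x : V} {R₁ R₂ R₃ : Set ℂ}

variable (E) in
/-- The region `R` of the triangle `pqr` is divided by its inner vertex `x`, adjacent to `p`, `q`
and `r`, into the regions `R₁`, `R₂`, `R₃` of the triangles `xpq`, `xqr`, `xrp`. -/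
structure IsSplit (R : Set ℂ) (p q r x : V) (R₁ R₂ R₃ : Set ℂ) : Prop where
  region : E.IsTriRegion R {p, q, r}
  mem : E.vtx x ∈ R
  adj₁ : G.Adj x p
  adj₂ : G.Adj x q
  adj₃ : G.Adj x r
  region₁ : E.IsTriRegion R₁ {x, p, q}
  region₂ : E.IsTriRegion R₂ {x, q, r}
  region₃ : E.IsTriRegion R₃ {x, r, p}
  disjoint₁₂ : Disjoint R₁ R₂
  disjoint₂₃ : Disjoint R₂ R₃
  disjoint₁₃ : Disjoint R₁ R₃
  diff_eq : R \ (E.arc x p ∪ E.arc x q ∪ E.arc x r) = R₁ ∪ R₂ ∪ R₃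

lemma insert_rotate (p q r : V) : ({p, q, r} : Finset V) = {q, r, p} := by
  ext v
  simp only [Finset.mem_insert, Finset.mem_singleton]
  tauto

lemma IsSplit.rotate (h : E.IsSplit R p q r x R₁ R₂ R₃) : E.IsSplit R q r p x R₂ R₃ R₁ where
  region := insert_rotate p q r ▸ h.region
  mem := h.mem
  adj₁ := h.adj₂
  adj₂ := h.adj₃
  adj₃ := h.adj₁
  region₁ := h.region₂
  region₂ := h.region₃
  region₃ := h.region₁
  disjoint₁₂ := h.disjoint₂₃
  disjoint₂₃ := h.disjoint₁₃.symm
  disjoint₁₃ := h.disjoint₁₂.symm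
  diff_eq := by
    rw [show R₂ ∪ R₃ ∪ R₁ = R₁ ∪ R₂ ∪ R₃ by rw [Set.union_assoc R₁, Set.union_comm R₁], ← h.diff_eq]
    congr 1
    rw [Set.union_assoc (E.arc x p), Set.union_comm (E.arc x p)]

lemma IsTriRegion.exists_isSplit (h : E.IsTriRegion R {p, q, r}) (hx : E.vtx x ∈ R)
    (hp : G.Adj x p) (hq : G.Adj x q) (hr : G.Adj x r) :
    ∃ R₁ R₂ R₃, E.IsSplit R p q r x R₁ R₂ R₃ := by
  obtain ⟨R₁, R₂, R₃, h1, h2, h3, h4, h5, h6, h7⟩ := h.exists_split hx hp hq hr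
  exact ⟨R₁, R₂, R₃, h, hx, hp, hq, hr, h1, h2, h3, h4, h5, h6, h7⟩

lemma IsSplit.vtx_mem_iff (h : E.IsSplit R p q r x R₁ R₂ R₃) {v : V} :
    E.vtx v ∈ R ↔ v = x ∨ E.vtx v ∈ R₁ ∨ E.vtx v ∈ R₂ ∨ E.vtx v ∈ R₃ := by
  have hsub : ∀ z ∈ R₁ ∪ R₂ ∪ R₃, z ∈ R := fun z hz => (h.diff_eq.symm ▸ hz :
    z ∈ R \ (E.arc x p ∪ E.arc x q ∪ E.arc x r)).1
  constructor
  · intro hv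
    by_cases hvx : v = x
    · exact Or.inl hvx
    have key : ∀ w ∈ ({p, q, r} : Finset V), G.Adj x w → E.vtx v ∉ E.arc x w := by
      intro w hw hxw hvw
      rcases E.arc_vtx hxw v hvw with h' | h'
      · exact hvx h'
      · exact h.region.notMem hv (h' ▸ hw)
    have : E.vtx v ∈ R₁ ∪ R₂ ∪ R₃ := by
      rw [← h.diff_eq]
      refine ⟨hv, ?_⟩
      rintro ((h' | h') | h')
      exacts [key p (by simp) h.adj₁ h', key q (by simp) h.adj₂ h', key r (by simp) h.adj₃ h']
    rcases this with (h' | h') | h'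
    exacts [Or.inr (Or.inl h'), Or.inr (Or.inr (Or.inl h')), Or.inr (Or.inr (Or.inr h'))]
  · rintro (rfl | h' | h' | h')
    exacts [h.mem, hsub _ (Or.inl (Or.inl h')), hsub _ (Or.inl (Or.inr h')), hsub _ (Or.inr h')]

lemma IsSplit.insideCount_eq [Finite V] (h : E.IsSplit R p q r x R₁ R₂ R₃) :
    E.insideCount R = E.insideCount R₁ + E.insideCount R₂ + E.insideCount R₃ + 1 := by
  have hset : {v | E.vtx v ∈ R} =
      insert x (({v | E.vtx v ∈ R₁} ∪ {v | E.vtx v ∈ R₂}) ∪ {v | E.vtx v ∈ R₃}) := by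
    ext v
    simp only [Set.mem_ofPred_eq, Set.mem_insert_iff, Set.mem_union, h.vtx_mem_iff]
    tauto
  have hdis : ∀ {S T : Set ℂ}, Disjoint S T →
      Disjoint {v | E.vtx v ∈ S} {v | E.vtx v ∈ T} := fun hST =>
    Set.disjoint_left.2 fun v hv hv' => Set.disjoint_left.1 hST hv hv'
  have hx : x ∉ ({v | E.vtx v ∈ R₁} ∪ {v | E.vtx v ∈ R₂}) ∪ {v | E.vtx v ∈ R₃} := by
    rintro ((h' | h') | h')
    exacts [h.region₁.notMem h' (by simp), h.region₂.notMem h' (by simp),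
      h.region₃.notMem h' (by simp)]
  rw [insideCount, hset, Set.ncard_insert_of_notMem hx (Set.toFinite _),
    Set.ncard_union_eq (Set.disjoint_union_left.2 ⟨hdis h.disjoint₁₃, hdis h.disjoint₂₃⟩)
      (Set.toFinite _) (Set.toFinite _),
    Set.ncard_union_eq (hdis h.disjoint₁₂) (Set.toFinite _) (Set.toFinite _)]
  rfl

lemma IsSplit.facialIn_subset (h : E.IsSplit R p q r x R₁ R₂ R₃) :
    E.facialIn R ⊆ E.facialIn R₁ ∪ E.facialIn R₂ ∪ E.facialIn R₃ := by
  rintro s ⟨hs, F, hF, hFR, hfr⟩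
  obtain ⟨z, hz, hFz⟩ := hF
  have hFd : F ⊆ E.drawingᶜ := hFz ▸ connectedComponentIn_subset _ _
  have hFc : IsPreconnected F := hFz ▸ isPreconnected_connectedComponentIn
  have hF3 : F ⊆ R₁ ∪ R₂ ∪ R₃ := by
    rw [← h.diff_eq]
    refine fun w hw => ⟨hFR hw, ?_⟩
    rintro ((h' | h') | h')
    exacts [hFd hw (arc_subset_drawing h.adj₁ h'), hFd hw (arc_subset_drawing h.adj₂ h'),
      hFd hw (arc_subset_drawing h.adj₃ h')]
  have hzF : z ∈ F := hFz ▸ mem_connectedComponentIn hz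
  have hsub : ∀ S : Set ℂ, F ⊆ S → s ∈ E.facialIn S := fun S hS => ⟨hs, F, ⟨z, hz, hFz⟩, hS, hfr⟩
  have key : ∀ {S D : Set ℂ}, IsRegion S D → D ⊆ E.drawing → z ∈ S → s ∈ E.facialIn S := by
    intro S D hS hD hzS
    exact hsub S (hS.subset_of_isPreconnected hFc
      (Set.disjoint_left.2 fun w hw hw' => hFd hw (hD hw')) ⟨z, hzF, hzS⟩)
  rcases hF3 hzF with (h' | h') | h'
  exacts [Or.inl (Or.inl (key h.region₁.isRegion triBoundary_subset_drawing h')),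
    Or.inl (Or.inr (key h.region₂.isRegion triBoundary_subset_drawing h')),
    Or.inr (key h.region₃.isRegion triBoundary_subset_drawing h')]

lemma IsTriRegion.exists_isSplit_of_vtx_mem (h3 : Is3Tree G)
    (h : E.IsTriRegion R {p, q, r}) (hne : ∃ v, E.vtx v ∈ R) :
    ∃ x R₁ R₂ R₃, E.IsSplit R p q r x R₁ R₂ R₃ := by
  obtain ⟨x, hx, hadj⟩ := h.exists_apex h3 hne
  exact ⟨x, h.exists_isSplit hx (hadj p (by simp)) (hadj q (by simp)) (hadj r (by simp))⟩

/-- A triangular region with `m` inner vertices contains at most `2m + 1` faces. -/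
lemma IsTriRegion.ncard_facialIn_le [Finite V] (h3 : Is3Tree G) {m : ℕ} :
    ∀ {R : Set ℂ} {t : Finset V}, E.IsTriRegion R t → E.insideCount R = m →
      (E.facialIn R).ncard ≤ 2 * m + 1 := by
  induction m using Nat.strong_induction_on with
  | _ m ih =>
    intro R t h hm
    by_cases hne : ∃ v, E.vtx v ∈ R
    · obtain ⟨p, q, r, -, -, -, rfl⟩ := is3Clique_iff.1 h.isNClique
      obtain ⟨x, R₁, R₂, R₃, hs⟩ := h.exists_isSplit_of_vtx_mem h3 hne
      have hc := hs.insideCount_eq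
      have h1 := ih _ (by omega) hs.region₁ rfl
      have h2 := ih _ (by omega) hs.region₂ rfl
      have h3 := ih _ (by omega) hs.region₃ rfl
      have hle := Set.ncard_le_ncard hs.facialIn_subset (Set.toFinite _)
      have hu := Set.ncard_union_le (E.facialIn R₁ ∪ E.facialIn R₂) (E.facialIn R₃)
      have hu' := Set.ncard_union_le (E.facialIn R₁) (E.facialIn R₂)
      omega
    · push Not at hne
      have hle := Set.ncard_le_ncard (h.facialIn_subset hne) (Set.toFinite _)
      rw [Set.ncard_singleton] at hle
      omega

end PlaneEmbedding

namespace PlaneEmbedding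

variable {G : SimpleGraph V} {E : PlaneEmbedding G} {R : Set ℂ} {t : Finset V}

variable (E) in
/-- There are `k` pairwise edge-disjoint facial triangles with vertices in `R` or in `t` which use
no edge of `t` other than possibly `da`. -/
def Offers (R : Set ℂ) (t : Finset V) (d a : V) (k : ℕ) : Prop :=
  ∃ P : Finset (Finset V), P.card = k ∧ (∀ s ∈ P, E.IsFacialTriangle s) ∧
    (∀ s ∈ P, ∀ s' ∈ P, s ≠ s' → ∀ u v, u ∈ s → u ∈ s' → v ∈ s → v ∈ s' → u = v) ∧
    (∀ s ∈ P, ∀ v ∈ s, E.vtx v ∈ R ∨ v ∈ t) ∧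
    ∀ s ∈ P, ∀ u ∈ s, ∀ v ∈ s, u ∈ t → v ∈ t → u ≠ v → u = d ∨ u = a

variable {d a : V} {k : ℕ}

lemma Offers.swap (h : E.Offers R t d a k) : E.Offers R t a d k := by
  obtain ⟨P, h1, h2, h3, h4, h5⟩ := h
  exact ⟨P, h1, h2, h3, h4, fun s hs u hu v hv hut hvt huv => (h5 s hs u hu v hv hut hvt huv).symm⟩

lemma Offers.of_self (h : E.Offers R t d d k) : E.Offers R t d a k := by
  obtain ⟨P, h1, h2, h3, h4, h5⟩ := h
  exact ⟨P, h1, h2, h3, h4, fun s hs u hu v hv hut hvt huv =>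
    Or.inl (or_self_iff.1 (h5 s hs u hu v hv hut hvt huv))⟩

lemma Offers.zero : E.Offers R t d a 0 := ⟨∅, by simp⟩

lemma Offers.one {s : Finset V} (hs : E.IsFacialTriangle s) (hR : ∀ v ∈ s, E.vtx v ∈ R ∨ v ∈ t)
    (he : ∀ u ∈ s, ∀ v ∈ s, u ∈ t → v ∈ t → u ≠ v → u = d ∨ u = a) : E.Offers R t d a 1 :=
  ⟨{s}, by simp, by simpa using hs, by simp, by simpa using hR, by simpa using he⟩

lemma Offers.two {s s' : Finset V} (hs : E.IsFacialTriangle s) (hs' : E.IsFacialTriangle s')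
    (hne : s ≠ s') (hd : ∀ u v, u ∈ s → u ∈ s' → v ∈ s → v ∈ s' → u = v)
    (hR : ∀ v ∈ s, E.vtx v ∈ R ∨ v ∈ t) (hR' : ∀ v ∈ s', E.vtx v ∈ R ∨ v ∈ t)
    (he : ∀ u ∈ s, ∀ v ∈ s, u ∈ t → v ∈ t → u ≠ v → u = d ∨ u = a)
    (he' : ∀ u ∈ s', ∀ v ∈ s', u ∈ t → v ∈ t → u ≠ v → u = d ∨ u = a) : E.Offers R t d a 2 := by
  classical
  refine ⟨{s, s'}, Finset.card_pair hne, ?_, ?_, ?_, ?_⟩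
  · simpa using ⟨hs, hs'⟩
  · simp only [Finset.mem_insert, Finset.mem_singleton]
    rintro _ (rfl | rfl) _ (rfl | rfl) hne u v h1 h2 h3 h4
    exacts [(hne rfl).elim, hd u v h1 h2 h3 h4, hd u v h2 h1 h4 h3, (hne rfl).elim]
  · simpa using ⟨hR, hR'⟩
  · simpa using ⟨he, he'⟩

/-- A set of triangles pairwise sharing at most one vertex is a packing. -/
lemma isTrianglePacking_of_eq {P : Finset (Finset V)} (hP : ∀ s ∈ P, G.IsNClique 3 s)
    (h : ∀ s ∈ P, ∀ s' ∈ P, s ≠ s' → ∀ u v, u ∈ s → u ∈ s' → v ∈ s → v ∈ s' → u = v) :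
    IsTrianglePacking G P := by
  refine ⟨hP, fun s hs s' hs' hne e => ?_⟩
  induction e using Sym2.ind with
  | _ u v =>
    rintro huv ⟨h1, h2⟩
    exact (G.mem_edgeSet.1 huv).ne (h s hs s' hs' hne u v (h1 u (by simp)) (h2 u (by simp))
      (h1 v (by simp)) (h2 v (by simp)))

lemma ne_of_eq_of_isNClique {s s' : Finset V} (hs : G.IsNClique 3 s)
    (h : ∀ u v, u ∈ s → u ∈ s' → v ∈ s → v ∈ s' → u = v) : s ≠ s' := by
  rintro rfl
  have h1 : s.card ≤ 1 := Finset.card_le_one.2 fun u hu v hv => h u v hu hu hv hv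
  rw [hs.card_eq] at h1
  omega

variable [DecidableEq V] {p q r x y : V} {R₁ R₂ R₃ S₁ S₂ S₃ : Set ℂ}

lemma IsSplit.ne (h : E.IsSplit R p q r x R₁ R₂ R₃) : p ≠ q ∧ p ≠ r ∧ q ≠ r := by
  obtain ⟨hpq, hpr, hqr⟩ := is3Clique_triple_iff.1 h.region.isNClique
  exact ⟨hpq.ne, hpr.ne, hqr.ne⟩

lemma IsSplit.offers_one (h : E.IsSplit R p q r x R₁ R₂ R₃) (h3 : ∀ v, E.vtx v ∉ R₃) :
    E.Offers R {p, q, r} r p 1 := by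
  have hx := h.mem
  have hxt := h.region.notMem h.mem
  refine Offers.one (h.region₃.isFacialTriangle h3) ?_ ?_
  · grind
  · grind

lemma IsTriRegion.exists_isSplit_of_insideCount_eq_one [Finite V] (h3 : Is3Tree G)
    (h : E.IsTriRegion R {p, q, r}) (hc : E.insideCount R = 1) :
    ∃ x R₁ R₂ R₃, E.IsSplit R p q r x R₁ R₂ R₃ ∧ (∀ v, E.vtx v ∉ R₁) ∧ (∀ v, E.vtx v ∉ R₂) ∧
      ∀ v, E.vtx v ∉ R₃ := by
  obtain ⟨x, R₁, R₂, R₃, hs⟩ := h.exists_isSplit_of_vtx_mem h3 (by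
    by_contra! hn
    rw [insideCount_eq_zero_iff.2 hn] at hc
    exact zero_ne_one hc)
  have := hs.insideCount_eq
  exact ⟨x, R₁, R₂, R₃, hs, insideCount_eq_zero_iff.1 (by omega),
    insideCount_eq_zero_iff.1 (by omega), insideCount_eq_zero_iff.1 (by omega)⟩

lemma IsTriRegion.offers_one [Finite V] (h3 : Is3Tree G) (h : E.IsTriRegion R {p, q, r})
    (hc : E.insideCount R = 1) : E.Offers R {p, q, r} p q 1 ∧ E.Offers R {p, q, r} p r 1 := by
  obtain ⟨x, R₁, R₂, R₃, hs, h1, h2, h3⟩ := h.exists_isSplit_of_insideCount_eq_one h3 hc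
  refine ⟨?_, (hs.offers_one h3).swap⟩
  have := (hs.rotate.offers_one h1)
  rwa [← insert_rotate] at this

lemma IsSplit.offers_of_isSplit (h : E.IsSplit R p q r x R₁ R₂ R₃)
    (hs : E.IsSplit R₁ x p q y S₁ S₂ S₃) (h2 : ∀ v, E.vtx v ∉ R₂) (h3 : ∀ v, E.vtx v ∉ R₃)
    (h1 : ∀ v, E.vtx v ∉ S₁) (h3' : ∀ v, E.vtx v ∉ S₃) :
    E.Offers R {p, q, r} r p 2 ∧ E.Offers R {p, q, r} r q 2 ∧
      ∀ z, E.Offers R {p, q, r} z z 1 := by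
  have hx := h.mem
  have hy : E.vtx y ∈ R := h.vtx_mem_iff.2 (Or.inr (Or.inl hs.mem))
  have hxt := h.region.notMem hx
  have hyt := h.region.notMem hy
  have hyt' := h.region₁.notMem hs.mem
  obtain ⟨hpq, hpr, hqr⟩ := h.ne
  simp only [Finset.mem_insert, Finset.mem_singleton, not_or] at hxt hyt hyt'
  refine ⟨?_, ?_, fun z => ?_⟩
  · refine Offers.two (h.region₃.isFacialTriangle h3) (hs.region₃.isFacialTriangle h3') ?_ ?_ ?_ ?_
      ?_ ?_
    · intro he
      have : y ∈ ({x, r, p} : Finset V) := he ▸ by simp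
      grind
    all_goals grind
  · refine Offers.two (h.region₂.isFacialTriangle h2) (hs.region₁.isFacialTriangle h1) ?_ ?_ ?_ ?_
      ?_ ?_
    · intro he
      have : y ∈ ({x, q, r} : Finset V) := he ▸ by simp
      grind
    all_goals grind
  · refine Offers.one (hs.region₁.isFacialTriangle h1) ?_ ?_
    all_goals grind

/-- A triangular region with two inner vertices offers two triangles for two of the three sides of
its boundary. -/
lemma IsSplit.exists_offers_two [Finite V] (h3 : Is3Tree G)
    (h : E.IsSplit R p q r x R₁ R₂ R₃) (h1 : E.insideCount R₁ = 1) (hc : E.insideCount R = 2) :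
    E.Offers R {p, q, r} r p 2 ∧ E.Offers R {p, q, r} r q 2 ∧
      ∀ z, E.Offers R {p, q, r} z z 1 := by
  have := h.insideCount_eq
  obtain ⟨y, S₁, S₂, S₃, hs, h1, -, h3⟩ := h.region₁.exists_isSplit_of_insideCount_eq_one h3 h1
  exact h.offers_of_isSplit hs (insideCount_eq_zero_iff.1 (by omega))
    (insideCount_eq_zero_iff.1 (by omega)) h1 h3

lemma IsTriRegion.offers_two [Finite V] (h3 : Is3Tree G) (h : E.IsTriRegion R {p, q, r})
    (hc : E.insideCount R = 2) : (E.Offers R {p, q, r} p q 2 ∨ E.Offers R {p, q, r} p r 2) ∧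
      ∀ z, E.Offers R {p, q, r} z z 1 := by
  obtain ⟨x, R₁, R₂, R₃, hs⟩ := h.exists_isSplit_of_vtx_mem h3 (by
    by_contra! hn
    rw [insideCount_eq_zero_iff.2 hn] at hc
    exact two_ne_zero hc.symm)
  have hsum := hs.insideCount_eq
  obtain h1 | h2 | h3' : E.insideCount R₁ = 1 ∨ E.insideCount R₂ = 1 ∨ E.insideCount R₃ = 1 := by
    omega
  · obtain ⟨k1, -, k3⟩ := hs.exists_offers_two h3 h1 hc
    exact ⟨Or.inr k1.swap, k3⟩
  · have := hs.rotate.exists_offers_two h3 h2 hc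
    rw [← insert_rotate] at this
    exact ⟨Or.inl this.1, this.2.2⟩
  · have := hs.rotate.rotate.exists_offers_two h3 h3' hc
    rw [insert_rotate] at this
    exact ⟨Or.inl this.2.1.swap, this.2.2⟩

lemma IsSplit.subset₁ (h : E.IsSplit R p q r x R₁ R₂ R₃) : R₁ ⊆ R := fun z hz =>
  (h.diff_eq.symm ▸ Or.inl (Or.inl hz) : z ∈ R \ (E.arc x p ∪ E.arc x q ∪ E.arc x r)).1

/-- Vertices in or on the boundary of two different parts of a split are common boundary
vertices. -/
lemma IsSplit.mem_of_mem_of_mem (h : E.IsSplit R p q r x R₁ R₂ R₃) {v : V}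
    (h1 : E.vtx v ∈ R₁ ∨ v ∈ ({x, p, q} : Finset V))
    (h2 : E.vtx v ∈ R₂ ∨ v ∈ ({x, q, r} : Finset V)) :
    v ∈ ({x, p, q} : Finset V) ∧ v ∈ ({x, q, r} : Finset V) := by
  have hn1 : E.vtx v ∈ R₁ → v ∉ ({x, q, r} : Finset V) := fun hv hv' => by
    have := h.region₁.notMem hv
    have := h.region.notMem (h.subset₁ hv)
    grind
  have hn2 : E.vtx v ∈ R₂ → v ∉ ({x, p, q} : Finset V) := fun hv hv' => by
    have := h.region₂.notMem hv
    have := h.region.notMem (h.rotate.subset₁ hv)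
    grind
  have : E.vtx v ∈ R₁ → E.vtx v ∉ R₂ := fun hv hv' => Set.disjoint_left.1 h.disjoint₁₂ hv hv'
  tauto

lemma pairwise_union {P Q : Finset (Finset V)} (hP : ∀ s ∈ P, G.IsNClique 3 s)
    (h : ∀ s ∈ P, ∀ s' ∈ P, s ≠ s' → ∀ u v, u ∈ s → u ∈ s' → v ∈ s → v ∈ s' → u = v)
    (h' : ∀ s ∈ Q, ∀ s' ∈ Q, s ≠ s' → ∀ u v, u ∈ s → u ∈ s' → v ∈ s → v ∈ s' → u = v)
    (hPQ : ∀ s ∈ P, ∀ s' ∈ Q, ∀ u v, u ∈ s → u ∈ s' → v ∈ s → v ∈ s' → u = v) :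
    (P ∪ Q).card = P.card + Q.card ∧
      ∀ s ∈ P ∪ Q, ∀ s' ∈ P ∪ Q, s ≠ s' → ∀ u v, u ∈ s → u ∈ s' → v ∈ s → v ∈ s' → u = v := by
  refine ⟨Finset.card_union_of_disjoint (Finset.disjoint_left.2 fun s hs hs' =>
    ne_of_eq_of_isNClique (hP s hs) (hPQ s hs s hs') rfl),
    fun s hs s' hs' hne u v k1 k2 k3 k4 => ?_⟩
  rcases Finset.mem_union.1 hs with hs | hs <;> rcases Finset.mem_union.1 hs' with hs' | hs'
  exacts [h s hs s' hs' hne u v k1 k2 k3 k4, hPQ s hs s' hs' u v k1 k2 k3 k4,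
    hPQ s' hs' s hs u v k2 k1 k4 k3, h' s hs s' hs' hne u v k1 k2 k3 k4]

/-- Triangles offered by two different parts of a split are edge-disjoint. -/
lemma IsSplit.eq_of_offers (h : E.IsSplit R p q r x R₁ R₂ R₃) {a₁ a₂ : V} (ha : a₁ ≠ a₂)
    {s₁ s₂ : Finset V}
    (h1 : ∀ v ∈ s₁, E.vtx v ∈ R₁ ∨ v ∈ ({x, p, q} : Finset V))
    (h2 : ∀ v ∈ s₂, E.vtx v ∈ R₂ ∨ v ∈ ({x, q, r} : Finset V))
    (e1 : ∀ u ∈ s₁, ∀ v ∈ s₁, u ∈ ({x, p, q} : Finset V) → v ∈ ({x, p, q} : Finset V) → u ≠ v →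
      u = x ∨ u = a₁)
    (e2 : ∀ u ∈ s₂, ∀ v ∈ s₂, u ∈ ({x, q, r} : Finset V) → v ∈ ({x, q, r} : Finset V) → u ≠ v →
      u = x ∨ u = a₂) :
    ∀ u v, u ∈ s₁ → u ∈ s₂ → v ∈ s₁ → v ∈ s₂ → u = v := by
  intro u v hu hu' hv hv'
  by_contra hne
  obtain ⟨k1, k2⟩ := h.mem_of_mem_of_mem (h1 u hu) (h2 u hu')
  obtain ⟨k3, k4⟩ := h.mem_of_mem_of_mem (h1 v hv) (h2 v hv')
  have := e1 u hu v hv k1 k3 hne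
  have := e1 v hv u hu k3 k1 (Ne.symm hne)
  have := e2 u hu' v hv' k2 k4 hne
  have := e2 v hv' u hu' k4 k2 (Ne.symm hne)
  grind

/-- Triangles offered by a part of a split are edge-disjoint from the outer triangle. -/
lemma IsSplit.eq_of_offers_outer (h : E.IsSplit R p q r x R₁ R₂ R₃) {a₁ : V} {s₁ : Finset V}
    (h1 : ∀ v ∈ s₁, E.vtx v ∈ R₁ ∨ v ∈ ({x, p, q} : Finset V))
    (e1 : ∀ u ∈ s₁, ∀ v ∈ s₁, u ∈ ({x, p, q} : Finset V) → v ∈ ({x, p, q} : Finset V) → u ≠ v →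
      u = x ∨ u = a₁) :
    ∀ u v, u ∈ s₁ → u ∈ ({p, q, r} : Finset V) → v ∈ s₁ → v ∈ ({p, q, r} : Finset V) → u = v := by
  intro u v hu hu' hv hv'
  by_contra hne
  have hx := h.region.notMem h.mem
  have key : ∀ w ∈ s₁, w ∈ ({p, q, r} : Finset V) → w ∈ ({x, p, q} : Finset V) := fun w hw hw' =>
    (h1 w hw).resolve_left fun hw1 => h.region.notMem (h.subset₁ hw1) hw'
  have := e1 u hu v hv (key u hu hu') (key v hv hv') hne
  have := e1 v hv u hu (key v hv hv') (key u hu hu') (Ne.symm hne)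
  grind

variable (E) in
/-- There are `n` pairwise edge-disjoint facial triangles, one of which is `t`. -/
def HasPacking (t : Finset V) (n : ℕ) : Prop :=
  ∃ P : Finset (Finset V), t ∈ P ∧ (∀ s ∈ P, E.IsFacialTriangle s) ∧ IsTrianglePacking G P ∧
    P.card = n

lemma IsSplit.hasPacking (h : E.IsSplit R p q r x R₁ R₂ R₃) (ht : E.IsFacialTriangle {p, q, r})
    {a₁ a₂ a₃ : V} {k₁ k₂ k₃ : ℕ} (o₁ : E.Offers R₁ {x, p, q} x a₁ k₁)
    (o₂ : E.Offers R₂ {x, q, r} x a₂ k₂) (o₃ : E.Offers R₃ {x, r, p} x a₃ k₃)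
    (h12 : a₁ ≠ a₂) (h23 : a₂ ≠ a₃) (h31 : a₃ ≠ a₁) :
    E.HasPacking {p, q, r} (k₁ + k₂ + k₃ + 1) := by
  obtain ⟨P₁, rfl, f₁, d₁, m₁, e₁⟩ := o₁
  obtain ⟨P₂, rfl, f₂, d₂, m₂, e₂⟩ := o₂
  obtain ⟨P₃, rfl, f₃, d₃, m₃, e₃⟩ := o₃
  have f12 : ∀ s ∈ P₁ ∪ P₂, E.IsFacialTriangle s := fun s hs =>
    (Finset.mem_union.1 hs).elim (f₁ s) (f₂ s)
  have f123 : ∀ s ∈ P₁ ∪ P₂ ∪ P₃, E.IsFacialTriangle s := fun s hs =>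
    (Finset.mem_union.1 hs).elim (f12 s) (f₃ s)
  have u12 := pairwise_union (fun s hs => (f₁ s hs).1) d₁ d₂ fun s hs s' hs' =>
    h.eq_of_offers h12 (m₁ s hs) (m₂ s' hs') (e₁ s hs) (e₂ s' hs')
  have u123 := pairwise_union (fun s hs => (f12 s hs).1) u12.2 d₃ fun s hs s' hs' => by
    rcases Finset.mem_union.1 hs with hs | hs
    · intro u v k1 k2 k3 k4
      exact h.rotate.rotate.eq_of_offers h31 (m₃ s' hs') (m₁ s hs) (e₃ s' hs') (e₁ s hs) u v
        k2 k1 k4 k3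
    · exact h.rotate.eq_of_offers h23 (m₂ s hs) (m₃ s' hs') (e₂ s hs) (e₃ s' hs')
  have u := pairwise_union (Q := {{p, q, r}}) (fun s hs => (f123 s hs).1) u123.2 (by simp)
    fun s hs s' hs' => by
      rw [Finset.mem_singleton.1 hs']
      rcases Finset.mem_union.1 hs with hs | hs
      · rcases Finset.mem_union.1 hs with hs | hs
        · exact h.eq_of_offers_outer (m₁ s hs) (e₁ s hs)
        · rw [insert_rotate]
          exact h.rotate.eq_of_offers_outer (m₂ s hs) (e₂ s hs)
      · rw [← insert_rotate]
        exact h.rotate.rotate.eq_of_offers_outer (m₃ s hs) (e₃ s hs)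
  have f : ∀ s ∈ P₁ ∪ P₂ ∪ P₃ ∪ {{p, q, r}}, E.IsFacialTriangle s := fun s hs =>
    (Finset.mem_union.1 hs).elim (f123 s) fun hs => Finset.mem_singleton.1 hs ▸ ht
  exact ⟨_, by simp, f, isTrianglePacking_of_eq (fun s hs => (f s hs).1) u.2, by
    rw [u.1, u123.1, u12.1, Finset.card_singleton]⟩

lemma IsTriRegion.offers_min [Finite V] (h3 : Is3Tree G) (h : E.IsTriRegion R {p, q, r})
    (hc : E.insideCount R ≤ 2) : E.Offers R {p, q, r} p q (min 1 (E.insideCount R)) ∧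
      E.Offers R {p, q, r} p r (min 1 (E.insideCount R)) := by
  obtain h0 | h1 | h2 : E.insideCount R = 0 ∨ E.insideCount R = 1 ∨ E.insideCount R = 2 := by omega
  · rw [h0]
    exact ⟨Offers.zero, Offers.zero⟩
  · rw [h1]
    exact h.offers_one h3 h1
  · rw [h2]
    have := (h.offers_two h3 h2).2 p
    exact ⟨this.of_self, this.of_self⟩

lemma IsSplit.hasPacking_of_insideCount_eq_two [Finite V] (h3 : Is3Tree G)
    (h : E.IsSplit R p q r x R₁ R₂ R₃) (ht : E.IsFacialTriangle {p, q, r})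
    (h1 : E.insideCount R₁ = 2) (h2 : E.insideCount R₂ ≤ 2) (h3' : E.insideCount R₃ ≤ 2) :
    E.HasPacking {p, q, r}
      (2 + min 1 (E.insideCount R₂) + min 1 (E.insideCount R₃) + 1) := by
  obtain ⟨hpq, hpr, hqr⟩ := h.ne
  have o2 := h.region₂.offers_min h3 h2
  have o3 := h.region₃.offers_min h3 h3'
  rcases (h.region₁.offers_two h3 h1).1 with o1 | o1
  · exact h.hasPacking ht o1 o2.1 o3.1 hpq hqr hpr.symm
  · exact h.hasPacking ht o1 o2.2 o3.2 hqr hpr.symm hpq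

lemma IsSplit.hasPacking_six [Finite V] (h3 : Is3Tree G)
    (h : E.IsSplit R p q r x R₁ R₂ R₃) (ht : E.IsFacialTriangle {p, q, r})
    (h1 : E.insideCount R₁ = 2) (h2 : E.insideCount R₂ = 2) (h3' : E.insideCount R₃ = 2) :
    E.HasPacking {p, q, r} 6 := by
  obtain ⟨hpq, hpr, hqr⟩ := h.ne
  have hp := h.adj₁.ne
  have hq := h.adj₂.ne
  have hr := h.adj₃.ne
  obtain ⟨o1, -⟩ := h.region₁.offers_two h3 h1
  obtain ⟨o2, o2'⟩ := h.region₂.offers_two h3 h2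
  obtain ⟨o3, o3'⟩ := h.region₃.offers_two h3 h3'
  rcases o1 with o1 | o1
  · rcases o2 with o2 | o2
    · exact h.hasPacking ht o1 o2 (o3' x) hpq hq.symm hp
    · exact h.hasPacking ht o1 o2 (o3' x) hpr hr.symm hp
  · rcases o3 with o3 | o3
    · exact h.hasPacking ht o1 (o2' x) o3 hq.symm hr hqr.symm
    · exact h.hasPacking ht o1 (o2' x) o3 hq.symm hp hpq

lemma IsSplit.exists_hasPacking_of_insideCount_eq_two [Finite V] (h3 : Is3Tree G)
    (h : E.IsSplit R p q r x R₁ R₂ R₃) (ht : E.IsFacialTriangle {p, q, r})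
    (h1 : E.insideCount R₁ = 2) (h2 : E.insideCount R₂ ≤ 2) (h3' : E.insideCount R₃ ≤ 2) :
    ∃ n, E.HasPacking {p, q, r} n ∧
      (2 * (E.insideCount R₁ + E.insideCount R₂ + E.insideCount R₃) + 6) / 3 ≤ n := by
  by_cases h6 : E.insideCount R₂ = 2 ∧ E.insideCount R₃ = 2
  · exact ⟨6, h.hasPacking_six h3 ht h1 h6.1 h6.2, by omega⟩
  · exact ⟨_, h.hasPacking_of_insideCount_eq_two h3 ht h1 h2 h3', by omega⟩

lemma IsSplit.exists_hasPacking [Finite V] (h3 : Is3Tree G)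
    (h : E.IsSplit R p q r x R₁ R₂ R₃) (ht : E.IsFacialTriangle {p, q, r})
    (h1 : E.insideCount R₁ ≤ 2) (h2 : E.insideCount R₂ ≤ 2) (h3' : E.insideCount R₃ ≤ 2)
    (hex : E.insideCount R₁ = 2 ∨ E.insideCount R₂ = 2 ∨ E.insideCount R₃ = 2) :
    ∃ n, E.HasPacking {p, q, r} n ∧
      (2 * (E.insideCount R₁ + E.insideCount R₂ + E.insideCount R₃) + 6) / 3 ≤ n := by
  rcases hex with h' | h' | h'
  · exact h.exists_hasPacking_of_insideCount_eq_two h3 ht h' h2 h3'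
  · rw [insert_rotate] at ht ⊢
    obtain ⟨n, hn, hle⟩ := h.rotate.exists_hasPacking_of_insideCount_eq_two h3 ht h' h3' h1
    exact ⟨n, hn, by omega⟩
  · rw [← insert_rotate] at ht ⊢
    obtain ⟨n, hn, hle⟩ := h.rotate.rotate.exists_hasPacking_of_insideCount_eq_two h3 ht h' h1 h2
    exact ⟨n, hn, by omega⟩

lemma IsSplit.hasPacking_five [Finite V] (h3 : Is3Tree G)
    (h : E.IsSplit R p q r x R₁ R₂ R₃) (ht : E.IsFacialTriangle {p, q, r})
    (hc : E.insideCount R₁ = 2 ∧ E.insideCount R₂ = 1 ∧ E.insideCount R₃ = 1 ∨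
      E.insideCount R₂ = 2 ∧ E.insideCount R₃ = 1 ∧ E.insideCount R₁ = 1 ∨
      E.insideCount R₃ = 2 ∧ E.insideCount R₁ = 1 ∧ E.insideCount R₂ = 1) :
    E.HasPacking {p, q, r} 5 := by
  rcases hc with ⟨k1, k2, k3⟩ | ⟨k1, k2, k3⟩ | ⟨k1, k2, k3⟩
  · have := h.hasPacking_of_insideCount_eq_two h3 ht k1 (by omega) (by omega)
    rwa [k2, k3] at this
  · rw [insert_rotate] at ht ⊢
    have := h.rotate.hasPacking_of_insideCount_eq_two h3 ht k1 (by omega) (by omega)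
    rwa [k2, k3] at this
  · rw [← insert_rotate] at ht ⊢
    have := h.rotate.rotate.hasPacking_of_insideCount_eq_two h3 ht k1 (by omega) (by omega)
    rwa [k2, k3] at this

end PlaneEmbedding

namespace PlaneEmbedding

variable {G : SimpleGraph V} {E : PlaneEmbedding G} {F R : Set ℂ} {t : Finset V}

lemma isClosed_drawing [Finite V] : IsClosed E.drawing := by
  refine (Set.finite_range _).isClosed.union (isClosed_iUnion_of_finite fun u =>
    isClosed_iUnion_of_finite fun v => isClosed_iUnion_of_finite fun h => ?_)
  exact (E.isArc h).isCompact.isClosed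

lemma IsFace.subset (h : E.IsFace F) : F ⊆ E.drawingᶜ := by
  obtain ⟨z, -, rfl⟩ := h
  exact connectedComponentIn_subset _ _

lemma IsFace.isConnected (h : E.IsFace F) : IsConnected F := by
  obtain ⟨z, hz, rfl⟩ := h
  exact isConnected_connectedComponentIn_iff.2 hz

lemma IsFace.vtx_notMem (h : E.IsFace F) (v : V) : E.vtx v ∉ F := fun hv =>
  h.subset hv (Or.inl ⟨v, rfl⟩)

lemma IsFace.isTriRegion [Finite V] (h : E.IsFace F) (ht : G.IsNClique 3 t)
    (hf : frontier F = E.triBoundary t) : E.IsTriRegion F t := by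
  refine ⟨ht, ?_, h.isConnected, hf⟩
  obtain ⟨z, -, rfl⟩ := h
  exact isClosed_drawing.isOpen_compl.connectedComponentIn

lemma triBoundary_subset_subDrawing {K : Finset V} (h : t ⊆ K) :
    E.triBoundary t ⊆ E.subDrawing K := by
  intro z hz
  obtain ⟨u, hu, v, hv, huv, hz⟩ := E.mem_triBoundary.1 hz
  refine Or.inr ?_
  simp only [Set.mem_iUnion]
  exact ⟨u, h hu, v, h hv, huv, hz⟩

variable [DecidableEq V] {p q r x : V} {R₁ R₂ R₃ : Set ℂ}

lemma IsTriRegion.exists_compl (h : E.IsTriRegion F {p, q, r}) :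
    ∃ R, E.IsTriRegion R {p, q, r} ∧ Disjoint F R ∧ F ∪ R = (E.triBoundary {p, q, r})ᶜ := by
  obtain ⟨hpq, hpr, hqr⟩ := is3Clique_triple_iff.1 h.isNClique
  obtain ⟨hB, hAB, hb⟩ := isArc_two_sides (E := E) hpq hpr hqr
  obtain ⟨R, hR, hd, hu⟩ := IsRegion.exists_compl (E.isArc hpq) hB hAB (hb ▸ h.isRegion)
  rw [← hb] at hR hu
  exact ⟨R, ⟨h.isNClique, hR⟩, hd, hu⟩

lemma IsSplit.subDrawing_eq (h : E.IsSplit R p q r x R₁ R₂ R₃) :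
    E.subDrawing (insert x {p, q, r}) =
      E.triBoundary {p, q, r} ∪ (E.arc x p ∪ E.arc x q ∪ E.arc x r) := by
  ext z
  constructor
  · rintro (⟨v, hv, rfl⟩ | hz)
    · rcases Finset.mem_insert.1 hv with rfl | hv
      · exact Or.inr (Or.inl (Or.inl (E.isArc h.adj₁).left_mem))
      · exact Or.inl ((E.vtx_mem_triBoundary h.region.isNClique).2 hv)
    · simp only [Set.mem_iUnion] at hz
      obtain ⟨u, hu, v, hv, huv, hz⟩ := hz
      have key : ∀ w ∈ ({p, q, r} : Finset V), z ∈ E.arc x w →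
          z ∈ E.arc x p ∪ E.arc x q ∪ E.arc x r := by
        intro w hw hz
        simp only [Finset.mem_insert, Finset.mem_singleton] at hw
        rcases hw with rfl | rfl | rfl
        exacts [Or.inl (Or.inl hz), Or.inl (Or.inr hz), Or.inr hz]
      rcases Finset.mem_insert.1 hu with rfl | hu
      · exact Or.inr (key v (Finset.mem_of_mem_insert_of_ne hv huv.ne') hz)
      · rcases Finset.mem_insert.1 hv with rfl | hv
        · exact Or.inr (key u (Finset.mem_of_mem_insert_of_ne hu huv.ne) (E.arc_symm _ _ ▸ hz))
        · exact Or.inl (E.arc_subset_triBoundary hu hv huv hz)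
  · have key : ∀ u ∈ insert x ({p, q, r} : Finset V), ∀ v ∈ insert x ({p, q, r} : Finset V),
        G.Adj u v → z ∈ E.arc u v → z ∈ E.subDrawing (insert x {p, q, r}) := by
      intro u hu v hv huv hz
      refine Or.inr ?_
      simp only [Set.mem_iUnion]
      exact ⟨u, hu, v, hv, huv, hz⟩
    rintro (hz | (hz | hz) | hz)
    · obtain ⟨u, hu, v, hv, huv, hz⟩ := E.mem_triBoundary.1 hz
      exact key u (Finset.mem_insert_of_mem hu) v (Finset.mem_insert_of_mem hv) huv hz
    exacts [key x (by simp) p (by simp) h.adj₁ hz, key x (by simp) q (by simp) h.adj₂ hz,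
      key x (by simp) r (by simp) h.adj₃ hz]

/-- The faces of the drawing of a `K₄` are the outer face and the three parts of the split of the
inner region. -/
lemma IsSplit.isFaceOf_iff (h : E.IsSplit R p q r x R₁ R₂ R₃) (hF : E.IsTriRegion F {p, q, r})
    (hd : Disjoint F R) (hu : F ∪ R = (E.triBoundary {p, q, r})ᶜ) {S : Set ℂ} :
    IsFaceOf (E.subDrawing (insert x {p, q, r})) S ↔ S = F ∨ S = R₁ ∨ S = R₂ ∨ S = R₃ := by
  have harc : ∀ v ∈ ({p, q, r} : Finset V), G.Adj x v → Disjoint F (E.arc x v) := by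
    intro v hv hxv
    refine Set.disjoint_left.2 fun z hz hz' => ?_
    by_cases hzv : z = E.vtx v
    · subst hzv
      exact hF.notMem hz hv
    · exact Set.disjoint_left.1 hd hz (h.region.arc_diff_subset h.mem hxv ⟨hz', hzv⟩)
  have hcompl : (E.subDrawing (insert x {p, q, r}))ᶜ = F ∪ (R₁ ∪ R₂ ∪ R₃) := by
    rw [h.subDrawing_eq, Set.compl_union, ← hu, ← h.diff_eq, ← Set.sdiff_eq,
      Set.union_sdiff_distrib]
    congr 1
    refine Disjoint.sdiff_eq_left ?_
    rw [Set.disjoint_union_right, Set.disjoint_union_right]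
    exact ⟨⟨harc p (by simp) h.adj₁, harc q (by simp) h.adj₂⟩, harc r (by simp) h.adj₃⟩
  have hcomp : ∀ {S : Set ℂ} {s : Finset V}, E.IsTriRegion S s → s ⊆ insert x {p, q, r} →
      S ⊆ F ∪ (R₁ ∪ R₂ ∪ R₃) → ∀ z ∈ S,
      connectedComponentIn (E.subDrawing (insert x {p, q, r}))ᶜ z = S := by
    intro S s hS hs hsub z hz
    refine hS.isRegion.connectedComponentIn_eq ?_ (triBoundary_subset_subDrawing hs) hz
    rw [← hcompl] at hsub
    exact Set.subset_compl_iff_disjoint_right.1 hsub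
  have c0 := hcomp hF (Finset.subset_insert _ _) fun z hz => Or.inl hz
  have c1 := hcomp h.region₁ (by grind) fun z hz => Or.inr (Or.inl (Or.inl hz))
  have c2 := hcomp h.region₂ (by grind) fun z hz => Or.inr (Or.inl (Or.inr hz))
  have c3 := hcomp h.region₃ (by grind) fun z hz => Or.inr (Or.inr hz)
  constructor
  · rintro ⟨z, hz, rfl⟩
    rw [hcompl] at hz
    rcases hz with hz | (hz | hz) | hz
    exacts [Or.inl (c0 z hz), Or.inr (Or.inl (c1 z hz)), Or.inr (Or.inr (Or.inl (c2 z hz))),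
      Or.inr (Or.inr (Or.inr (c3 z hz)))]
  · rintro (rfl | rfl | rfl | rfl)
    · obtain ⟨z, hz⟩ := hF.isRegion.isConnected.nonempty
      exact ⟨z, hcompl ▸ Or.inl hz, (c0 z hz).symm⟩
    · obtain ⟨z, hz⟩ := h.region₁.isRegion.isConnected.nonempty
      exact ⟨z, hcompl ▸ Or.inr (Or.inl (Or.inl hz)), (c1 z hz).symm⟩
    · obtain ⟨z, hz⟩ := h.region₂.isRegion.isConnected.nonempty
      exact ⟨z, hcompl ▸ Or.inr (Or.inl (Or.inr hz)), (c2 z hz).symm⟩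
    · obtain ⟨z, hz⟩ := h.region₃.isRegion.isConnected.nonempty
      exact ⟨z, hcompl ▸ Or.inr (Or.inr hz), (c3 z hz).symm⟩

lemma IsFace.ncard_isFacialTriangle_le [Finite V] (h3 : Is3Tree G) (hF : E.IsFace F)
    (hF' : E.IsTriRegion F t) (hR : E.IsTriRegion R t) (hu : F ∪ R = (E.triBoundary t)ᶜ) :
    {s : Finset V | E.IsFacialTriangle s}.ncard ≤ 2 * E.insideCount R + 2 := by
  have hsub : {s : Finset V | E.IsFacialTriangle s} ⊆ {t} ∪ E.facialIn R := by
    rintro s ⟨hs, S, hS, hfr⟩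
    have hST : S ⊆ (E.triBoundary t)ᶜ :=
      hS.subset.trans (Set.compl_subset_compl.2 triBoundary_subset_drawing)
    have hdis : Disjoint S (E.triBoundary t) := Set.subset_compl_iff_disjoint_right.1 hST
    obtain ⟨z, hz⟩ := hS.isConnected.nonempty
    have hzu := hST hz
    rw [← hu] at hzu
    rcases hzu with hz' | hz'
    · exact Or.inl (hF'.facialIn_subset hF.vtx_notMem ⟨hs, S, hS,
        hF'.isRegion.subset_of_isPreconnected hS.isConnected.isPreconnected hdis ⟨z, hz, hz'⟩, hfr⟩)
    · exact Or.inr ⟨hs, S, hS,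
        hR.isRegion.subset_of_isPreconnected hS.isConnected.isPreconnected hdis ⟨z, hz, hz'⟩, hfr⟩
  have h1 := Set.ncard_le_ncard hsub (Set.toFinite _)
  have h2 := Set.ncard_union_le {t} (E.facialIn R)
  have h4 := hR.ncard_facialIn_le h3 rfl
  rw [Set.ncard_singleton] at h2
  omega

end PlaneEmbedding

/-- For an arbitrary plane embedding of a restricted planar 3-tree `G` (a planar 3-tree
different from `K₃` whose root clique `K` — the `K₄` containing the external facial
triangle — has at most two vertices of `G` inside each of its faces, and exactly two
inside some face), with `f` facial triangles, there is a packing of pairwise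
edge-disjoint facial triangles containing the external facial triangle of size at least
`⌈f/3⌉`; moreover if `G` is super restricted (exactly two faces of the root clique
contain precisely one vertex inside), there is such a packing of size exactly `5`. -/
theorem restricted_planar_three_tree_packing (V : Type) [Fintype V]
    (G : SimpleGraph V) (h3 : Is3Tree G)
    (hK3 : ¬ Nonempty (G ≃g (⊤ : SimpleGraph (Fin 3))))
    (E : PlaneEmbedding G) (K : Finset V) (hK : G.IsNClique 4 K)
    (hroot : ∃ t : Finset V, E.IsExternalFacialTriangle t ∧ t ⊆ K)
    (hr_le : ∀ F : Set ℂ, IsFaceOf (E.subDrawing K) F → E.insideCount F ≤ 2)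
    (hr_eq : ∃ F : Set ℂ, IsFaceOf (E.subDrawing K) F ∧ E.insideCount F = 2) :
    (∃ P : Finset (Finset V),
      (∀ t ∈ P, E.IsFacialTriangle t) ∧ IsTrianglePacking G P ∧
      (∃ t ∈ P, E.IsExternalFacialTriangle t) ∧
      ({t : Finset V | E.IsFacialTriangle t}.ncard + 2) / 3 ≤ P.card) ∧
    ((∃ F₁ F₂ : Set ℂ, F₁ ≠ F₂ ∧
        IsFaceOf (E.subDrawing K) F₁ ∧ IsFaceOf (E.subDrawing K) F₂ ∧
        E.insideCount F₁ = 1 ∧ E.insideCount F₂ = 1 ∧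
        ∀ F : Set ℂ, IsFaceOf (E.subDrawing K) F → E.insideCount F = 1 →
          F = F₁ ∨ F = F₂) →
      ∃ P : Finset (Finset V),
        (∀ t ∈ P, E.IsFacialTriangle t) ∧ IsTrianglePacking G P ∧
        (∃ t ∈ P, E.IsExternalFacialTriangle t) ∧ P.card = 5) := by
  classical
  obtain ⟨t, ht, htK⟩ := hroot
  obtain ⟨htc, F, hF, -, hfr⟩ := id ht
  obtain ⟨p, q, r, hpq, hpr, hqr, rfl⟩ := is3Clique_iff.1 htc
  obtain ⟨d, hd⟩ : ∃ d, K \ {p, q, r} = {d} := Finset.card_eq_one.1 (by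
    rw [Finset.card_sdiff_of_subset htK, hK.card_eq, htc.card_eq])
  have hdK : d ∈ K ∧ d ∉ ({p, q, r} : Finset V) :=
    Finset.mem_sdiff.1 (hd ▸ Finset.mem_singleton_self d)
  obtain rfl : K = insert d {p, q, r} := by
    rw [← Finset.sdiff_union_of_subset htK, hd, Finset.insert_eq d]
  have hadj : ∀ v ∈ ({p, q, r} : Finset V), G.Adj d v := fun v hv =>
    hK.isClique hdK.1 (htK hv) fun h => hdK.2 (h ▸ hv)
  have hF' := hF.isTriRegion htc hfr
  obtain ⟨R, hR, hFR, hu⟩ := hF'.exists_compl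
  have hdR : E.vtx d ∈ R := by
    have : E.vtx d ∈ F ∪ R := by
      rw [hu, Set.mem_compl_iff, E.vtx_mem_triBoundary htc]
      exact hdK.2
    exact this.resolve_left (hF.vtx_notMem d)
  obtain ⟨R₁, R₂, R₃, hs⟩ := hR.exists_isSplit hdR (hadj p (by simp)) (hadj q (by simp))
    (hadj r (by simp))
  have hface := fun S => hs.isFaceOf_iff hF' hFR hu (S := S)
  simp only [hface] at hr_le hr_eq ⊢
  have hF0 : E.insideCount F = 0 := PlaneEmbedding.insideCount_eq_zero_iff.2 hF.vtx_notMem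
  have htf : E.IsFacialTriangle {p, q, r} := ⟨htc, F, hF, hfr⟩
  have hex : E.insideCount R₁ = 2 ∨ E.insideCount R₂ = 2 ∨ E.insideCount R₃ = 2 := by
    obtain ⟨S, rfl | rfl | rfl | rfl, hS⟩ := hr_eq
    exacts [by omega, Or.inl hS, Or.inr (Or.inl hS), Or.inr (Or.inr hS)]
  constructor
  · obtain ⟨n, ⟨P, htP, hP, hpack, rfl⟩, hn⟩ := hs.exists_hasPacking h3 htf
      (hr_le R₁ (by simp)) (hr_le R₂ (by simp)) (hr_le R₃ (by simp)) hex
    refine ⟨P, hP, hpack, ⟨_, htP, ht⟩, ?_⟩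
    have h1 := hF.ncard_isFacialTriangle_le h3 hF' hR hu
    have h2 := hs.insideCount_eq
    omega
  · rintro ⟨F₁, F₂, hne, hF₁, hF₂, h1, h2, -⟩
    obtain ⟨P, htP, hP, hpack, hcard⟩ := hs.hasPacking_five h3 htf (by
      rcases hF₁ with rfl | rfl | rfl | rfl <;> rcases hF₂ with rfl | rfl | rfl | rfl <;>
        first | exact (hne rfl).elim | omega)
    exact ⟨P, hP, hpack, ⟨_, htP, ht⟩, hcard⟩
end

section
/- In any planar embedding of a planar 3-tree G on n ≥ 4 vertices, every facial triangle of G is contained in a subgraph of G isomorphic to K4. -/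
open SimpleGraph

variable {V : Type*}

/-- Every triangle of a 3-tree on at least four vertices is contained in a copy of `K₄`:
if its last vertex in the construction ordering is not one of the first three, it extends by
the triangle this vertex was attached to; otherwise it is the initial triangle, to which the
fourth vertex was attached. -/
theorem Is3Tree.exists_isNClique_four {V : Type*} [Fintype V] {G : SimpleGraph V}
    (h3 : Is3Tree G) (hn : 4 ≤ Fintype.card V) {t : Finset V} (ht : G.IsNClique 3 t) :
    ∃ s : Finset V, t ⊆ s ∧ G.IsNClique 4 s := by
  classical
  obtain ⟨n, e, -, hstep⟩ := h3
  have hcard : Fintype.card V = n + 3 := by simpa using (Fintype.card_congr e).symm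
  have extend : ∀ j : Fin (n + 3), ∀ s : Finset V, G.IsNClique 3 s →
      (∀ v ∈ s, ∃ i : Fin (n + 3), (i : ℕ) < (j : ℕ) ∧ e i = v) →
      (∀ i : Fin (n + 3), (i : ℕ) < (j : ℕ) → (G.Adj (e j) (e i) ↔ e i ∈ s)) →
      G.IsNClique 4 (insert (e j) s) := by
    intro j s hs hlt hadj
    refine hs.insert fun v hv => ?_
    obtain ⟨i, hi, rfl⟩ := hlt v hv
    exact (hadj i hi).2 hv
  have hne : t.Nonempty := Finset.card_pos.1 (by rw [ht.card_eq]; norm_num)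
  obtain ⟨v, hv, hmax⟩ := t.exists_max_image e.symm hne
  by_cases hj : 3 ≤ (e.symm v : ℕ)
  · obtain ⟨s, hs, hlt, hadj⟩ := hstep (e.symm v) hj
    refine ⟨_, fun w hw => ?_, extend _ s hs hlt hadj⟩
    rw [e.apply_symm_apply, Finset.mem_insert]
    by_cases hwv : w = v
    · exact Or.inl hwv
    · have hlt' : e.symm w < e.symm v :=
        lt_of_le_of_ne (hmax w hw) fun h => hwv (e.symm.injective h)
      have := hadj (e.symm w) hlt'
      simp only [e.apply_symm_apply] at this
      exact Or.inr (this.1 (ht.isClique hv hw (Ne.symm hwv)))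
  · let three : Fin (n + 3) := ⟨3, by omega⟩
    obtain ⟨s, hs, hlt, hadj⟩ := hstep three le_rfl
    refine ⟨_, ?_, extend _ s hs hlt hadj⟩
    let base : Finset V := (Finset.Iio three).map e.toEmbedding
    have hbase : base.card = 3 := by simp [base, three]
    have mem_base : ∀ w, e.symm w < three → w ∈ base := fun w hw =>
      Finset.mem_map.2 ⟨e.symm w, Finset.mem_Iio.2 hw, e.apply_symm_apply w⟩
    have hsb : s = base := by
      refine Finset.eq_of_subset_of_card_le (fun w hw => ?_) (by rw [hbase, hs.card_eq])
      obtain ⟨i, hi, rfl⟩ := hlt w hw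
      exact mem_base _ (by simpa using hi)
    intro w hw
    rw [Finset.mem_insert, hsb]
    exact Or.inr (mem_base w (lt_of_le_of_lt (hmax w hw) (not_le.1 hj)))

/-- In any plane embedding of a planar 3-tree on at least four vertices, every facial
triangle is contained in a copy of `K₄`. -/
theorem facial_triangle_in_K4 (V : Type) [Fintype V] (G : SimpleGraph V)
    (h3 : Is3Tree G) (hn : 4 ≤ Fintype.card V) (E : PlaneEmbedding G)
    (t : Finset V) (ht : E.IsFacialTriangle t) :
    ∃ s : Finset V, t ⊆ s ∧ G.IsNClique 4 s :=
  h3.exists_isNClique_four hn ht.1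
end
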